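/- Let m ∈ ℝ and let N ∈ ℕ with N ≥ m. Then there exist C > 0 and N' ∈ ℕ such that for every δ > 0, every ℏ ∈ (0,1], every amplitude a ∈ S^m_1(ℝ^{3n}), every u ∈ C_c^∞(ℝⁿ), and all χ₁, χ₂ ∈ C^∞(ℝⁿ) having all derivatives bounded and satisfying dist(supp χ₁, supp χ₂) ≥ δ, one has ‖χ₁ · Op_ℏ(a)(χ₂ u)‖_{L²(ℝⁿ)} ≤ C ℏ^N δ^{-N} |χ₁|_{N'} |χ₂|_{N'} |a|_{S^m_1, N + N'} ‖u‖_{L²(ℝⁿ)}, where |χ|_{N'} := Σ_{|α| ≤ N'} sup_{ℝⁿ} |∂_q^α χ|. -/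

import Mathlib

open MeasureTheory Finset

noncomputable section

/-- Points of `ℝⁿ`. -/
abbrev X (n : ℕ) : Type := Fin n → ℝ

/-- Directional derivative of a complex-valued function. -/
def dirD {E : Type*} [NormedAddCommGroup E] [NormedSpace ℝ E]
    (v : E) (g : E → ℂ) : E → ℂ :=
  fun x => fderiv ℝ g x v

/-- `∂_q^α` on functions on `ℝⁿ`. -/
def mderiv1X {n : ℕ} (α : Fin n → ℕ) (g : X n → ℂ) : X n → ℂ :=
  (List.finRange n).foldr (fun i h => (dirD (Pi.single i (1 : ℝ)))^[α i] h) g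

/-- `∂_q^α ∂_p^β ∂_{q'}^γ` on amplitudes `a(q, p, q')`. -/
def mderiv3X {n : ℕ} (α β γ : Fin n → ℕ) (g : X n × X n × X n → ℂ) :
    X n × X n × X n → ℂ :=
  (List.finRange n).foldr
    (fun i h => (dirD ((Pi.single i (1 : ℝ), 0, 0) : X n × X n × X n))^[α i] h) <|
  (List.finRange n).foldr
    (fun i h => (dirD (((0 : X n), Pi.single i (1 : ℝ), 0) : X n × X n × X n))^[β i] h) <|
  (List.finRange n).foldr
    (fun i h => (dirD (((0 : X n), (0 : X n), Pi.single i (1 : ℝ)) : X n × X n × X n))^[γ i] h) g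

/-- `⟨p⟩ = (1 + |p|²)^{1/2}`. -/
def brX {n : ℕ} (p : X n) : ℝ := Real.sqrt (1 + ∑ i, p i ^ 2)

/-- `|α| = Σ α i`. -/
def degX {n : ℕ} (α : Fin n → ℕ) : ℕ := ∑ i, α i

/-- The finite set of multiindices of length `≤ N`. -/
def idxX (n N : ℕ) : Finset (Fin n → ℕ) :=
  (Fintype.piFinset fun _ : Fin n => Finset.range (N + 1)).filter fun α => degX α ≤ N

/-- Membership in the amplitude class `S^m_1(ℝ^{3n})`. -/
def IsAmp1 {n : ℕ} (m : ℝ) (a : X n × X n × X n → ℂ) : Prop :=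
  ContDiff ℝ (⊤ : ℕ∞) a ∧ ∀ α β γ : Fin n → ℕ, ∃ C : ℝ, ∀ x : X n × X n × X n,
    ‖mderiv3X α β γ a x‖ ≤ C * brX x.2.1 ^ (m - (degX β : ℝ))

/-- The seminorm `|a|_{S^m_1, N}`. -/
def amp1Norm {n : ℕ} (m : ℝ) (N : ℕ) (a : X n × X n × X n → ℂ) : ℝ :=
  ∑ α ∈ idxX n N, ∑ β ∈ idxX n N, ∑ γ ∈ idxX n N,
    if degX α + degX β + degX γ ≤ N then
      ⨆ x : X n × X n × X n, brX x.2.1 ^ (-m + (degX β : ℝ)) * ‖mderiv3X α β γ a x‖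
    else 0

/-- `|χ|_N = Σ_{|α| ≤ N} sup |∂^α χ|`. -/
def ckNormX {n : ℕ} (N : ℕ) (χ : X n → ℂ) : ℝ :=
  ∑ α ∈ idxX n N, ⨆ q : X n, ‖mderiv1X α χ q‖

/-- The quantization of an amplitude. -/
def OpAmpX {n : ℕ} (ℏ : ℝ) (a : X n × X n × X n → ℂ) (u : X n → ℂ) : X n → ℂ :=
  fun q => ((2 * Real.pi * ℏ) ^ n : ℝ)⁻¹ •
    ∫ p : X n, ∫ q' : X n,
      a (q, p, q') *
        Complex.exp (Complex.I * Complex.ofReal (∑ i, p i * (q i - q' i)) / Complex.ofReal ℏ) *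
        u q'

/-- The `L²` norm. -/
def l2normX {n : ℕ} (u : X n → ℂ) : ℝ := (∫ q : X n, ‖u q‖ ^ 2) ^ (1 / 2 : ℝ)

/-- Membership in `C_c^∞(ℝⁿ)`. -/
def IsCcX {n : ℕ} (u : X n → ℂ) : Prop := ContDiff ℝ (⊤ : ℕ∞) u ∧ HasCompactSupport u

section
open MeasureTheory Finset
open scoped FourierTransform SchwartzMap ENNReal

noncomputable section

lemma planchE {V : Type*} [NormedAddCommGroup V] [InnerProductSpace ℝ V] [FiniteDimensional ℝ V]
    [MeasurableSpace V] [BorelSpace V] (f : V → ℂ) (hf : Integrable f) (hf2 : MemLp f 2) :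
    ∫⁻ w, ‖𝓕 f w‖ₑ ^ 2 = ∫⁻ v, ‖f v‖ₑ ^ 2 := by
  set F : Lp ℂ 2 (volume : Measure V) := hf2.toLp f with hF
  have hcont : Continuous (𝓕 f) :=
    VectorFourier.fourierIntegral_continuous Real.continuous_fourierChar
      (by exact continuous_inner) hf
  have hae : ∀ᵐ x, (𝓕 F : Lp ℂ 2 (volume : Measure V)) x = 𝓕 f x := by
    apply ae_eq_of_integral_contDiff_smul_eq
    · exact ((Lp.memLp _).locallyIntegrable (by norm_num))
    · exact hcont.locallyIntegrable
    · intro g hg hgc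
      have hg' : ContDiff ℝ (⊤ : ℕ∞) (Complex.ofReal ∘ g) :=
        (Complex.ofRealCLM.contDiff (n := ((⊤ : ℕ∞) : WithTop ℕ∞))).comp hg
      have hgc' : HasCompactSupport (Complex.ofReal ∘ g) := hgc.comp_left Complex.ofReal_zero
      set φ := hgc'.toSchwartzMap hg' with hφ
      have h1 : ∀ x, φ x = (g x : ℂ) := fun x => rfl
      have h2 := congrArg (fun T : 𝓢'(V, ℂ) => T φ) (Lp.fourier_toTemperedDistribution_eq F)
      simp only [TemperedDistribution.fourier_apply, Lp.toTemperedDistribution_apply] at h2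
      have h3 : ∫ x, g x • (𝓕 F : Lp ℂ 2 (volume : Measure V)) x = ∫ x, φ x • (𝓕 F : Lp ℂ 2 (volume : Measure V)) x := by
        simp [h1]
      rw [h3, ← h2]
      have h4 : ∫ x, (𝓕 φ) x • F x = ∫ x, (𝓕 φ) x • f x := by
        apply integral_congr_ae
        filter_upwards [hf2.coeFn_toLp] with x hx
        rw [hF, hx]
      rw [h4]
      have h5 := VectorFourier.integral_fourierIntegral_smul_eq_flip (L := innerₗ V) (μ := volume)
        (ν := volume) Real.continuous_fourierChar continuous_inner φ.integrable hf
      rw [flip_innerₗ] at h5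
      exact h5
  have h6 : ∀ g : Lp ℂ 2 (volume : Measure V), ∫⁻ w, ‖g w‖ₑ ^ 2 = ‖g‖ₑ ^ 2 := by
    intro g
    rw [Lp.enorm_def, eLpNorm_eq_lintegral_rpow_enorm_toReal (by norm_num) (by norm_num)]
    simp only [ENNReal.toReal_ofNat, ENNReal.rpow_ofNat]
    rw [← ENNReal.rpow_natCast, ← ENNReal.rpow_mul]; norm_num
  calc _ = ∫⁻ w, ‖(𝓕 F : Lp ℂ 2 (volume : Measure V)) w‖ₑ ^ 2 := by
        apply lintegral_congr_ae
        filter_upwards [hae] with x hx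
        rw [hx]
    _ = ‖F‖ₑ ^ 2 := by
        rw [h6]; congr 1
        rw [← ofReal_norm, ← ofReal_norm, Lp.norm_fourier_eq]
    _ = _ := by
        rw [← h6]
        apply lintegral_congr_ae
        filter_upwards [hf2.coeFn_toLp] with x hx
        rw [hF, hx]

lemma planch1 {n : ℕ} (c : ℝ) (hc : c ≠ 0) (f : X n → ℂ) (hf : Integrable f) :
    ∫⁻ p : X n, ‖∫ y : X n, Complex.exp (Complex.I * (c * ∑ i, p i * y i : ℝ)) * f y‖ₑ ^ 2
      ≤ ENNReal.ofReal ((2 * Real.pi / |c|) ^ n) * ∫⁻ y, ‖f y‖ₑ ^ 2 := by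
  by_cases hfin : ∫⁻ y, ‖f y‖ₑ ^ 2 = ∞
  · rw [hfin, ENNReal.mul_top]
    · exact le_top
    · have := Real.pi_pos
      have : 0 < |c| := abs_pos.2 hc
      simp only [ne_eq, ENNReal.ofReal_eq_zero, not_le]; positivity
  have hm := EuclideanSpace.volume_preserving_symm_measurableEquiv_toLp (Fin n)
  set g : EuclideanSpace ℝ (Fin n) → ℂ := fun v => f ((MeasurableEquiv.toLp 2 (Fin n → ℝ)).symm v) with hg
  have hgi : Integrable g := (hm.integrable_comp_emb (MeasurableEquiv.measurableEmbedding _)).2 hf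
  have hl : ∫⁻ v, ‖g v‖ₑ ^ 2 = ∫⁻ y, ‖f y‖ₑ ^ 2 :=
    hm.lintegral_comp_emb (MeasurableEquiv.measurableEmbedding _) (fun y => ‖f y‖ₑ ^ 2)
  have hg2 : MemLp g 2 := by
    refine ⟨hgi.1, ?_⟩
    rw [eLpNorm_lt_top_iff_lintegral_rpow_enorm_lt_top (by norm_num) (by norm_num)]
    simp only [ENNReal.toReal_ofNat, ENNReal.rpow_ofNat]
    rw [hl]; exact lt_top_iff_ne_top.2 hfin
  have hP := planchE g hgi hg2
  have key : ∀ w : EuclideanSpace ℝ (Fin n), 𝓕 g w = ∫ y : X n,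
      Complex.exp (((-2 * Real.pi * ∑ i, y i * w i : ℝ) : ℂ) * Complex.I) * f y := by
    intro w
    rw [Real.fourier_eq', ← hm.integral_comp' ]
    apply integral_congr_ae
    filter_upwards with v
    simp only [smul_eq_mul]
    congr 5
    simp [PiLp.inner_apply, mul_comm]
  set r : ℝ := - c / (2 * Real.pi) with hr
  have hr0 : r ≠ 0 := by
    rw [hr]; have := Real.pi_pos.ne'; simp [hc]
  set H : X n → ℂ := fun w => ∫ y : X n,
      Complex.exp (((-2 * Real.pi * ∑ i, y i * w i : ℝ) : ℂ) * Complex.I) * f y with hH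
  have e1 : ∀ p : X n, ∫ y : X n, Complex.exp (Complex.I * (c * ∑ i, p i * y i : ℝ)) * f y
      = H (r • p) := by
    intro p
    simp only [hH]
    congr 1; ext y; congr 2
    rw [mul_comm]; congr 2
    simp only [Pi.smul_apply, smul_eq_mul]
    rw [Finset.mul_sum, Finset.mul_sum]
    apply Finset.sum_congr rfl
    intro i _
    rw [hr]; have := Real.pi_pos.ne'; field_simp
  simp_rw [e1]
  have hms := Measure.map_addHaar_smul (volume : Measure (X n)) hr0
  have e2 : ∫⁻ p : X n, ‖H (r • p)‖ₑ ^ 2 = ENNReal.ofReal |(r ^ n)⁻¹| * ∫⁻ w, ‖H w‖ₑ ^ 2 := by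
    have := (measurableEmbedding_const_smul₀ hr0 : MeasurableEmbedding (fun x : X n => r • x)).lintegral_map
      (μ := volume) (fun w => ‖H w‖ₑ ^ 2)
    rw [← this, hms, lintegral_smul_measure]
    simp
  rw [e2]
  have e3 : ∫⁻ w, ‖H w‖ₑ ^ 2 = ∫⁻ w, ‖𝓕 g w‖ₑ ^ 2 := by
    simp_rw [key]
    exact (hm.lintegral_comp_emb (MeasurableEquiv.measurableEmbedding _) (fun y => ‖H y‖ₑ ^ 2)).symm
  rw [e3, hP, hl]
  apply le_of_eq
  congr 2
  rw [hr, abs_inv, abs_pow, abs_div, abs_neg, abs_of_pos (by positivity : 0 < 2 * Real.pi), ← inv_pow,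
    inv_div]

end

end

section
open MeasureTheory Finset
open scoped ENNReal

noncomputable section

/-- one-sided exponential kernel -/
def eK (lam : ℝ) (r : ℝ) : ℝ := (Set.Ioi (0:ℝ)).indicator (fun r => lam⁻¹ * Real.exp (-(r / lam))) r

lemma eK_nonneg {lam : ℝ} (hl : 0 < lam) (r : ℝ) : 0 ≤ eK lam r := by
  unfold eK; apply Set.indicator_nonneg; intro r _; positivity

lemma eK_le {lam : ℝ} (hl : 0 < lam) (r : ℝ) : eK lam r ≤ lam⁻¹ := by
  unfold eK; apply Set.indicator_le' (f := fun r => lam⁻¹ * Real.exp (-(r / lam))) (g := fun _ => lam⁻¹)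
  · intro r hr
    have hr : 0 < r := hr
    have : Real.exp (-(r / lam)) ≤ 1 := Real.exp_le_one_iff.2 (by have : 0 < r / lam := by positivity
                                                                  linarith)
    have h2 : 0 < lam⁻¹ := by positivity
    nlinarith
  · intro r _; positivity

lemma eK_meas (lam : ℝ) : Measurable (eK lam) := by
  unfold eK; exact Measurable.indicator (by fun_prop) measurableSet_Ioi

lemma eK_expder {lam : ℝ} (hl : 0 < lam) (r : ℝ) :
    HasDerivAt (fun r => -Real.exp (-(r / lam))) (lam⁻¹ * Real.exp (-(r / lam))) r := by
  have := ((((hasDerivAt_id r).div_const lam).neg).exp).neg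
  refine HasDerivAt.congr_deriv (f := fun r => -Real.exp (-(r / lam))) this ?_
  simp only [Pi.neg_apply, id]
  ring

lemma exp_tendsto {lam : ℝ} (hl : 0 < lam) :
    Filter.Tendsto (fun r => Real.exp (-(r / lam))) Filter.atTop (nhds 0) := by
  apply Real.tendsto_exp_atBot.comp
  apply Filter.tendsto_neg_atTop_atBot.comp
  exact Filter.tendsto_id.atTop_div_const hl

lemma eK_intOn {lam : ℝ} (hl : 0 < lam) :
    IntegrableOn (fun r => lam⁻¹ * Real.exp (-(r / lam))) (Set.Ioi 0) := by
  apply integrableOn_Ioi_deriv_of_nonneg' (l := 0) (g := fun r => -Real.exp (-(r / lam)))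
  · intro x _; exact eK_expder hl x
  · intro x _; positivity
  · simpa using (exp_tendsto hl).neg

lemma eK_int {lam : ℝ} (hl : 0 < lam) : Integrable (eK lam) :=
  (integrable_indicator_iff measurableSet_Ioi).2 (eK_intOn hl)

lemma eK_integral {lam : ℝ} (hl : 0 < lam) : ∫ r, eK lam r = 1 := by
  unfold eK
  rw [integral_indicator measurableSet_Ioi]
  rw [integral_Ioi_of_hasDerivAt_of_tendsto' (m := 0) (f := fun r => -Real.exp (-(r / lam)))]
  · simp
  · intro x _; exact eK_expder hl x
  · exact eK_intOn hl
  · simpa using (exp_tendsto hl).neg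

/-- multi-dimensional kernel -/
def EK {n : ℕ} (lam : ℝ) (r : X n) : ℝ := ∏ i, eK lam (r i)

lemma EK_nonneg {n : ℕ} {lam : ℝ} (hl : 0 < lam) (r : X n) : 0 ≤ EK lam r :=
  Finset.prod_nonneg fun i _ => eK_nonneg hl _

lemma EK_le {n : ℕ} {lam : ℝ} (hl : 0 < lam) (r : X n) : EK lam r ≤ (lam⁻¹) ^ n := by
  unfold EK
  refine (Finset.prod_le_prod (fun i _ => eK_nonneg hl _) (fun i _ => eK_le hl _)).trans ?_
  simp

lemma EK_meas {n : ℕ} (lam : ℝ) : Measurable (EK (n := n) lam) := by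
  unfold EK
  exact Finset.measurable_prod _ fun i _ => (eK_meas lam).comp (measurable_pi_apply i)

lemma EK_int {n : ℕ} {lam : ℝ} (hl : 0 < lam) : Integrable (EK (n := n) lam) :=
  Integrable.fintype_prod (f := fun _ => eK lam) (fun _ => eK_int hl)

lemma EK_integral {n : ℕ} {lam : ℝ} (hl : 0 < lam) : ∫ r : X n, EK lam r = 1 := by
  unfold EK
  rw [integral_fintype_prod_volume_eq_prod (f := fun _ => eK lam)]
  simp [eK_integral hl]

lemma EK_lintegral {n : ℕ} {lam : ℝ} (hl : 0 < lam) : ∫⁻ r : X n, ENNReal.ofReal (EK lam r) = 1 := by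
  rw [← ofReal_integral_eq_lintegral_ofReal (EK_int hl) (Filter.Eventually.of_forall (EK_nonneg hl)),
    EK_integral hl, ENNReal.ofReal_one]

/-- the exponential probability measure -/
def nuK (lam : ℝ) : Measure ℝ := volume.withDensity (fun r => ENNReal.ofReal (eK lam r))

lemma nuK_prob {lam : ℝ} (hl : 0 < lam) : IsProbabilityMeasure (nuK lam) := by
  constructor
  unfold nuK
  rw [withDensity_apply _ MeasurableSet.univ, Measure.restrict_univ,
    ← ofReal_integral_eq_lintegral_ofReal (eK_int hl) (Filter.Eventually.of_forall (eK_nonneg hl)),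
    eK_integral hl, ENNReal.ofReal_one]

lemma nuK_integral {lam : ℝ} (hl : 0 < lam) (g : ℝ → ℂ) :
    ∫ r, g r ∂(nuK lam) = ∫ r, eK lam r • g r := by
  unfold nuK
  rw [integral_withDensity_eq_integral_toReal_smul (by have := eK_meas lam; fun_prop) (by simp)]
  simp [ENNReal.toReal_ofReal (eK_nonneg hl _)]

lemma pi_nuK {n : ℕ} {lam : ℝ} (hl : 0 < lam) :
    Measure.pi (fun _ : Fin n => nuK lam) =
      (volume : Measure (X n)).withDensity (fun r => ENNReal.ofReal (EK lam r)) := by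
  have := nuK_prob hl
  apply Measure.pi_eq
  intro s hs
  have hsm : MeasurableSet (Set.univ.pi s) := MeasurableSet.univ_pi hs
  rw [withDensity_apply _ hsm,
    ← ofReal_integral_eq_lintegral_ofReal (EK_int hl).integrableOn
      (Filter.Eventually.of_forall (EK_nonneg hl)), ← integral_indicator hsm]
  have h1 : (Set.univ.pi s).indicator (EK lam) = fun r : X n => ∏ i, (s i).indicator (eK lam) (r i) := by
    ext r
    by_cases hr : r ∈ Set.univ.pi s
    · rw [Set.indicator_of_mem hr]
      unfold EK
      apply Finset.prod_congr rfl
      intro i _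
      rw [Set.indicator_of_mem (hr i (Set.mem_univ i))]
    · rw [Set.indicator_of_notMem hr]
      simp only [Set.mem_pi, Set.mem_univ, true_implies, not_forall] at hr
      obtain ⟨i, hi⟩ := hr
      exact (Finset.prod_eq_zero (Finset.mem_univ i) (Set.indicator_of_notMem hi _)).symm
  rw [h1, integral_fintype_prod_volume_eq_prod (f := fun i => (s i).indicator (eK lam)),
    ENNReal.ofReal_prod_of_nonneg]
  · apply Finset.prod_congr rfl
    intro i _
    unfold nuK
    rw [withDensity_apply _ (hs i), integral_indicator (hs i),
      ← ofReal_integral_eq_lintegral_ofReal (eK_int hl).integrableOn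
      (Filter.Eventually.of_forall (eK_nonneg hl))]
  · intro i _
    exact integral_nonneg fun r => Set.indicator_nonneg (fun r _ => eK_nonneg hl r) r

lemma pi_nuK_integral {n : ℕ} {lam : ℝ} (hl : 0 < lam) (g : X n → ℂ) :
    ∫ r, g r ∂(Measure.pi (fun _ : Fin n => nuK lam)) = ∫ r, EK lam r • g r := by
  rw [pi_nuK hl, integral_withDensity_eq_integral_toReal_smul
    (by have := EK_meas (n := n) lam; fun_prop) (by simp)]
  simp [ENNReal.toReal_ofReal (EK_nonneg hl _)]

lemma update_mp {n : ℕ} {lam : ℝ} (hl : 0 < lam) (i : Fin n) :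
    MeasurePreserving (fun q : X n × ℝ => Function.update q.1 i q.2)
      ((Measure.pi (fun _ : Fin n => nuK lam)).prod (nuK lam))
      (Measure.pi (fun _ : Fin n => nuK lam)) := by
  have := nuK_prob hl
  have hmeas : Measurable (fun q : X n × ℝ => Function.update q.1 i q.2) := by
    rw [measurable_pi_iff]
    intro j
    by_cases hj : j = i
    · subst hj; simp; fun_prop
    · simp [Function.update_of_ne hj]; fun_prop
  refine ⟨hmeas, ?_⟩
  symm
  apply Measure.pi_eq
  intro s hs
  rw [Measure.map_apply hmeas (MeasurableSet.univ_pi hs)]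
  have : (fun q : X n × ℝ => Function.update q.1 i q.2) ⁻¹' (Set.univ.pi s) =
      (Set.univ.pi (Function.update s i Set.univ)) ×ˢ (s i) := by
    ext ⟨r, ρ⟩
    simp only [Set.mem_preimage, Set.mem_pi, Set.mem_univ, true_implies, Set.mem_prod]
    constructor
    · intro h
      refine ⟨fun j => ?_, by simpa using h i⟩
      by_cases hj : j = i
      · subst hj; simp
      · simpa [Function.update_of_ne hj] using h j
    · rintro ⟨h1, h2⟩ j
      by_cases hj : j = i
      · subst hj; simpa using h2
      · simpa [Function.update_of_ne hj] using h1 j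
  rw [this, Measure.prod_prod, Measure.pi_pi, ← Finset.mul_prod_erase _ _ (Finset.mem_univ i),
    ← Finset.mul_prod_erase (univ) (fun i => nuK lam (s i)) (Finset.mem_univ i)]
  simp only [Function.update_self, measure_univ, one_mul]
  rw [mul_comm]
  congr 1
  apply Finset.prod_congr rfl
  intro j hj
  rw [Function.update_of_ne (Finset.ne_of_mem_erase hj)]

/-- `1 + lam ∂_v` -/
def sm {E : Type*} [NormedAddCommGroup E] [NormedSpace ℝ E] (lam : ℝ) (v : E) (f : E → ℂ) : E → ℂ :=
  fun x => f x + (lam : ℂ) * dirD v f x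

lemma dirD_smooth {E : Type*} [NormedAddCommGroup E] [NormedSpace ℝ E] (v : E) {f : E → ℂ}
    (hf : ContDiff ℝ (⊤ : ℕ∞) f) : ContDiff ℝ (⊤ : ℕ∞) (dirD v f) := by
  unfold dirD
  exact (hf.fderiv_right (m := ((⊤ : ℕ∞) : WithTop ℕ∞)) (by simp)).clm_apply contDiff_const

lemma sm_smooth {E : Type*} [NormedAddCommGroup E] [NormedSpace ℝ E] (lam : ℝ) (v : E) {f : E → ℂ}
    (hf : ContDiff ℝ (⊤ : ℕ∞) f) : ContDiff ℝ (⊤ : ℕ∞) (sm lam v f) :=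
  hf.add (contDiff_const.mul (dirD_smooth v hf))

lemma smear1 {E : Type*} [NormedAddCommGroup E] [NormedSpace ℝ E] {lam : ℝ} (hl : 0 < lam) (v : E)
    {f : E → ℂ} (hf : ContDiff ℝ (⊤ : ℕ∞) f) {M : ℝ} (h0 : ∀ x, ‖f x‖ ≤ M)
    (h1 : ∀ x, ‖sm lam v f x‖ ≤ M) (y : E) :
    f y = ∫ r, sm lam v f (y - r • v) ∂(nuK lam) := by
  rw [nuK_integral hl]
  have e : ∀ r, eK lam r • sm lam v f (y - r • v) = (Set.Ioi (0:ℝ)).indicator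
      (fun r => (lam⁻¹ * Real.exp (-(r / lam))) • sm lam v f (y - r • v)) r := by
    intro r
    unfold eK
    by_cases hr : r ∈ Set.Ioi (0:ℝ)
    · simp only [Set.indicator_of_mem hr]
    · simp only [Set.indicator_of_notMem hr, zero_smul]
  simp_rw [e]
  rw [integral_indicator measurableSet_Ioi]
  have hc : Continuous (sm lam v f) := (sm_smooth lam v hf).continuous
  rw [integral_Ioi_of_hasDerivAt_of_tendsto' (m := 0)
    (f := fun r => (-Real.exp (-(r / lam))) • f (y - r • v))]
  · simp
  · intro r _
    have hd : HasDerivAt (fun r : ℝ => f (y - r • v)) (-(dirD v f (y - r • v))) r := by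
      have h2 : HasDerivAt (fun r : ℝ => y - r • v) (-v) r := by
        simpa using ((hasDerivAt_id r).smul_const v).const_sub y
      have h3 := (hf.differentiable (by simp) (y - r • v)).hasFDerivAt.comp_hasDerivAt r h2
      exact HasDerivAt.congr_deriv (f := fun r : ℝ => f (y - r • v)) h3 (by simp [dirD])
    have := (eK_expder hl r).smul hd
    refine HasDerivAt.congr_deriv (f := fun r => (-Real.exp (-(r / lam))) • f (y - r • v)) this ?_
    simp only [sm, Complex.real_smul, smul_eq_mul]
    have hl' : (lam : ℂ) ≠ 0 := by exact_mod_cast hl.ne'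
    push_cast
    field_simp
    ring
  · refine Integrable.mono' (g := fun r => (lam⁻¹ * Real.exp (-(r / lam))) * M) ((eK_intOn hl).mul_const M) ?_ ?_
    · apply Continuous.aestronglyMeasurable
      fun_prop
    · filter_upwards with r
      rw [norm_smul, Real.norm_of_nonneg (by positivity)]
      gcongr
      exact h1 _
  · have h5 : Filter.Tendsto (fun r => Real.exp (-(r / lam)) * M) Filter.atTop (nhds 0) := by
      simpa using (exp_tendsto hl).mul_const M
    apply squeeze_zero_norm _ h5
    intro r
    rw [norm_smul, norm_neg, Real.norm_of_nonneg (by positivity)]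
    gcongr
    exact h0 _

lemma smfold_smooth {E : Type*} [NormedAddCommGroup E] [NormedSpace ℝ E] {n : ℕ} (lam : ℝ)
    (v : Fin n → E) {f : E → ℂ} (hf : ContDiff ℝ (⊤ : ℕ∞) f) (l : List (Fin n)) :
    ContDiff ℝ (⊤ : ℕ∞) (l.foldr (fun i h => sm lam (v i) h) f) := by
  induction l with
  | nil => simpa
  | cons i l ih => exact sm_smooth lam (v i) ih

lemma smear_list {E : Type*} [NormedAddCommGroup E] [NormedSpace ℝ E] {n : ℕ} {lam : ℝ} (hl : 0 < lam)
    (v : Fin n → E) {f : E → ℂ} (hf : ContDiff ℝ (⊤ : ℕ∞) f) {M : ℝ}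
    (l : List (Fin n)) (hnd : l.Nodup)
    (hb : ∀ l' : List (Fin n), l' <:+ l → ∀ x, ‖l'.foldr (fun i h => sm lam (v i) h) f x‖ ≤ M) (y : E) :
    f y = ∫ r : X n, (l.foldr (fun i h => sm lam (v i) h) f) (y - (l.map (fun i => r i • v i)).sum)
      ∂(Measure.pi (fun _ : Fin n => nuK lam)) := by
  have := nuK_prob hl
  induction l with
  | nil => simp
  | cons i l ih =>
    rw [List.nodup_cons] at hnd
    have ih' := ih hnd.2 (fun l' hl' => hb l' (hl'.trans (List.suffix_cons i l)))
    rw [ih']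
    set F := l.foldr (fun i h => sm lam (v i) h) f with hF
    have hFs : ContDiff ℝ (⊤ : ℕ∞) F := smfold_smooth lam v hf l
    have hsm : ∀ x, ‖sm lam (v i) F x‖ ≤ M := hb (i :: l) (List.suffix_refl _)
    have hFb : ∀ x, ‖F x‖ ≤ M := hb l (List.suffix_cons i l)
    have hc : Continuous (sm lam (v i) F) := (sm_smooth lam _ hFs).continuous
    have hcl : ∀ l : List (Fin n), Continuous (fun r : X n => (l.map (fun i => r i • v i)).sum) := by
      intro l
      induction l with
      | nil => simp; fun_prop
      | cons j l ihl => simp only [List.map_cons, List.sum_cons]; fun_prop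
    have step : ∀ r : X n, F (y - (l.map (fun i => r i • v i)).sum) =
        ∫ ρ, sm lam (v i) F (y - (l.map (fun i => r i • v i)).sum - ρ • v i) ∂(nuK lam) :=
      fun r => smear1 hl (v i) hFs hFb hsm _
    simp_rw [step]
    have hcl' := hcl l
    rw [integral_integral (f := fun (r : X n) (ρ : ℝ) =>
      sm lam (v i) F (y - (l.map (fun i => r i • v i)).sum - ρ • v i))]
    · have mp := update_mp hl i
      set G : X n → ℂ := fun r => sm lam (v i) F (y - ((i :: l).map (fun i => r i • v i)).sum) with hG
      have hGc : Continuous G := hc.comp (continuous_const.sub (hcl (i :: l)))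
      have e : ∀ z : X n × ℝ, sm lam (v i) F (y - (l.map (fun i => z.1 i • v i)).sum - z.2 • v i) =
          G (Function.update z.1 i z.2) := by
        intro z
        simp only [hG, List.map_cons, List.sum_cons, Function.update_self]
        have : l.map (fun j => Function.update z.1 i z.2 j • v j) = l.map (fun j => z.1 j • v j) := by
          apply List.map_congr_left
          intro j hj
          have : j ≠ i := fun h => hnd.1 (h ▸ hj)
          rw [Function.update_of_ne this]
        rw [this, sub_sub, add_comm (z.2 • v i)]
      simp_rw [e]
      conv_rhs => rw [← mp.map_eq]
      rw [integral_map mp.measurable.aemeasurable]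
      · rfl
      · exact hGc.aestronglyMeasurable
    · refine Integrable.mono' (integrable_const M) ?_ ?_
      · apply Continuous.aestronglyMeasurable
        unfold Function.uncurry
        fun_prop
      · filter_upwards with z
        exact hsm _

end

end

section
open MeasureTheory Finset
open scoped ENNReal

noncomputable section

/-- phase -/
def ph {n : ℕ} (ℏ : ℝ) (p z : X n) : ℂ :=
  Complex.exp (Complex.I * Complex.ofReal (∑ i, p i * z i) / Complex.ofReal ℏ)

lemma ph_eq {n : ℕ} (ℏ : ℝ) (p z : X n) :
    ph ℏ p z = Complex.exp (Complex.I * (ℏ⁻¹ * ∑ i, p i * z i : ℝ)) := by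
  unfold ph; congr 1; push_cast; ring

lemma ph_norm {n : ℕ} (ℏ : ℝ) (p z : X n) : ‖ph ℏ p z‖ = 1 := by
  rw [ph_eq, mul_comm, Complex.norm_exp_ofReal_mul_I]

lemma ph_add {n : ℕ} (ℏ : ℝ) (p z w : X n) : ph ℏ p (z + w) = ph ℏ p z * ph ℏ p w := by
  rw [ph_eq, ph_eq, ph_eq, ← Complex.exp_add]; congr 1
  simp only [Pi.add_apply, mul_add, Finset.sum_add_distrib]
  push_cast; ring

lemma ph_cont {n : ℕ} (ℏ : ℝ) : Continuous (fun q : X n × X n => ph ℏ q.1 q.2) := by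
  unfold ph; fun_prop

lemma ph_comp_cont {n : ℕ} (ℏ : ℝ) {α : Type*} [TopologicalSpace α] {f g : α → X n}
    (hf : Continuous f) (hg : Continuous g) : Continuous (fun a => ph ℏ (f a) (g a)) := by
  unfold ph; fun_prop

lemma cs_lint {α : Type*} [MeasurableSpace α] {μ : Measure α} {k f : α → ℝ≥0∞}
    (hk : AEMeasurable k μ) (hf : AEMeasurable f μ) :
    (∫⁻ a, k a * f a ∂μ) ^ 2 ≤ (∫⁻ a, k a ∂μ) * ∫⁻ a, k a * f a ^ 2 ∂μ := by
  have h := ENNReal.lintegral_mul_le_Lp_mul_Lq μ (p := 2) (q := 2)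
    (by constructor <;> norm_num) (f := fun a => k a ^ (1/2 : ℝ)) (g := fun a => k a ^ (1/2 : ℝ) * f a)
    (hk.pow_const _) ((hk.pow_const _).mul hf)
  have e1 : ∀ a, ((fun a => k a ^ (1/2 : ℝ)) * (fun a => k a ^ (1/2 : ℝ) * f a)) a = k a * f a := by
    intro a
    simp only [Pi.mul_apply]
    rw [← mul_assoc, ← ENNReal.rpow_add_of_nonneg _ _ (by norm_num) (by norm_num)]
    norm_num
  have e2 : ∀ a, (k a ^ (1/2 : ℝ)) ^ (2:ℝ) = k a := by
    intro a; rw [← ENNReal.rpow_mul]; norm_num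
  have e3 : ∀ a, (k a ^ (1/2 : ℝ) * f a) ^ (2:ℝ) = k a * f a ^ 2 := by
    intro a; rw [ENNReal.mul_rpow_of_nonneg _ _ (by norm_num), e2]; simp
  simp_rw [e1, e2, e3] at h
  calc _ ≤ ((∫⁻ a, k a ∂μ) ^ (1/2:ℝ) * (∫⁻ a, k a * f a ^ 2 ∂μ) ^ (1/2:ℝ)) ^ 2 := by gcongr
    _ = _ := by
      rw [mul_pow, ← ENNReal.rpow_natCast, ← ENNReal.rpow_natCast, ← ENNReal.rpow_mul, ← ENNReal.rpow_mul]
      norm_num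

/-- basis directions -/
def ex {n : ℕ} (i : Fin n) : X n × X n × X n := (Pi.single i (1 : ℝ), 0, 0)
def ep {n : ℕ} (i : Fin n) : X n × X n × X n := (0, Pi.single i (1 : ℝ), 0)
def ey {n : ℕ} (i : Fin n) : X n × X n × X n := (0, 0, Pi.single i (1 : ℝ))

/-- all `1 + lam ∂_{x_i}` -/
def Dx {n : ℕ} (lam : ℝ) (A : X n × X n × X n → ℂ) : X n × X n × X n → ℂ :=
  (List.finRange n).foldr (fun i h => sm lam (ex i) h) A
def Dy {n : ℕ} (lam : ℝ) (A : X n × X n × X n → ℂ) : X n × X n × X n → ℂ :=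
  (List.finRange n).foldr (fun i h => sm lam (ey i) h) A

lemma sum_finRange {n : ℕ} {F : Type*} [AddCommMonoid F] (f : Fin n → F) :
    ((List.finRange n).map f).sum = ∑ i, f i := by
  rw [← List.ofFn_eq_map, List.sum_ofFn]

lemma sum_ex {n : ℕ} (r : X n) : ((List.finRange n).map (fun i => r i • (ex i : X n × X n × X n))).sum = (r, 0, 0) := by
  rw [sum_finRange]
  ext i <;> simp [ex, Prod.fst_sum, Prod.snd_sum, Finset.sum_apply, Pi.single_apply]

lemma sum_ey {n : ℕ} (r : X n) : ((List.finRange n).map (fun i => r i • (ey i : X n × X n × X n))).sum = (0, 0, r) := by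
  rw [sum_finRange]
  ext i <;> simp [ey, Prod.fst_sum, Prod.snd_sum, Finset.sum_apply, Pi.single_apply]

lemma smear_x {n : ℕ} {lam : ℝ} (hl : 0 < lam) {A : X n × X n × X n → ℂ} (hA : ContDiff ℝ (⊤ : ℕ∞) A)
    {M : ℝ} (hb : ∀ l' : List (Fin n), l' <:+ List.finRange n →
      ∀ x, ‖l'.foldr (fun i h => sm lam (ex i) h) A x‖ ≤ M) (x p y : X n) :
    A (x, p, y) = ∫ s, EK lam (x - s) • Dx lam A (s, p, y) := by
  rw [smear_list hl ex hA (List.finRange n) (List.nodup_finRange n) hb (x, p, y), pi_nuK_integral hl,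
    ← integral_sub_left_eq_self _ volume x]
  congr 1; ext s
  rw [sum_ex]
  simp [Dx]

lemma smear_y {n : ℕ} {lam : ℝ} (hl : 0 < lam) {A : X n × X n × X n → ℂ} (hA : ContDiff ℝ (⊤ : ℕ∞) A)
    {M : ℝ} (hb : ∀ l' : List (Fin n), l' <:+ List.finRange n →
      ∀ x, ‖l'.foldr (fun i h => sm lam (ey i) h) A x‖ ≤ M) (x p y : X n) :
    A (x, p, y) = ∫ t, EK lam (y - t) • Dy lam A (x, p, t) := by
  rw [smear_list hl ey hA (List.finRange n) (List.nodup_finRange n) hb (x, p, y), pi_nuK_integral hl,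
    ← integral_sub_left_eq_self _ volume y]
  congr 1; ext s
  rw [sum_ey]
  simp [Dy]

lemma dom_int {n : ℕ} (M ρ : ℝ) {u : X n → ℂ} (hu : Integrable u) :
    Integrable (fun q : X n × X n => (Metric.closedBall (0 : X n) ρ).indicator (fun _ => M) q.1 * ‖u q.2‖) := by
  apply Integrable.mul_prod (f := (Metric.closedBall (0 : X n) ρ).indicator (fun _ => M)) (g := fun y => ‖u y‖)
  · rw [integrable_indicator_iff Metric.isClosed_closedBall.measurableSet]
    exact integrableOn_const (isCompact_closedBall _ _).measure_lt_top.ne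
  · exact hu.norm

lemma dom_le {n : ℕ} {M ρ : ℝ} {B : X n × X n × X n → ℂ} (hb : ∀ z, ‖B z‖ ≤ M)
    (hs : ∀ x p y, ρ < ‖p‖ → B (x, p, y) = 0) (x p y : X n) :
    ‖B (x, p, y)‖ ≤ (Metric.closedBall (0 : X n) ρ).indicator (fun _ => M) p := by
  by_cases hp : p ∈ Metric.closedBall (0 : X n) ρ
  · rw [Set.indicator_of_mem hp]; exact hb _
  · rw [Set.indicator_of_notMem hp, hs x p y (by simpa using hp)]; simp

lemma TB_int {n : ℕ} (ℏ : ℝ) {M ρ : ℝ} {B : X n × X n × X n → ℂ} (hB : Continuous B) (hb : ∀ z, ‖B z‖ ≤ M)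
    (hs : ∀ x p y, ρ < ‖p‖ → B (x, p, y) = 0) {u : X n → ℂ} (huc : Continuous u) (hu : Integrable u)
    (s x : X n) :
    Integrable (fun q : X n × X n => B (s, q.1, q.2) * ph ℏ q.1 (x - q.2) * u q.2) := by
  refine (dom_int M ρ hu).mono' ?_ ?_
  · apply Continuous.aestronglyMeasurable
    have := ph_comp_cont ℏ (α := X n × X n) continuous_fst (continuous_const.sub continuous_snd : Continuous fun q : X n × X n => x - q.2)
    fun_prop
  · filter_upwards with q
    rw [norm_mul, norm_mul, ph_norm, mul_one]
    gcongr
    exact dom_le hb hs _ _ _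

/-- step 1 of the Calderon-Vaillancourt type argument -/
lemma cv_step1 {n : ℕ} (ℏ : ℝ) {lam : ℝ} (hl : 0 < lam) {M ρ : ℝ} {A B : X n × X n × X n → ℂ}
    (hB : Continuous B) (hb : ∀ z, ‖B z‖ ≤ M)
    (hs : ∀ x p y, ρ < ‖p‖ → B (x, p, y) = 0)
    (hAB : ∀ x p y, A (x, p, y) = ∫ s, EK lam (x - s) • B (s, p, y))
    {u : X n → ℂ} (huc : Continuous u) (hu : Integrable u) (x : X n) :
    ∫ p, ∫ y, A (x, p, y) * ph ℏ p (x - y) * u y =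
      ∫ s, EK lam (x - s) • ∫ p, ∫ y, B (s, p, y) * ph ℏ p (x - y) * u y := by
  have hEi : Integrable (fun s : X n => EK lam (x - s)) := (EK_int hl).comp_sub_left x
  have hphc : Continuous (fun q : X n × (X n × X n) => ph ℏ q.2.1 (x - q.2.2)) :=
    ph_comp_cont ℏ (by fun_prop) (by fun_prop)
  have hI : Integrable (fun q : X n × (X n × X n) =>
      EK lam (x - q.1) • (B (q.1, q.2.1, q.2.2) * ph ℏ q.2.1 (x - q.2.2) * u q.2.2)) := by
    refine (hEi.mul_prod (dom_int M ρ hu)).mono' ?_ ?_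
    · refine AEStronglyMeasurable.smul (f := fun q : X n × (X n × X n) => EK lam (x - q.1))
        (g := fun q : X n × (X n × X n) => B (q.1, q.2.1, q.2.2) * ph ℏ q.2.1 (x - q.2.2) * u q.2.2) ?_ ?_
      · apply Measurable.aestronglyMeasurable
        exact (EK_meas lam).comp (by fun_prop)
      · apply Continuous.aestronglyMeasurable
        fun_prop
    · filter_upwards with q
      rw [norm_smul, norm_mul, norm_mul, ph_norm, mul_one, Real.norm_of_nonneg (EK_nonneg hl _)]
      have := dom_le hb hs q.1 q.2.1 q.2.2
      have := EK_nonneg hl (x - q.1)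
      gcongr
  have hI2 := hI.swap
  have e1 : ∀ p y, A (x, p, y) * ph ℏ p (x - y) * u y =
      ∫ s, EK lam (x - s) • (B (s, p, y) * ph ℏ p (x - y) * u y) := by
    intro p y
    rw [hAB, ← integral_mul_const, ← integral_mul_const]
    congr 1; ext s; simp only [smul_mul_assoc]
  simp_rw [e1]
  have hI3 : Integrable (fun q : X n × X n => ∫ s, EK lam (x - s) •
      (B (s, q.1, q.2) * ph ℏ q.1 (x - q.2) * u q.2)) := hI2.integral_prod_left
  rw [integral_integral (f := fun p y => ∫ s, EK lam (x - s) •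
      (B (s, p, y) * ph ℏ p (x - y) * u y)) hI3]
  rw [← Measure.volume_eq_prod]
  rw [integral_integral_swap (f := fun (q : X n × X n) (s : X n) => EK lam (x - s) •
      (B (s, q.1, q.2) * ph ℏ q.1 (x - q.2) * u q.2)) hI2]
  congr 1; ext s
  rw [integral_smul, integral_integral (f := fun p y => B (s, p, y) * ph ℏ p (x - y) * u y)
    (TB_int ℏ hB hb hs huc hu s x), ← Measure.volume_eq_prod]

/-- step 2 -/
lemma cv_step2 {n : ℕ} (ℏ : ℝ) {lam : ℝ} (hl : 0 < lam) {M : ℝ} {B b : X n × X n × X n → ℂ}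
    (hbc : Continuous b) (hbb : ∀ z, ‖b z‖ ≤ M)
    (hBb : ∀ x p y, B (x, p, y) = ∫ t, EK lam (y - t) • b (x, p, t))
    {u : X n → ℂ} (huc : Continuous u) (hu : Integrable u) (s p : X n) :
    ∫ y, B (s, p, y) * (ph ℏ p (-y) * u y) =
      ∫ t, b (s, p, t) * ∫ y, ph ℏ p (-y) * (EK lam (y - t) • u y) := by
  have hphc : Continuous (fun q : X n × X n => ph ℏ p (-q.1)) :=
    ph_comp_cont ℏ (by fun_prop) (by fun_prop)
  have hI : Integrable (fun q : X n × X n => EK lam (q.1 - q.2) • (b (s, p, q.2) * (ph ℏ p (-q.1) * u q.1))) := by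
    have h0 : Integrable (fun q : X n × X n => ‖u q.2‖ * EK lam (-(q.1 - q.2))) :=
      Integrable.convolution_integrand (ContinuousLinearMap.mul ℝ ℝ) hu.norm ((EK_int hl).comp_neg)
    have h1 := (h0.const_mul M).swap
    refine h1.mono' ?_ ?_
    · refine AEStronglyMeasurable.smul (f := fun q : X n × X n => EK lam (q.1 - q.2))
        (g := fun q : X n × X n => b (s, p, q.2) * (ph ℏ p (-q.1) * u q.1)) ?_ ?_
      · apply Measurable.aestronglyMeasurable
        exact (EK_meas lam).comp (by fun_prop)
      · apply Continuous.aestronglyMeasurable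
        fun_prop
    · filter_upwards with q
      simp only [Function.comp, Prod.fst_swap, Prod.snd_swap, neg_sub]
      rw [norm_smul, norm_mul, norm_mul, ph_norm, one_mul, Real.norm_of_nonneg (EK_nonneg hl _)]
      have h2 := hbb (s, p, q.2)
      have h3 := EK_nonneg hl (q.1 - q.2)
      calc _ ≤ EK lam (q.1 - q.2) * (M * ‖u q.1‖) := by gcongr
        _ = _ := by ring
  have e1 : ∀ y, B (s, p, y) * (ph ℏ p (-y) * u y) =
      ∫ t, EK lam (y - t) • (b (s, p, t) * (ph ℏ p (-y) * u y)) := by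
    intro y
    rw [hBb, ← integral_mul_const]
    congr 1; ext t; simp only [smul_mul_assoc]
  simp_rw [e1]
  rw [integral_integral_swap (f := fun y t => EK lam (y - t) • (b (s, p, t) * (ph ℏ p (-y) * u y))) hI]
  congr 1; ext t
  rw [← integral_const_mul]
  congr 1; ext y
  simp only [Complex.real_smul]; ring

end

end

section
open MeasureTheory Finset
open scoped ENNReal

noncomputable section

lemma planch2 {n : ℕ} {ℏ : ℝ} (hh : 0 < ℏ) (f : X n → ℂ) (hf : Integrable f) :
    ∫⁻ x : X n, ‖∫ p : X n, ph ℏ p x * f p‖ₑ ^ 2 ≤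
      ENNReal.ofReal ((2 * Real.pi * ℏ) ^ n) * ∫⁻ y, ‖f y‖ₑ ^ 2 := by
  have h := planch1 (n := n) (c := ℏ⁻¹) (by positivity) f hf
  rw [abs_of_pos (inv_pos.2 hh), div_inv_eq_mul] at h
  convert h using 6 with x
  ext p
  rw [ph_eq]; simp only [mul_comm]

lemma planch3 {n : ℕ} {ℏ : ℝ} (hh : 0 < ℏ) (f : X n → ℂ) (hf : Integrable f) :
    ∫⁻ p : X n, ‖∫ y : X n, ph ℏ p (-y) * f y‖ₑ ^ 2 ≤
      ENNReal.ofReal ((2 * Real.pi * ℏ) ^ n) * ∫⁻ y, ‖f y‖ₑ ^ 2 := by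
  have h := planch1 (n := n) (c := -ℏ⁻¹) (by simp; positivity) f hf
  rw [abs_neg, abs_of_pos (inv_pos.2 hh), div_inv_eq_mul] at h
  convert h using 6 with x
  ext p
  rw [ph_eq]; simp

lemma lint_sub_left {n : ℕ} (f : X n → ℝ≥0∞) (x : X n) : ∫⁻ s, f (x - s) = ∫⁻ s, f s :=
  lintegral_sub_left_eq_self f x

lemma lint_conv {n : ℕ} (K f : X n → ℝ≥0∞) (hK : Measurable K) (hf : Measurable f) :
    ∫⁻ t, ∫⁻ y, K (y - t) * f y = (∫⁻ z, K z) * ∫⁻ y, f y := by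
  have hm2 : Measurable (fun q : X n × X n => K (q.2 - q.1) * f q.2) :=
    (hK.comp (by fun_prop)).mul (hf.comp measurable_snd)
  rw [lintegral_lintegral_swap hm2.aemeasurable, ← lintegral_const_mul _ hf]
  refine lintegral_congr fun y => ?_
  have h : Measurable (fun t => K (y - t)) := hK.comp (by fun_prop)
  rw [lintegral_mul_const _ h, lint_sub_left K]

lemma lint_conv2 {n : ℕ} {K : X n → ℝ≥0∞} {F g : X n → X n → ℝ≥0∞} (hKt : ∀ z, K z ≠ ∞) (hK : Measurable K)
    (hF : Measurable (fun q : X n × X n => F q.1 q.2))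
    (hg : ∀ s p, g s p ≤ (∫⁻ z, K z) * ∫⁻ t, K (s - t) * F t p) :
    ∫⁻ s, ∫⁻ p, g s p ≤ (∫⁻ z, K z) * ((∫⁻ z, K z) * ∫⁻ t, ∫⁻ p, F t p) := by
  set W := ∫⁻ z, K z
  have hm3 : Measurable (fun q : (X n × X n) × X n => K (q.1.1 - q.2) * F q.2 q.1.2) :=
    (hK.comp (by fun_prop)).mul (hF.comp (by fun_prop : Measurable fun q : (X n × X n) × X n => (q.2, q.1.2)))
  have hF1 : Measurable (fun t => ∫⁻ p, F t p) := hF.lintegral_prod_right'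
  have h1 : Measurable (fun q : X n × X n => ∫⁻ t, K (q.1 - t) * F t q.2) :=
    hm3.lintegral_prod_right'
  have h1s : ∀ s, Measurable (fun p : X n => ∫⁻ t, K (s - t) * F t p) := fun s =>
    h1.comp (by fun_prop : Measurable fun p : X n => (s, p))
  have h2 : Measurable (fun s : X n => ∫⁻ p, ∫⁻ t, K (s - t) * F t p) := h1.lintegral_prod_right'
  calc _ ≤ ∫⁻ s, ∫⁻ p, W * ∫⁻ t, K (s - t) * F t p := by
        gcongr with s p; exact hg s p
    _ = ∫⁻ s, W * ∫⁻ p, ∫⁻ t, K (s - t) * F t p := by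
        refine lintegral_congr fun s => ?_
        rw [lintegral_const_mul _ (h1s s)]
    _ = W * ∫⁻ s, ∫⁻ p, ∫⁻ t, K (s - t) * F t p := by
        rw [lintegral_const_mul _ h2]
    _ = W * ∫⁻ s, ∫⁻ t, ∫⁻ p, K (s - t) * F t p := by
        congr 1
        refine lintegral_congr fun s => ?_
        rw [lintegral_lintegral_swap]
        exact (hm3.comp (by fun_prop : Measurable fun q : X n × X n => ((s, q.1), q.2))).aemeasurable
    _ = W * ∫⁻ s, ∫⁻ t, K (s - t) * ∫⁻ p, F t p := by
        congr 1
        refine lintegral_congr fun s => lintegral_congr fun t => ?_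
        rw [lintegral_const_mul' _ _ (hKt _)]
    _ = W * ∫⁻ t, ∫⁻ s, K (s - t) * ∫⁻ p, F t p := by
        congr 1
        rw [lintegral_lintegral_swap]
        exact ((hK.comp (by fun_prop)).mul (hF1.comp measurable_snd)).aemeasurable
    _ = W * ∫⁻ t, W * ∫⁻ p, F t p := by
        congr 1
        refine lintegral_congr fun t => ?_
        have h : Measurable (fun s => K (s - t)) := hK.comp (by fun_prop)
        rw [lintegral_mul_const _ h, lintegral_sub_right_eq_self K]
    _ = _ := by rw [lintegral_const_mul _ hF1]

set_option maxHeartbeats 1000000 in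
lemma cv_abs {n : ℕ} {ℏ : ℝ} (hh : 0 < ℏ) {lam : ℝ} (hl : 0 < lam) {M ρ : ℝ}
    {A B b : X n × X n × X n → ℂ}
    (hB : Continuous B) (hb : ∀ z, ‖B z‖ ≤ M)
    (hs : ∀ x p y, ρ < ‖p‖ → B (x, p, y) = 0)
    (hbc : Continuous b) (hbb : ∀ z, ‖b z‖ ≤ M)
    (hAB : ∀ x p y, A (x, p, y) = ∫ s, EK lam (x - s) • B (s, p, y))
    (hBb : ∀ x p y, B (x, p, y) = ∫ t, EK lam (y - t) • b (x, p, t))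
    {ω : X n → ℝ} (hω : Measurable ω) (hωb : ∀ s p t, ‖b (s, p, t)‖ ≤ ω (s - t))
    {u : X n → ℂ} (huc : Continuous u) (hu : Integrable u) :
    ∫⁻ x, ‖∫ p, ∫ y, A (x, p, y) * ph ℏ p (x - y) * u y‖ₑ ^ 2 ≤
      ENNReal.ofReal ((2 * Real.pi * ℏ) ^ n) ^ 2 * ENNReal.ofReal (lam⁻¹ ^ n) ^ 2 *
        (∫⁻ z, ENNReal.ofReal (ω z)) ^ 2 * ∫⁻ y, ‖u y‖ₑ ^ 2 := by
  obtain ⟨W, hW⟩ : ∃ W, W = ∫⁻ z, ENNReal.ofReal (ω z) := ⟨_, rfl⟩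
  obtain ⟨L, hL⟩ : ∃ L, L = ENNReal.ofReal (lam⁻¹ ^ n) := ⟨_, rfl⟩
  obtain ⟨H, hH⟩ : ∃ H, H = ENNReal.ofReal ((2 * Real.pi * ℏ) ^ n) := ⟨_, rfl⟩
  have hLt : L ≠ ∞ := by rw [hL]; exact ENNReal.ofReal_ne_top
  have hHt : H ≠ ∞ := by rw [hH]; exact ENNReal.ofReal_ne_top
  rw [← hW, ← hL, ← hH]
  obtain ⟨g, hg⟩ : ∃ f : X n → X n → ℂ, f = fun s p => ∫ y, B (s, p, y) * (ph ℏ p (-y) * u y) := ⟨_, rfl⟩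
  obtain ⟨G, hG⟩ : ∃ f : X n → X n → ℂ, f = fun s x => ∫ p, ph ℏ p x * g s p := ⟨_, rfl⟩
  obtain ⟨Uh, hUh⟩ : ∃ f : X n → X n → ℂ, f = fun t p => ∫ y, ph ℏ p (-y) * (EK lam (y - t) • u y) := ⟨_, rfl⟩
  have hgm : StronglyMeasurable (fun q : X n × X n => g q.1 q.2) := by
    rw [hg]
    apply StronglyMeasurable.integral_prod_right' (ν := (volume : Measure (X n)))
      (f := fun q : (X n × X n) × X n => B (q.1.1, q.1.2, q.2) * (ph ℏ q.1.2 (-q.2) * u q.2))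
    apply Continuous.stronglyMeasurable
    have : Continuous (fun q : (X n × X n) × X n => ph ℏ q.1.2 (-q.2)) :=
      ph_comp_cont ℏ (by fun_prop) (by fun_prop)
    fun_prop
  have hGm : StronglyMeasurable (fun q : X n × X n => G q.1 q.2) := by
    rw [hG]
    apply StronglyMeasurable.integral_prod_right' (ν := (volume : Measure (X n)))
      (f := fun q : (X n × X n) × X n => ph ℏ q.2 q.1.2 * g q.1.1 q.2)
    apply StronglyMeasurable.mul
    · apply Continuous.stronglyMeasurable
      exact ph_comp_cont ℏ (by fun_prop) (by fun_prop)
    · exact hgm.comp_measurable (g := fun q : (X n × X n) × X n => (q.1.1, q.2)) (by fun_prop)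
  have hUm : StronglyMeasurable (fun q : X n × X n => Uh q.1 q.2) := by
    rw [hUh]
    apply StronglyMeasurable.integral_prod_right' (ν := (volume : Measure (X n)))
      (f := fun q : (X n × X n) × X n => ph ℏ q.1.2 (-q.2) * (EK lam (q.2 - q.1.1) • u q.2))
    apply StronglyMeasurable.mul
    · apply Continuous.stronglyMeasurable
      exact ph_comp_cont ℏ (by fun_prop) (by fun_prop)
    · refine StronglyMeasurable.smul (f := fun q : (X n × X n) × X n => EK lam (q.2 - q.1.1)) (g := fun q => u q.2) ?_ ?_
      · apply Measurable.stronglyMeasurable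
        exact (EK_meas lam).comp (by fun_prop)
      · apply Continuous.stronglyMeasurable
        fun_prop
  have hTB : ∀ s x, ∫ p, ∫ y, B (s, p, y) * ph ℏ p (x - y) * u y = G s x := by
    intro s x
    simp only [hG, hg]
    congr 1; ext p
    rw [← integral_const_mul]
    congr 1; ext y
    rw [sub_eq_add_neg, ph_add]; ring
  have hgi : ∀ s, Integrable (g s) := by
    intro s
    have := (TB_int ℏ hB hb hs huc hu s 0).integral_prod_left
    simpa [hg, mul_assoc] using this
  have hEm : Measurable (fun z : X n => ENNReal.ofReal (EK lam z)) := (EK_meas lam).ennreal_ofReal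
  have hωm : Measurable (fun z : X n => ENNReal.ofReal (ω z)) := hω.ennreal_ofReal
  have hEL : ∀ z : X n, ENNReal.ofReal (EK lam z) ≤ L := fun z => hL ▸ ENNReal.ofReal_le_ofReal (EK_le hl z)
  -- step 1
  have s1 : ∀ x, ‖∫ p, ∫ y, A (x, p, y) * ph ℏ p (x - y) * u y‖ₑ ^ 2 ≤ L * ∫⁻ s, ‖G s x‖ₑ ^ 2 := by
    intro x
    have hm : Measurable (fun s => ‖G s x‖ₑ) :=
      (hGm.comp_measurable (g := fun s : X n => (s, x)) (by fun_prop)).measurable.enorm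
    rw [cv_step1 ℏ hl hB hb hs hAB huc hu x]
    simp_rw [hTB]
    calc _ ≤ (∫⁻ s, ENNReal.ofReal (EK lam (x - s)) * ‖G s x‖ₑ) ^ 2 := by
          gcongr
          refine (enorm_integral_le_lintegral_enorm _).trans (le_of_eq ?_)
          congr 1; ext s
          rw [enorm_smul, Real.enorm_of_nonneg (EK_nonneg hl _)]
      _ ≤ (∫⁻ s, ENNReal.ofReal (EK lam (x - s))) * ∫⁻ s, ENNReal.ofReal (EK lam (x - s)) * ‖G s x‖ₑ ^ 2 :=
          cs_lint (hEm.comp (by fun_prop)).aemeasurable hm.aemeasurable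
      _ = ∫⁻ s, ENNReal.ofReal (EK lam (x - s)) * ‖G s x‖ₑ ^ 2 := by
          rw [lint_sub_left (fun z => ENNReal.ofReal (EK lam z)), EK_lintegral hl, one_mul]
      _ ≤ ∫⁻ s, L * ‖G s x‖ₑ ^ 2 := by
          gcongr with s; exact hEL _
      _ = _ := lintegral_const_mul _ (hm.pow_const 2)
  have s2 : ∀ s p, ‖g s p‖ₑ ^ 2 ≤ W * ∫⁻ t, ENNReal.ofReal (ω (s - t)) * ‖Uh t p‖ₑ ^ 2 := by
    intro s p
    have hm : Measurable (fun t => ‖Uh t p‖ₑ) :=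
      (hUm.comp_measurable (g := fun t : X n => (t, p)) (by fun_prop)).measurable.enorm
    simp only [hg]
    rw [cv_step2 ℏ hl hbc hbb hBb huc hu s p, show (fun t => b (s, p, t) * ∫ y, ph ℏ p (-y) * (EK lam (y - t) • u y)) = fun t => b (s, p, t) * Uh t p by rw [hUh]]
    calc _ ≤ (∫⁻ t, ENNReal.ofReal (ω (s - t)) * ‖Uh t p‖ₑ) ^ 2 := by
          gcongr
          refine (enorm_integral_le_lintegral_enorm _).trans ?_
          gcongr with t
          rw [enorm_mul]
          gcongr
          rw [← ofReal_norm]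
          exact ENNReal.ofReal_le_ofReal (hωb s p t)
      _ ≤ (∫⁻ t, ENNReal.ofReal (ω (s - t))) * ∫⁻ t, ENNReal.ofReal (ω (s - t)) * ‖Uh t p‖ₑ ^ 2 :=
          cs_lint (hωm.comp (by fun_prop)).aemeasurable hm.aemeasurable
      _ = _ := by rw [lint_sub_left (fun z => ENNReal.ofReal (ω z)), hW]
  have s3 : ∀ t, ∫⁻ p, ‖Uh t p‖ₑ ^ 2 ≤ H * ∫⁻ y, L * (ENNReal.ofReal (EK lam (y - t)) * ‖u y‖ₑ ^ 2) := by
    intro t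
    have hi : Integrable (fun y => EK lam (y - t) • u y) := by
      refine (hu.norm.const_mul (lam⁻¹ ^ n)).mono' ?_ ?_
      · refine AEStronglyMeasurable.smul (f := fun y : X n => EK lam (y - t)) (g := u) ?_ huc.aestronglyMeasurable
        exact ((EK_meas lam).comp (by fun_prop)).aestronglyMeasurable
      · filter_upwards with y
        rw [norm_smul, Real.norm_of_nonneg (EK_nonneg hl _)]
        gcongr; exact EK_le hl _
    rw [hUh, hH]
    refine (planch3 hh _ hi).trans ?_
    gcongr with y
    rw [enorm_smul, Real.enorm_of_nonneg (EK_nonneg hl _), mul_pow, ← mul_assoc, pow_two]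
    gcongr
    exact hEL _
  have hum : Measurable (fun y => ‖u y‖ₑ ^ 2) := huc.measurable.enorm.pow_const 2
  have s4 : ∫⁻ t, ∫⁻ p, ‖Uh t p‖ₑ ^ 2 ≤ H * L * ∫⁻ y, ‖u y‖ₑ ^ 2 := by
    calc _ ≤ ∫⁻ t, H * ∫⁻ y, L * (ENNReal.ofReal (EK lam (y - t)) * ‖u y‖ₑ ^ 2) := lintegral_mono s3
      _ = ∫⁻ t, H * L * ∫⁻ y, (ENNReal.ofReal (EK lam (y - t)) * ‖u y‖ₑ ^ 2) := by
          refine lintegral_congr fun t => ?_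
          rw [lintegral_const_mul' _ _ hLt, mul_assoc]
      _ = H * L * ∫⁻ y, ‖u y‖ₑ ^ 2 := by
          rw [lintegral_const_mul' _ _ (ENNReal.mul_ne_top hHt hLt),
            lint_conv (fun z => ENNReal.ofReal (EK lam z)) (fun y => ‖u y‖ₑ ^ 2) hEm hum, EK_lintegral hl, one_mul]
  have hU2 : Measurable (fun q : X n × X n => ‖Uh q.1 q.2‖ₑ ^ 2) := hUm.measurable.enorm.pow_const 2
  have s5 : ∫⁻ s, ∫⁻ p, ‖g s p‖ₑ ^ 2 ≤ W * (W * ∫⁻ t, ∫⁻ p, ‖Uh t p‖ₑ ^ 2) := by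
    rw [hW] at s2 ⊢
    exact lint_conv2 (K := fun z => ENNReal.ofReal (ω z)) (F := fun t p => ‖Uh t p‖ₑ ^ 2)
      (g := fun s p => ‖g s p‖ₑ ^ 2) (fun _ => ENNReal.ofReal_ne_top) hωm hU2 s2
  have hG2 : Measurable (fun q : X n × X n => ‖G q.2 q.1‖ₑ ^ 2) :=
    (hGm.measurable.enorm.pow_const 2).comp measurable_swap
  calc _ ≤ ∫⁻ x, L * ∫⁻ s, ‖G s x‖ₑ ^ 2 := lintegral_mono s1
    _ = L * ∫⁻ s, ∫⁻ x, ‖G s x‖ₑ ^ 2 := by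
        rw [lintegral_const_mul' _ _ hLt, lintegral_lintegral_swap hG2.aemeasurable]
    _ ≤ L * ∫⁻ s, H * ∫⁻ p, ‖g s p‖ₑ ^ 2 := by
        gcongr with s; rw [hG, hH]; exact planch2 hh (g s) (hgi s)
    _ = L * (H * ∫⁻ s, ∫⁻ p, ‖g s p‖ₑ ^ 2) := by
        rw [lintegral_const_mul' _ _ hHt]
    _ ≤ L * (H * (W * (W * (H * L * ∫⁻ y, ‖u y‖ₑ ^ 2)))) := by
        gcongr; exact s5.trans (by gcongr)
    _ = _ := by ring

lemma dirD_zero_on {E : Type*} [NormedAddCommGroup E] [NormedSpace ℝ E] {U : Set E} (hU : IsOpen U)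
    {f : E → ℂ} (hf : ∀ x ∈ U, f x = 0) (v : E) : ∀ x ∈ U, dirD v f x = 0 := by
  intro x hx
  have : f =ᶠ[nhds x] fun _ => 0 := by
    filter_upwards [hU.mem_nhds hx] with y hy using hf y hy
  unfold dirD; rw [this.fderiv_eq]; simp

lemma smfold_zero_on {E : Type*} [NormedAddCommGroup E] [NormedSpace ℝ E] {U : Set E} (hU : IsOpen U)
    {n : ℕ} (lam : ℝ) (v : Fin n → E) {f : E → ℂ} (hf : ∀ x ∈ U, f x = 0) (l : List (Fin n)) :
    ∀ x ∈ U, l.foldr (fun i h => sm lam (v i) h) f x = 0 := by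
  induction l with
  | nil => simpa
  | cons i l ih =>
    intro x hx
    simp only [List.foldr_cons, sm]
    rw [ih x hx, dirD_zero_on hU ih (v i) x hx]; simp

lemma cv_main {n : ℕ} {ℏ : ℝ} (hh : 0 < ℏ) {lam : ℝ} (hl : 0 < lam) {M ρ : ℝ}
    {A : X n × X n × X n → ℂ} (hA : ContDiff ℝ (⊤ : ℕ∞) A)
    (hs : ∀ x p y, ρ < ‖p‖ → A (x, p, y) = 0)
    (hx : ∀ l' : List (Fin n), l' <:+ List.finRange n →
      ∀ x, ‖l'.foldr (fun i h => sm lam (ex i) h) A x‖ ≤ M)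
    (hy : ∀ l' : List (Fin n), l' <:+ List.finRange n →
      ∀ x, ‖l'.foldr (fun i h => sm lam (ey i) h) (Dx lam A) x‖ ≤ M)
    {ω : X n → ℝ} (hω : Measurable ω) (hωb : ∀ s p t, ‖Dy lam (Dx lam A) (s, p, t)‖ ≤ ω (s - t))
    {u : X n → ℂ} (huc : Continuous u) (hu : Integrable u) :
    ∫⁻ x, ‖∫ p, ∫ y, A (x, p, y) * ph ℏ p (x - y) * u y‖ₑ ^ 2 ≤
      ENNReal.ofReal ((2 * Real.pi * ℏ) ^ n) ^ 2 * ENNReal.ofReal (lam⁻¹ ^ n) ^ 2 *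
        (∫⁻ z, ENNReal.ofReal (ω z)) ^ 2 * ∫⁻ y, ‖u y‖ₑ ^ 2 := by
  have hDx : ContDiff ℝ (⊤ : ℕ∞) (Dx lam A) := smfold_smooth lam ex hA _
  have hDy : ContDiff ℝ (⊤ : ℕ∞) (Dy lam (Dx lam A)) := smfold_smooth lam ey hDx _
  refine cv_abs hh hl (ρ := ρ) (M := M) hDx.continuous (fun z => hx _ (List.suffix_refl _) z) ?_ hDy.continuous
    (fun z => hy _ (List.suffix_refl _) z) (smear_x hl hA hx) (smear_y hl hDx hy) hω hωb huc hu
  intro x p y hp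
  have hU : IsOpen {z : X n × X n × X n | ρ < ‖z.2.1‖} := isOpen_lt (by fun_prop) (by fun_prop)
  exact smfold_zero_on hU lam ex (f := A) (fun z hz => hs z.1 z.2.1 z.2.2 hz) _ (x, p, y) hp

end

end

section
open MeasureTheory Finset
open scoped ENNReal Topology

noncomputable section

section PBcalc
variable {E : Type*} [NormedAddCommGroup E] [NormedSpace ℝ E] {ι : Type*}

/-- pointwise bound of all scaled derivative words of length at most `K` -/
def PBd (v : ι → E) (s : ι → ℝ) : ℕ → (E → ℂ) → E → ℝ → Prop
  | 0, f, x, M => ‖f x‖ ≤ M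
  | K + 1, f, x, M => ‖f x‖ ≤ M ∧ ∀ i, PBd v s K (fun y => (s i : ℂ) * dirD (v i) f y) x M

/-- smooth at a point -/
def SmA (f : E → ℂ) (x : E) : Prop := ContDiffAt ℝ (⊤ : ℕ∞) f x

variable {v : ι → E} {s : ι → ℝ}

lemma PBd_val {K : ℕ} {f : E → ℂ} {x : E} {M : ℝ} (h : PBd v s K f x M) : ‖f x‖ ≤ M := by
  cases K with
  | zero => exact h
  | succ K => exact h.1

lemma PBd_nonneg {K : ℕ} {f : E → ℂ} {x : E} {M : ℝ} (h : PBd v s K f x M) : 0 ≤ M :=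
  (norm_nonneg _).trans (PBd_val h)

lemma PBd_mono {K : ℕ} {f : E → ℂ} {x : E} {M M' : ℝ} (h : PBd v s K f x M) (hM : M ≤ M') :
    PBd v s K f x M' := by
  induction K generalizing f with
  | zero => exact le_trans h hM
  | succ K ih => exact ⟨h.1.trans hM, fun i => ih (h.2 i)⟩

lemma PBd_succ {K : ℕ} {f : E → ℂ} {x : E} {M : ℝ} (h : PBd v s (K + 1) f x M) :
    PBd v s K f x M := by
  induction K generalizing f with
  | zero => exact h.1
  | succ K ih => exact ⟨h.1, fun i => ih (h.2 i)⟩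

lemma PBd_le {K K' : ℕ} (hK : K' ≤ K) {f : E → ℂ} {x : E} {M : ℝ} (h : PBd v s K f x M) :
    PBd v s K' f x M := by
  induction K with
  | zero => obtain rfl : K' = 0 := by omega
            exact h
  | succ K ih =>
    rcases Nat.lt_or_ge K' (K + 1) with h1 | h1
    · exact ih (by omega) (PBd_succ h)
    · obtain rfl : K' = K + 1 := by omega
      exact h

lemma dirD_germ {f g : E → ℂ} {x : E} (h : f =ᶠ[𝓝 x] g) (w : E) : dirD w f =ᶠ[𝓝 x] dirD w g := by
  filter_upwards [h.fderiv (𝕜 := ℝ)] with y hy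
  simp [dirD, hy]

lemma PBd_congr {K : ℕ} {f g : E → ℂ} {x : E} {M : ℝ} (hfg : f =ᶠ[𝓝 x] g) (h : PBd v s K f x M) :
    PBd v s K g x M := by
  induction K generalizing f g with
  | zero => show ‖g x‖ ≤ M
            rw [← hfg.eq_of_nhds]; exact h
  | succ K ih =>
    refine ⟨by rw [← hfg.eq_of_nhds]; exact h.1, fun i => ih ?_ (h.2 i)⟩
    filter_upwards [dirD_germ hfg (v i)] with y hy
    rw [hy]

lemma PBd_const (K : ℕ) (c : ℂ) (x : E) {M : ℝ} (hM : ‖c‖ ≤ M) : PBd v s K (fun _ => c) x M := by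
  induction K generalizing c with
  | zero => exact hM
  | succ K ih =>
    refine ⟨hM, fun i => ?_⟩
    have := ih 0 (by simpa using (norm_nonneg _).trans hM)
    refine PBd_congr ?_ this
    filter_upwards with y
    simp [dirD]

lemma PBd_zero_germ (K : ℕ) {f : E → ℂ} {x : E} (h : f =ᶠ[𝓝 x] fun _ => 0) {M : ℝ} (hM : 0 ≤ M) :
    PBd v s K f x M := PBd_congr h.symm (PBd_const K 0 x (by simpa))

lemma SmA.dirD {f : E → ℂ} {x : E} (hf : SmA f x) (w : E) : SmA (dirD w f) x := by
  unfold SmA _root_.dirD at *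
  exact (hf.fderiv_right (m := ((⊤ : ℕ∞) : WithTop ℕ∞)) (by simp)).clm_apply contDiffAt_const

lemma SmA.ev {f : E → ℂ} {x : E} (hf : SmA f x) : ∀ᶠ y in 𝓝 x, DifferentiableAt ℝ f y := by
  have h1 : ContDiffAt ℝ 1 f x := hf.of_le (by exact_mod_cast le_top)
  filter_upwards [h1.eventually (by simp)] with y hy
  exact hy.differentiableAt (by simp)

lemma SmA.cmul {f : E → ℂ} {x : E} (hf : SmA f x) (c : ℂ) : SmA (fun y => c * f y) x :=
  ContDiffAt.mul contDiffAt_const hf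
lemma SmA.add {f g : E → ℂ} {x : E} (hf : SmA f x) (hg : SmA g x) : SmA (fun y => f y + g y) x :=
  ContDiffAt.add hf hg
lemma SmA.mul {f g : E → ℂ} {x : E} (hf : SmA f x) (hg : SmA g x) : SmA (fun y => f y * g y) x :=
  ContDiffAt.mul hf hg
lemma SmA.inv {f : E → ℂ} {x : E} (hf : SmA f x) (h : f x ≠ 0) : SmA (fun y => (f y)⁻¹) x :=
  ContDiffAt.inv hf h
lemma SmA.pow {f : E → ℂ} {x : E} (hf : SmA f x) (k : ℕ) : SmA (fun y => f y ^ k) x :=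
  ContDiffAt.pow hf k
lemma SmA.const (c : ℂ) (x : E) : SmA (fun _ => c) x := contDiffAt_const
lemma SmA.congr {f g : E → ℂ} {x : E} (hf : SmA f x) (h : f =ᶠ[𝓝 x] g) : SmA g x :=
  ContDiffAt.congr_of_eventuallyEq hf h.symm

lemma dirD_add {f g : E → ℂ} {x : E} (hf : SmA f x) (hg : SmA g x) (w : E) :
    dirD w (fun y => f y + g y) =ᶠ[𝓝 x] fun y => dirD w f y + dirD w g y := by
  filter_upwards [hf.ev, hg.ev] with y h1 h2
  simp only [dirD]
  rw [fderiv_fun_add h1 h2]; rfl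

lemma dirD_mul {f g : E → ℂ} {x : E} (hf : SmA f x) (hg : SmA g x) (w : E) :
    dirD w (fun y => f y * g y) =ᶠ[𝓝 x] fun y => dirD w f y * g y + f y * dirD w g y := by
  filter_upwards [hf.ev, hg.ev] with y h1 h2
  simp only [dirD]
  rw [fderiv_fun_mul h1 h2]; simp; ring

lemma dirD_cmul {f : E → ℂ} {x : E} (hf : SmA f x) (c : ℂ) (w : E) :
    dirD w (fun y => c * f y) =ᶠ[𝓝 x] fun y => c * dirD w f y := by
  filter_upwards [hf.ev] with y h1
  simp only [dirD]
  rw [fderiv_const_mul h1]; simp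

lemma dirD_inv {f : E → ℂ} {x : E} (hf : SmA f x) (h : f x ≠ 0) (w : E) :
    dirD w (fun y => (f y)⁻¹) =ᶠ[𝓝 x] fun y => (-1) * (dirD w f y * ((f y)⁻¹ * (f y)⁻¹)) := by
  filter_upwards [hf.ev, hf.continuousAt.eventually_ne h] with y h1 h2
  simp only [dirD]
  have h3 : HasFDerivAt (fun y => (f y)⁻¹) ((ContinuousLinearMap.toSpanSingleton ℂ (-((f y) ^ 2)⁻¹) : ℂ →L[ℂ] ℂ).restrictScalars ℝ ∘L fderiv ℝ f y) y :=
    ((hasFDerivAt_inv h2).restrictScalars ℝ).comp y h1.hasFDerivAt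
  rw [h3.fderiv]
  simp; field_simp; exact Or.inl trivial

lemma PBd_add {K : ℕ} {f g : E → ℂ} {x : E} {M₁ M₂ : ℝ} (hf : SmA f x) (hg : SmA g x)
    (h1 : PBd v s K f x M₁) (h2 : PBd v s K g x M₂) : PBd v s K (fun y => f y + g y) x (M₁ + M₂) := by
  induction K generalizing f g with
  | zero => exact (norm_add_le _ _).trans (add_le_add h1 h2)
  | succ K ih =>
    refine ⟨(norm_add_le _ _).trans (add_le_add h1.1 h2.1), fun i => ?_⟩
    refine PBd_congr ?_ (ih ((hf.dirD (v i)).cmul (s i)) ((hg.dirD (v i)).cmul (s i)) (h1.2 i) (h2.2 i))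
    filter_upwards [dirD_add hf hg (v i)] with y hy
    rw [hy]; ring

lemma PBd_cmul {K : ℕ} {f : E → ℂ} {x : E} {M : ℝ} (hf : SmA f x) (c : ℂ)
    (h1 : PBd v s K f x M) : PBd v s K (fun y => c * f y) x (‖c‖ * M) := by
  induction K generalizing f with
  | zero => show ‖c * f x‖ ≤ _
            rw [norm_mul]; exact mul_le_mul_of_nonneg_left h1 (norm_nonneg _)
  | succ K ih =>
    refine ⟨by rw [norm_mul]; exact mul_le_mul_of_nonneg_left h1.1 (norm_nonneg _), fun i => ?_⟩
    refine PBd_congr ?_ (ih ((hf.dirD (v i)).cmul (s i)) (h1.2 i))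
    filter_upwards [dirD_cmul hf c (v i)] with y hy
    rw [hy]; ring

lemma PBd_mul {K : ℕ} {f g : E → ℂ} {x : E} {M₁ M₂ : ℝ} (hf : SmA f x) (hg : SmA g x)
    (h1 : PBd v s K f x M₁) (h2 : PBd v s K g x M₂) :
    PBd v s K (fun y => f y * g y) x (2 ^ K * M₁ * M₂) := by
  induction K generalizing f g with
  | zero =>
    have h3 := PBd_nonneg h1
    have h4 := PBd_nonneg h2
    show ‖f x * g x‖ ≤ _
    rw [norm_mul, pow_zero, one_mul]
    exact mul_le_mul h1 h2 (norm_nonneg _) h3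
  | succ K ih =>
    have h3 := PBd_nonneg h1
    have h4 := PBd_nonneg h2
    refine ⟨?_, fun i => ?_⟩
    · rw [norm_mul, mul_assoc]
      have h5 : ‖f x‖ * ‖g x‖ ≤ M₁ * M₂ := mul_le_mul h1.1 h2.1 (norm_nonneg _) h3
      have h6 : (1:ℝ) ≤ 2 ^ (K + 1) := one_le_pow₀ (by norm_num)
      have h7 : 0 ≤ M₁ * M₂ := mul_nonneg h3 h4
      nlinarith
    · have e1 := ih ((hf.dirD (v i)).cmul (s i)) hg (h1.2 i) (PBd_succ h2)
      have e2 := ih hf ((hg.dirD (v i)).cmul (s i)) (PBd_succ h1) (h2.2 i)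
      refine PBd_mono (PBd_congr ?_ (PBd_add (((hf.dirD (v i)).cmul (s i)).mul hg)
        (hf.mul ((hg.dirD (v i)).cmul (s i))) e1 e2)) (le_of_eq (by ring))
      filter_upwards [dirD_mul hf hg (v i)] with y hy
      rw [hy]; ring

lemma PBd_pow {K : ℕ} {f : E → ℂ} {x : E} {M : ℝ} (hf : SmA f x) (h : PBd v s K f x M) (k : ℕ) :
    PBd v s K (fun y => f y ^ k) x ((2 ^ K * M) ^ k) := by
  induction k with
  | zero => simpa using PBd_const (v := v) (s := s) K 1 x (M := 1) (by simp)
  | succ k ih =>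
    have := PBd_mul (hf.pow k) hf ih h
    refine PBd_mono this (le_of_eq ?_)
    rw [pow_succ]
    generalize (2 ^ K * M) ^ k = q
    ring

lemma PBd_inv (K : ℕ) {C : ℝ} (hC : 0 ≤ C) : ∃ C' : ℝ, 0 ≤ C' ∧
    ∀ {E : Type} [NormedAddCommGroup E] [NormedSpace ℝ E] {ι : Type} (v : ι → E) (s : ι → ℝ)
    (g : E → ℂ) (x : E), SmA g x → g x ≠ 0 → PBd v s K g x (C * ‖g x‖) →
      PBd v s K (fun y => (g y)⁻¹) x (C' * ‖g x‖⁻¹) := by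
  induction K with
  | zero =>
    refine ⟨1, by norm_num, ?_⟩
    intro E _ _ ι v s g x hg h0 h
    show ‖(g x)⁻¹‖ ≤ _
    simp
  | succ K ih =>
    obtain ⟨C', hC', ih⟩ := ih
    refine ⟨1 + 4 ^ K * C * C' ^ 2, by positivity, ?_⟩
    intro E _ _ ι v s g x hg h0 h
    have hgx : 0 < ‖g x‖ := norm_pos_iff.2 h0
    refine ⟨?_, fun i => ?_⟩
    · rw [norm_inv]
      have h1 : 0 ≤ 4 ^ K * C * C' ^ 2 := by positivity
      have h2 : 0 < ‖g x‖⁻¹ := by positivity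
      nlinarith
    · have e1 := ih v s g x hg h0 (PBd_succ h)
      have hgi := hg.inv h0
      have hd := (hg.dirD (v i)).cmul (s i)
      have e2 := PBd_mul hgi hgi e1 e1
      have e3 := PBd_mul hd (hgi.mul hgi) (h.2 i) e2
      have e4 := PBd_cmul (hd.mul (hgi.mul hgi)) (-1) e3
      refine PBd_mono (PBd_congr ?_ e4) ?_
      · filter_upwards [dirD_inv hg h0 (v i)] with y hy
        rw [hy]; ring
      · have e5 : ‖(-1 : ℂ)‖ * (2 ^ K * (C * ‖g x‖) * (2 ^ K * (C' * ‖g x‖⁻¹) * (C' * ‖g x‖⁻¹)))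
            = 4 ^ K * C * C' ^ 2 * ‖g x‖⁻¹ := by
          rw [show (4:ℝ) = 2 * 2 by norm_num, mul_pow]
          simp; field_simp
        rw [e5]
        have h2 : 0 < ‖g x‖⁻¹ := by positivity
        nlinarith

lemma SmA.sum {κ : Type*} (t : Finset κ) {f : κ → E → ℂ} {x : E} (hf : ∀ k ∈ t, SmA (f k) x) :
    SmA (fun y => ∑ k ∈ t, f k y) x := ContDiffAt.sum (f := f) (s := t) hf

lemma PBd_sum {K : ℕ} {κ : Type*} [DecidableEq κ] (t : Finset κ) {f : κ → E → ℂ} {x : E} {M : κ → ℝ}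
    (hf : ∀ k ∈ t, SmA (f k) x) (h : ∀ k ∈ t, PBd v s K (f k) x (M k)) :
    PBd v s K (fun y => ∑ k ∈ t, f k y) x (∑ k ∈ t, M k) := by
  induction t using Finset.induction_on with
  | empty => simpa using PBd_const (v := v) (s := s) K 0 x (M := 0) (by simp)
  | insert a t ha ih =>
    simp only [Finset.sum_insert ha]
    exact PBd_add (hf a (by simp)) (SmA.sum t fun k hk => hf k (by simp [hk])) (h a (by simp))
      (ih (fun k hk => hf k (by simp [hk])) fun k hk => h k (by simp [hk]))

lemma SmA.clm (ℓ : E →L[ℝ] ℂ) (x : E) : SmA (fun y => ℓ y) x := ℓ.contDiff.contDiffAt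

lemma PBd_clm (K : ℕ) (ℓ : E →L[ℝ] ℂ) {x : E} {M : ℝ} (h0 : ‖ℓ x‖ ≤ M)
    (h1 : ∀ i, |s i| * ‖ℓ (v i)‖ ≤ M) : PBd v s K (fun y => ℓ y) x M := by
  cases K with
  | zero => exact h0
  | succ K =>
    refine ⟨h0, fun i => ?_⟩
    refine PBd_congr ?_ (PBd_const K ((s i : ℂ) * ℓ (v i)) x (by simpa using h1 i))
    filter_upwards with y
    simp [dirD, ContinuousLinearMap.fderiv]

/-- smoothing factors -/
lemma PBd_smfold {n : ℕ} {K : ℕ} (e : Fin n → ι) {lam : ℝ} (he : ∀ i, s (e i) = lam) {f : E → ℂ} {x : E}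
    {M : ℝ} (hf : SmA f x) (l : List (Fin n)) (h : PBd v s (K + l.length) f x M) :
    PBd v s K (l.foldr (fun i h => sm lam (v (e i)) h) f) x (2 ^ l.length * M) ∧
     SmA (l.foldr (fun i h => sm lam (v (e i)) h) f) x := by
  induction l generalizing K with
  | nil => simpa using ⟨h, hf⟩
  | cons i l ih =>
    have h' : PBd v s ((K + 1) + l.length) f x M := by
      convert h using 1; simp; ring
    obtain ⟨h1, h2⟩ := ih h'
    simp only [List.foldr_cons, List.length_cons]
    have e1 := h1.2 (e i)
    have hs := (h2.dirD (v (e i))).cmul (s (e i))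
    have e2 := PBd_add h2 hs (PBd_succ h1) e1
    rw [he i] at e2 hs
    refine ⟨PBd_mono e2 (le_of_eq (by ring)), h2.add hs⟩

end PBcalc
end

end

section
open MeasureTheory Finset
open scoped ENNReal Topology

noncomputable section

section comm
variable {E : Type*} [NormedAddCommGroup E] [NormedSpace ℝ E]

lemma dirD_comm {f : E → ℂ} (hf : ContDiff ℝ (⊤ : ℕ∞) f) (v w : E) :
    dirD v (dirD w f) = dirD w (dirD v f) := by
  ext x
  have hs : IsSymmSndFDerivAt ℝ f x := hf.contDiffAt.isSymmSndFDerivAt (by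
    rw [minSmoothness_of_isRCLikeNormedField]; exact WithTop.coe_le_coe.2 (le_top : (2 : ℕ∞) ≤ ⊤))
  have hd : DifferentiableAt ℝ (fderiv ℝ f) x :=
    (hf.fderiv_right (m := ((⊤ : ℕ∞) : WithTop ℕ∞)) (by simp)).differentiable (by simp) x
  have h : ∀ a b : E, dirD a (dirD b f) x = fderiv ℝ (fderiv ℝ f) x a b := by
    intro a b
    unfold dirD
    rw [fderiv_clm_apply hd (by fun_prop)]
    simp
  rw [h, h, hs]

lemma dirD_it_smooth (v : E) (k : ℕ) {f : E → ℂ} (hf : ContDiff ℝ (⊤ : ℕ∞) f) :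
    ContDiff ℝ (⊤ : ℕ∞) ((dirD v)^[k] f) := by
  induction k generalizing f with
  | zero => simpa
  | succ k ih => rw [Function.iterate_succ_apply]; exact ih (dirD_smooth v hf)

lemma dirD_it_comm (v w : E) (k : ℕ) {f : E → ℂ} (hf : ContDiff ℝ (⊤ : ℕ∞) f) :
    dirD w ((dirD v)^[k] f) = (dirD v)^[k] (dirD w f) := by
  induction k generalizing f with
  | zero => simp
  | succ k ih =>
    rw [Function.iterate_succ_apply, Function.iterate_succ_apply, ih (dirD_smooth v hf), dirD_comm hf]

lemma fold_smooth {n : ℕ} (v : Fin n → E) (α : Fin n → ℕ) (l : List (Fin n)) {f : E → ℂ}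
    (hf : ContDiff ℝ (⊤ : ℕ∞) f) :
    ContDiff ℝ (⊤ : ℕ∞) (l.foldr (fun i h => (dirD (v i))^[α i] h) f) := by
  induction l with
  | nil => simpa
  | cons i l ih => exact dirD_it_smooth _ _ ih

lemma fold_comm {n : ℕ} (v : Fin n → E) (α : Fin n → ℕ) (l : List (Fin n)) (w : E) {f : E → ℂ}
    (hf : ContDiff ℝ (⊤ : ℕ∞) f) :
    dirD w (l.foldr (fun i h => (dirD (v i))^[α i] h) f) =
      l.foldr (fun i h => (dirD (v i))^[α i] h) (dirD w f) := by
  induction l with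
  | nil => simp
  | cons i l ih =>
    simp only [List.foldr_cons]
    rw [dirD_it_comm _ _ _ (fold_smooth v α l hf), ih]

lemma fold_notMem {n : ℕ} (v : Fin n → E) (α : Fin n → ℕ) (l : List (Fin n)) (j : Fin n) (hj : j ∉ l)
    (f : E → ℂ) :
    l.foldr (fun i h => (dirD (v i))^[(α + Pi.single j 1 : Fin n → ℕ) i] h) f =
      l.foldr (fun i h => (dirD (v i))^[α i] h) f := by
  induction l with
  | nil => simp
  | cons i l ih =>
    simp only [List.foldr_cons]
    simp only [List.mem_cons, not_or] at hj
    rw [ih hj.2]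
    simp [Pi.single_apply, Ne.symm hj.1]

lemma fold_step {n : ℕ} (v : Fin n → E) (α : Fin n → ℕ) (l : List (Fin n)) (hl : l.Nodup) (j : Fin n)
    (hj : j ∈ l) {f : E → ℂ} (hf : ContDiff ℝ (⊤ : ℕ∞) f) :
    dirD (v j) (l.foldr (fun i h => (dirD (v i))^[α i] h) f) =
      l.foldr (fun i h => (dirD (v i))^[(α + Pi.single j 1 : Fin n → ℕ) i] h) f := by
  induction l with
  | nil => simp at hj
  | cons i l ih =>
    rw [List.nodup_cons] at hl
    simp only [List.foldr_cons]
    by_cases hij : j = i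
    · subst hij
      rw [fold_notMem v α l j hl.1]
      simp only [Pi.add_apply, Pi.single_eq_same]
      rw [Function.iterate_succ_apply']
    · have hj' : j ∈ l := by simpa [hij] using hj
      rw [dirD_it_comm _ _ _ (fold_smooth v α l hf), ih hl.2 hj']
      simp [Pi.single_apply, Ne.symm hij]

lemma dirD_comp_clm {F : Type*} [NormedAddCommGroup F] [NormedSpace ℝ F] (L : E →L[ℝ] F) {g : F → ℂ}
    (hg : ContDiff ℝ (⊤ : ℕ∞) g) (w : E) :
    dirD w (fun y => g (L y)) = fun y => dirD (L w) g (L y) := by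
  ext y
  simp only [dirD]
  have h1 : DifferentiableAt ℝ g (L y) := hg.differentiable (by simp) _
  rw [show (fun y => g (L y)) = g ∘ L from rfl, fderiv_comp y h1 L.differentiableAt]
  simp

end comm

lemma degX_add {n : ℕ} (α : Fin n → ℕ) (j : Fin n) : degX (α + Pi.single j 1) = degX α + 1 := by
  simp [degX, Finset.sum_add_distrib]

lemma mem_idxX {n N : ℕ} {α : Fin n → ℕ} (h : degX α ≤ N) : α ∈ idxX n N := by
  simp only [idxX, Finset.mem_filter, Fintype.mem_piFinset, Finset.mem_range, h, and_true]
  intro i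
  have : α i ≤ degX α := Finset.single_le_sum (f := α) (fun _ _ => Nat.zero_le _) (Finset.mem_univ i)
  omega

lemma mderiv1X_step {n : ℕ} (α : Fin n → ℕ) (j : Fin n) {g : X n → ℂ} (hg : ContDiff ℝ (⊤ : ℕ∞) g) :
    dirD (Pi.single j (1:ℝ)) (mderiv1X α g) = mderiv1X (α + Pi.single j 1) g :=
  fold_step (fun i => Pi.single i (1:ℝ)) α _ (List.nodup_finRange n) j (List.mem_finRange j) hg

lemma mderiv1X_smooth {n : ℕ} (α : Fin n → ℕ) {g : X n → ℂ} (hg : ContDiff ℝ (⊤ : ℕ∞) g) :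
    ContDiff ℝ (⊤ : ℕ∞) (mderiv1X α g) := fold_smooth (fun i => Pi.single i (1:ℝ)) α _ hg

lemma mderiv3X_smooth {n : ℕ} (α β γ : Fin n → ℕ) {g : X n × X n × X n → ℂ} (hg : ContDiff ℝ (⊤ : ℕ∞) g) :
    ContDiff ℝ (⊤ : ℕ∞) (mderiv3X α β γ g) :=
  fold_smooth ex α _ (fold_smooth ep β _ (fold_smooth ey γ _ hg))

lemma mderiv3X_stepx {n : ℕ} (α β γ : Fin n → ℕ) (j : Fin n) {g : X n × X n × X n → ℂ} (hg : ContDiff ℝ (⊤ : ℕ∞) g) :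
    dirD (ex j) (mderiv3X α β γ g) = mderiv3X (α + Pi.single j 1) β γ g :=
  fold_step ex α _ (List.nodup_finRange n) j (List.mem_finRange j) (fold_smooth ep β _ (fold_smooth ey γ _ hg))

lemma mderiv3X_stepp {n : ℕ} (α β γ : Fin n → ℕ) (j : Fin n) {g : X n × X n × X n → ℂ} (hg : ContDiff ℝ (⊤ : ℕ∞) g) :
    dirD (ep j) (mderiv3X α β γ g) = mderiv3X α (β + Pi.single j 1) γ g := by
  refine (fold_comm ex α _ (ep j) (fold_smooth ep β _ (fold_smooth ey γ _ hg))).trans ?_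
  rw [fold_step ep β _ (List.nodup_finRange n) j (List.mem_finRange j) (fold_smooth ey γ _ hg)]
  rfl

lemma mderiv3X_stepy {n : ℕ} (α β γ : Fin n → ℕ) (j : Fin n) {g : X n × X n × X n → ℂ} (hg : ContDiff ℝ (⊤ : ℕ∞) g) :
    dirD (ey j) (mderiv3X α β γ g) = mderiv3X α β (γ + Pi.single j 1) g := by
  refine (fold_comm ex α _ (ey j) (fold_smooth ep β _ (fold_smooth ey γ _ hg))).trans ?_
  rw [fold_comm ep β _ (ey j) (fold_smooth ey γ _ hg),
    fold_step ey γ _ (List.nodup_finRange n) j (List.mem_finRange j) hg]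
  rfl

lemma brX_ge_one {n : ℕ} (p : X n) : 1 ≤ brX p := by
  unfold brX; rw [Real.one_le_sqrt]
  have : 0 ≤ ∑ i, p i ^ 2 := Finset.sum_nonneg fun _ _ => sq_nonneg _
  linarith

lemma brX_pos {n : ℕ} (p : X n) : 0 < brX p := lt_of_lt_of_le one_pos (brX_ge_one p)

lemma amp_bound {n : ℕ} {m : ℝ} {a : X n × X n × X n → ℂ} (ha : IsAmp1 m a) {N : ℕ} {α β γ : Fin n → ℕ}
    (h : degX α + degX β + degX γ ≤ N) (z : X n × X n × X n) :
    brX z.2.1 ^ (degX β) * ‖mderiv3X α β γ a z‖ ≤ amp1Norm m N a * brX z.2.1 ^ m := by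
  have hnn : ∀ α β γ : Fin n → ℕ, 0 ≤ if degX α + degX β + degX γ ≤ N then
      ⨆ x : X n × X n × X n, brX x.2.1 ^ (-m + (degX β : ℝ)) * ‖mderiv3X α β γ a x‖
    else 0 := by
    intro α β γ
    split_ifs
    · exact Real.iSup_nonneg fun x => mul_nonneg (Real.rpow_nonneg (brX_pos _).le _) (norm_nonneg _)
    · exact le_rfl
  have h1 : (⨆ x : X n × X n × X n, brX x.2.1 ^ (-m + (degX β : ℝ)) * ‖mderiv3X α β γ a x‖) ≤ amp1Norm m N a := by
    unfold amp1Norm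
    refine le_trans ?_ (Finset.single_le_sum (fun α _ => Finset.sum_nonneg fun β _ => Finset.sum_nonneg fun γ _ => hnn α β γ)
      (mem_idxX (by omega : degX α ≤ N)))
    refine le_trans ?_ (Finset.single_le_sum (fun β _ => Finset.sum_nonneg fun γ _ => hnn α β γ)
      (mem_idxX (by omega : degX β ≤ N)))
    refine le_trans ?_ (Finset.single_le_sum (fun γ _ => hnn α β γ)
      (mem_idxX (by omega : degX γ ≤ N)))
    rw [if_pos h]
  obtain ⟨C, hC⟩ := ha.2 α β γ
  have h2 : brX z.2.1 ^ (-m + (degX β : ℝ)) * ‖mderiv3X α β γ a z‖ ≤ amp1Norm m N a := by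
    refine le_trans ?_ h1
    refine le_ciSup (f := fun x : X n × X n × X n => brX x.2.1 ^ (-m + (degX β : ℝ)) * ‖mderiv3X α β γ a x‖) ⟨C, ?_⟩ z
    rintro _ ⟨x, rfl⟩
    have hp := brX_pos x.2.1
    calc _ ≤ brX x.2.1 ^ (-m + (degX β : ℝ)) * (C * brX x.2.1 ^ (m - (degX β : ℝ))) := by
          exact mul_le_mul_of_nonneg_left (hC x) (Real.rpow_nonneg hp.le _)
      _ = C * (brX x.2.1 ^ (-m + (degX β : ℝ)) * brX x.2.1 ^ (m - (degX β : ℝ))) := by ring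
      _ = C := by rw [← Real.rpow_add hp]; simp
  have hp := brX_pos z.2.1
  calc _ = brX z.2.1 ^ (-m + (degX β : ℝ)) * ‖mderiv3X α β γ a z‖ * brX z.2.1 ^ m := by
        rw [Real.rpow_add hp, Real.rpow_neg hp.le, Real.rpow_natCast]
        have := (Real.rpow_pos_of_pos hp m).ne'
        field_simp
    _ ≤ _ := by gcongr

/-- directions and scales -/
def V3 {n : ℕ} : Fin n ⊕ Fin n ⊕ Fin n → X n × X n × X n := Sum.elim ex (Sum.elim ep ey)
def S3 {n : ℕ} (lam r : ℝ) : Fin n ⊕ Fin n ⊕ Fin n → ℝ :=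
  Sum.elim (fun _ => lam) (Sum.elim (fun _ => r) (fun _ => lam))

def PB3 {n : ℕ} (lam : ℝ) (K : ℕ) (f : X n × X n × X n → ℂ) (z : X n × X n × X n) (M : ℝ) : Prop :=
  PBd V3 (S3 lam (brX z.2.1)) K f z M

lemma SmA.of {E : Type*} [NormedAddCommGroup E] [NormedSpace ℝ E] {f : E → ℂ}
    (hf : ContDiff ℝ (⊤ : ℕ∞) f) (x : E) : SmA f x := hf.contDiffAt

lemma PB3_amp {n : ℕ} {m : ℝ} {a : X n × X n × X n → ℂ} (ha : IsAmp1 m a) {lam : ℝ} (hl : 0 ≤ lam) (hl1 : lam ≤ 1)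
    (N : ℕ) (z : X n × X n × X n) (K : ℕ) : ∀ (α β γ : Fin n → ℕ), degX α + degX β + degX γ + K ≤ N →
    ∀ c : ℝ, |c| ≤ brX z.2.1 ^ degX β →
    PB3 lam K (fun y => (c : ℂ) * mderiv3X α β γ a y) z (amp1Norm m N a * brX z.2.1 ^ m) := by
  have hv : ∀ (α β γ : Fin n → ℕ), degX α + degX β + degX γ ≤ N →
    ∀ c : ℝ, |c| ≤ brX z.2.1 ^ degX β → ‖(c : ℂ) * mderiv3X α β γ a z‖ ≤ amp1Norm m N a * brX z.2.1 ^ m := by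
    intro α β γ h c hc
    refine le_trans ?_ (amp_bound ha h z)
    rw [norm_mul, Complex.norm_real, Real.norm_eq_abs]
    gcongr
  induction K with
  | zero => intro α β γ h c hc
            exact hv α β γ (by omega) c hc
  | succ K ih =>
    intro α β γ h c hc
    have hpos := brX_pos z.2.1
    refine ⟨hv α β γ (by omega) c hc, fun i => ?_⟩
    have hsm := SmA.of (mderiv3X_smooth α β γ ha.1) z
    have key : ∀ α' β' γ' : Fin n → ℕ, degX α' + degX β' + degX γ' + K ≤ N →
        dirD (V3 i) (mderiv3X α β γ a) = mderiv3X α' β' γ' a →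
        |S3 (n := n) lam (brX z.2.1) i * c| ≤ brX z.2.1 ^ degX β' →
        PBd V3 (S3 lam (brX z.2.1)) K (fun y => (S3 (n := n) lam (brX z.2.1) i : ℂ) *
          dirD (V3 i) (fun y => (c : ℂ) * mderiv3X α β γ a y) y) z (amp1Norm m N a * brX z.2.1 ^ m) := by
      intro α' β' γ' h1 h2 h3
      refine PBd_congr ?_ (ih α' β' γ' h1 _ h3)
      filter_upwards [dirD_cmul hsm (c : ℂ) (V3 i)] with y hy
      rw [hy, h2]; push_cast; ring
    have hlc : |lam * c| ≤ brX z.2.1 ^ degX β := by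
      rw [abs_mul, abs_of_nonneg hl]
      calc _ ≤ 1 * |c| := by gcongr
        _ ≤ _ := by rwa [one_mul]
    rcases i with i | i | i
    · exact key (α + Pi.single i 1) β γ (by rw [degX_add]; omega) (mderiv3X_stepx α β γ i ha.1) hlc
    · refine key α (β + Pi.single i 1) γ (by rw [degX_add]; omega) (mderiv3X_stepp α β γ i ha.1) ?_
      simp only [S3, Sum.elim_inr, Sum.elim_inl]
      rw [degX_add, abs_mul, abs_of_pos hpos, pow_succ']
      gcongr
    · exact key α β (γ + Pi.single i 1) (by rw [degX_add]; omega) (mderiv3X_stepy α β γ i ha.1) hlc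

lemma mderiv3X_zero {n : ℕ} (a : X n × X n × X n → ℂ) : mderiv3X 0 0 0 a = a := by
  have : ∀ (v : Fin n → X n × X n × X n) (l : List (Fin n)) (f : X n × X n × X n → ℂ),
      l.foldr (fun i h => (dirD (v i))^[(0 : Fin n → ℕ) i] h) f = f := by
    intro v l f
    induction l with
    | nil => rfl
    | cons i l ih => simp [ih]
  unfold mderiv3X
  rw [this, this, this]

lemma mderiv1X_zero {n : ℕ} (a : X n → ℂ) : mderiv1X 0 a = a := by
  have : ∀ (v : Fin n → X n) (l : List (Fin n)) (f : X n → ℂ),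
      l.foldr (fun i h => (dirD (v i))^[(0 : Fin n → ℕ) i] h) f = f := by
    intro v l f
    induction l with
    | nil => rfl
    | cons i l ih => simp [ih]
  unfold mderiv1X
  rw [this]

lemma PB3_amp0 {n : ℕ} {m : ℝ} {a : X n × X n × X n → ℂ} (ha : IsAmp1 m a) {lam : ℝ} (hl : 0 ≤ lam) (hl1 : lam ≤ 1)
    (N : ℕ) (z : X n × X n × X n) : PB3 lam N a z (amp1Norm m N a * brX z.2.1 ^ m) := by
  have := PB3_amp ha hl hl1 N z N 0 0 0 (by simp [degX]) 1 (by simp [degX])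
  simpa [mderiv3X_zero] using this

lemma ck_bound {n : ℕ} {χ : X n → ℂ} (hχ : ∀ α : Fin n → ℕ, ∃ C₁ : ℝ, ∀ x : X n, ‖mderiv1X α χ x‖ ≤ C₁)
    {N : ℕ} {α : Fin n → ℕ} (h : degX α ≤ N) (x : X n) : ‖mderiv1X α χ x‖ ≤ ckNormX N χ := by
  obtain ⟨C, hC⟩ := hχ α
  have h1 : ‖mderiv1X α χ x‖ ≤ ⨆ q, ‖mderiv1X α χ q‖ :=
    le_ciSup (f := fun q => ‖mderiv1X α χ q‖) ⟨C, by rintro _ ⟨q, rfl⟩; exact hC q⟩ x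
  refine h1.trans ?_
  unfold ckNormX
  exact Finset.single_le_sum (f := fun α => ⨆ q, ‖mderiv1X α χ q‖)
    (fun α _ => Real.iSup_nonneg fun q => norm_nonneg _) (mem_idxX h)

lemma PBd_ck {n : ℕ} {E : Type*} [NormedAddCommGroup E] [NormedSpace ℝ E] {ι : Type*} {v : ι → E} {s : ι → ℝ}
    (L : E →L[ℝ] X n) (hL : ∀ i, L (v i) = 0 ∨ (|s i| ≤ 1 ∧ ∃ j, L (v i) = Pi.single j 1))
    {χ : X n → ℂ} (hs : ContDiff ℝ (⊤ : ℕ∞) χ)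
    (hχ : ∀ α : Fin n → ℕ, ∃ C₁ : ℝ, ∀ x : X n, ‖mderiv1X α χ x‖ ≤ C₁)
    (N : ℕ) (z : E) (K : ℕ) : ∀ (α : Fin n → ℕ), degX α + K ≤ N →
    ∀ c : ℝ, |c| ≤ 1 → PBd v s K (fun y => (c : ℂ) * mderiv1X α χ (L y)) z (ckNormX N χ) := by
  have hv : ∀ (α : Fin n → ℕ), degX α ≤ N → ∀ c : ℝ, |c| ≤ 1 →
      ‖(c : ℂ) * mderiv1X α χ (L z)‖ ≤ ckNormX N χ := by
    intro α h c hc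
    refine le_trans ?_ (ck_bound hχ h (L z))
    rw [norm_mul, Complex.norm_real, Real.norm_eq_abs]
    exact mul_le_of_le_one_left (norm_nonneg _) hc
  induction K with
  | zero => intro α h c hc
            exact hv α (by omega) c hc
  | succ K ih =>
    intro α h c hc
    refine ⟨hv α (by omega) c hc, fun i => ?_⟩
    have hsm : SmA (fun y => mderiv1X α χ (L y)) z := SmA.of ((mderiv1X_smooth α hs).comp L.contDiff) z
    have h0 : 0 ≤ ckNormX N χ := (norm_nonneg _).trans (ck_bound hχ (by omega : degX α ≤ N) (L z))
    rcases hL i with hi | ⟨hsi, j, hj⟩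
    · refine PBd_zero_germ K ?_ h0
      filter_upwards [dirD_cmul hsm (c : ℂ) (v i)] with y hy
      rw [hy, dirD_comp_clm L (mderiv1X_smooth α hs), hi]
      simp [dirD]
    · have hc' : |s i * c| ≤ 1 := by
        rw [abs_mul]; exact mul_le_one₀ hsi (abs_nonneg _) hc
      refine PBd_congr ?_ (ih (α + Pi.single j 1) (by rw [degX_add]; omega) _ hc')
      filter_upwards [dirD_cmul hsm (c : ℂ) (v i)] with y hy
      rw [hy, dirD_comp_clm L (mderiv1X_smooth α hs), hj, mderiv1X_step α j hs]
      push_cast; ring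

lemma PB3_chi1 {n : ℕ} {lam : ℝ} (hl : 0 ≤ lam) (hl1 : lam ≤ 1) {χ : X n → ℂ} (hs : ContDiff ℝ (⊤ : ℕ∞) χ)
    (hχ : ∀ α : Fin n → ℕ, ∃ C₁ : ℝ, ∀ x : X n, ‖mderiv1X α χ x‖ ≤ C₁) (N : ℕ) (z : X n × X n × X n) :
    PB3 lam N (fun y => χ y.1) z (ckNormX N χ) := by
  have := PBd_ck (v := V3) (s := S3 lam (brX z.2.1)) (ContinuousLinearMap.fst ℝ (X n) (X n × X n)) (by
    rintro (i | i | i)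
    · right; exact ⟨by simpa [S3, abs_of_nonneg hl] using hl1, i, by simp [V3, ex]⟩
    · left; simp [V3, ep]
    · left; simp [V3, ey]) hs hχ N z N 0 (by simp [degX]) 1 (by simp)
  simpa [PB3, mderiv1X_zero] using this

lemma PB3_chi2 {n : ℕ} {lam : ℝ} (hl : 0 ≤ lam) (hl1 : lam ≤ 1) {χ : X n → ℂ} (hs : ContDiff ℝ (⊤ : ℕ∞) χ)
    (hχ : ∀ α : Fin n → ℕ, ∃ C₁ : ℝ, ∀ x : X n, ‖mderiv1X α χ x‖ ≤ C₁) (N : ℕ) (z : X n × X n × X n) :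
    PB3 lam N (fun y => χ y.2.2) z (ckNormX N χ) := by
  have := PBd_ck (v := V3) (s := S3 lam (brX z.2.1))
    ((ContinuousLinearMap.snd ℝ (X n) (X n)).comp (ContinuousLinearMap.snd ℝ (X n) (X n × X n))) (by
    rintro (i | i | i)
    · left; simp [V3, ex]
    · left; simp [V3, ep]
    · right; exact ⟨by simpa [S3, abs_of_nonneg hl] using hl1, i, by simp [V3, ey]⟩) hs hχ N z N 0 (by simp [degX]) 1 (by simp)
  simpa [PB3, mderiv1X_zero] using this

end

end

section
open MeasureTheory Finset
open scoped ENNReal Topology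

noncomputable section

lemma tsupport_dirD {E : Type*} [NormedAddCommGroup E] [NormedSpace ℝ E] (f : E → ℂ) (w : E) :
    tsupport (dirD w f) ⊆ tsupport f := tsupport_fderiv_apply_subset ℝ w

lemma zero_germ_of_notMem {E : Type*} [TopologicalSpace E] {f : E → ℂ} {x : E} (h : x ∉ tsupport f) :
    f =ᶠ[𝓝 x] fun _ => 0 := notMem_tsupport_iff_eventuallyEq.1 h

lemma norm_le_brX {n : ℕ} (p : X n) : ‖p‖ ≤ brX p := by
  rw [pi_norm_le_iff_of_nonneg (brX_pos p).le]
  intro i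
  unfold brX
  apply Real.le_sqrt_of_sq_le
  have : p i ^ 2 ≤ ∑ i, p i ^ 2 := Finset.single_le_sum (f := fun i => p i ^ 2) (fun _ _ => sq_nonneg _) (Finset.mem_univ i)
  rw [Real.norm_eq_abs, sq_abs]; linarith


lemma brX_le' {n : ℕ} {p : X n} {r : ℝ} {ε : ℝ} (he : 0 < ε) (he1 : ε ≤ 1) (hp : ‖ε • p‖ ≤ r) :
    brX p * ε ≤ Real.sqrt (1 + n * r ^ 2) := by
  apply Real.le_sqrt_of_sq_le
  rw [mul_pow, brX, Real.sq_sqrt (by have : 0 ≤ ∑ i, p i ^ 2 := Finset.sum_nonneg fun _ _ => sq_nonneg _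
                                     linarith)]
  have h1 : ∑ i, (ε * p i) ^ 2 ≤ n * r ^ 2 := by
    calc _ ≤ ∑ i : Fin n, r ^ 2 := by
          apply Finset.sum_le_sum
          intro i _
          have h2 : ‖(ε • p) i‖ ≤ r := (norm_le_pi_norm _ i).trans hp
          simp only [Pi.smul_apply, smul_eq_mul, Real.norm_eq_abs] at h2
          exact sq_le_sq' (by linarith [neg_abs_le (ε * p i)]) ((le_abs_self _).trans h2)
      _ = _ := by simp
  have h3 : ∑ i, (ε * p i) ^ 2 = ε ^ 2 * ∑ i, p i ^ 2 := by
    rw [Finset.mul_sum]; congr 1; ext i; ring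
  nlinarith

lemma PB3_cut {n : ℕ} (r : ℝ) (K : ℕ) : ∀ ψ : X n → ℂ, ContDiff ℝ (⊤ : ℕ∞) ψ →
    tsupport ψ ⊆ Metric.closedBall 0 r → ∃ C : ℝ, 0 ≤ C ∧ ∀ lam : ℝ, ∀ ε : ℝ, 0 < ε → ε ≤ 1 → ∀ z,
      PB3 lam K (fun y => ψ (ε • y.2.1)) z C := by
  have hv : ∀ ψ : X n → ℂ, ContDiff ℝ (⊤ : ℕ∞) ψ →
    tsupport ψ ⊆ Metric.closedBall 0 r → ∃ C, ∀ x, ‖ψ x‖ ≤ C := by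
    intro ψ h1 h2
    have hc : HasCompactSupport ψ := (isCompact_closedBall 0 r).of_isClosed_subset (isClosed_tsupport _) h2
    exact h1.continuous.bounded_above_of_compact_support hc
  induction K with
  | zero =>
    intro ψ h1 h2
    obtain ⟨C, hC⟩ := hv ψ h1 h2
    exact ⟨C, (norm_nonneg _).trans (hC 0), fun lam ε _ _ z => hC _⟩
  | succ K ih =>
    intro ψ h1 h2
    obtain ⟨C, hC⟩ := hv ψ h1 h2
    have hC0 : 0 ≤ C := (norm_nonneg _).trans (hC 0)
    choose D hD0 hD using fun i : Fin n => ih (dirD (Pi.single i 1) ψ) (dirD_smooth _ h1)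
      ((tsupport_dirD _ _).trans h2)
    set w := Real.sqrt (1 + n * r ^ 2) with hw
    have hw0 : 0 ≤ w := Real.sqrt_nonneg _
    have hS : 0 ≤ ∑ i, w * D i := Finset.sum_nonneg fun i _ => mul_nonneg hw0 (hD0 i)
    refine ⟨C + ∑ i, w * D i, by positivity, ?_⟩
    intro lam ε he he1 z
    by_cases hz : ε • z.2.1 ∈ tsupport ψ
    · have hb : brX z.2.1 * ε ≤ w := brX_le' he he1 (by simpa using h2 hz)
      have hbp := brX_pos z.2.1
      set L : X n × X n × X n →L[ℝ] X n :=
        ε • ((ContinuousLinearMap.fst ℝ (X n) (X n)).comp (ContinuousLinearMap.snd ℝ (X n) (X n × X n))) with hL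
      have hLf : (fun y : X n × X n × X n => ψ (ε • y.2.1)) = fun y => ψ (L y) := by ext y; simp [hL]
      refine ⟨(hC _).trans (by linarith), fun i => ?_⟩
      rw [hLf, dirD_comp_clm L h1]
      rcases i with i | i | i
      · refine PBd_zero_germ K ?_ (by positivity)
        filter_upwards with y
        simp [V3, ex, hL, dirD]
      · have h3 := PBd_cmul (SmA.of (f := fun y : X n × X n × X n => dirD (Pi.single i 1) ψ (L y))
          ((dirD_smooth _ h1).comp L.contDiff) z) ((brX z.2.1 * ε : ℝ) : ℂ) (by
            have := hD i lam ε he he1 z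
            have hLf : (fun y : X n × X n × X n => dirD (Pi.single i 1) ψ (ε • y.2.1)) = fun y => dirD (Pi.single i 1) ψ (L y) := by ext y; simp [hL]
            rwa [hLf] at this)
        refine PBd_mono (PBd_congr ?_ h3) ?_
        · filter_upwards with y
          simp [V3, S3, ep, hL, dirD]; ring
        · rw [Complex.norm_real, Real.norm_of_nonneg (by positivity)]
          have : w * D i ≤ ∑ i, w * D i := Finset.single_le_sum (f := fun i => w * D i)
            (fun i _ => mul_nonneg hw0 (hD0 i)) (Finset.mem_univ i)
          have h5 : brX z.2.1 * ε * D i ≤ w * D i := mul_le_mul_of_nonneg_right hb (hD0 i)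
          linarith
      · refine PBd_zero_germ K ?_ (by positivity)
        filter_upwards with y
        simp [V3, ey, hL, dirD]
    · refine PBd_zero_germ _ ?_ (by positivity)
      have hc : Filter.Tendsto (fun y : X n × X n × X n => ε • y.2.1) (𝓝 z) (𝓝 (ε • z.2.1)) := by
        apply Continuous.tendsto (by fun_prop)
      exact hc.eventually (zero_germ_of_notMem hz)

/-- the distance function -/
def gR {n : ℕ} (σ : ℝ) (z : X n × X n × X n) : ℝ := σ + ∑ i, (z.1 i - z.2.2 i) ^ 2
def gC {n : ℕ} (σ : ℝ) (z : X n × X n × X n) : ℂ := (gR σ z : ℂ)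

/-- coordinate differences -/
def zL {n : ℕ} (i : Fin n) : X n × X n × X n →L[ℝ] ℂ :=
  Complex.ofRealCLM.comp ((ContinuousLinearMap.proj i : X n →L[ℝ] ℝ).comp (ContinuousLinearMap.fst ℝ (X n) (X n × X n) -
    (ContinuousLinearMap.snd ℝ (X n) (X n)).comp (ContinuousLinearMap.snd ℝ (X n) (X n × X n))))

lemma zL_apply {n : ℕ} (i : Fin n) (z : X n × X n × X n) : zL i z = ((z.1 i - z.2.2 i : ℝ) : ℂ) := by
  simp [zL]

lemma gC_eq {n : ℕ} (σ : ℝ) : (gC σ : X n × X n × X n → ℂ) = fun z => (σ : ℂ) + ∑ i ∈ Finset.univ, zL i z * zL i z := by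
  ext z; simp only [gC, gR, zL_apply]; push_cast; simp only [pow_two]

lemma gC_smooth {n : ℕ} (σ : ℝ) : ContDiff ℝ (⊤ : ℕ∞) (gC σ : X n × X n × X n → ℂ) := by
  rw [gC_eq]
  refine contDiff_const.add (ContDiff.sum fun i _ => (zL i).contDiff.mul (zL i).contDiff)

lemma gR_nonneg {n : ℕ} {σ : ℝ} (hσ : 0 ≤ σ) (z : X n × X n × X n) : 0 ≤ gR σ z :=
  add_nonneg hσ (Finset.sum_nonneg fun _ _ => sq_nonneg _)

lemma gC_norm {n : ℕ} {σ : ℝ} (hσ : 0 ≤ σ) (z : X n × X n × X n) : ‖gC σ z‖ = gR σ z := by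
  rw [gC, Complex.norm_real, Real.norm_of_nonneg (gR_nonneg hσ z)]

lemma PB3_g {n : ℕ} (K : ℕ) {σ lam : ℝ} (hσ : 0 ≤ σ) (hl : 0 ≤ lam) {z : X n × X n × X n} (h : lam ^ 2 ≤ gR σ z) :
    PB3 lam K (gC σ) z ((1 + 2 ^ (K + 1) * (1 + n)) * ‖gC σ z‖) := by
  rw [gC_norm hσ]
  have h1 : ∀ i : Fin n, PB3 lam K (fun y => zL i y) z (|z.1 i - z.2.2 i| + lam) := by
    intro i
    refine PBd_clm K (zL i) ?_ ?_
    · rw [zL_apply, Complex.norm_real, Real.norm_eq_abs]; linarith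
    · have h0 := abs_nonneg (z.1 i - z.2.2 i)
      rintro (j | j | j)
      · rw [zL_apply]
        simp only [S3, V3, ex, Sum.elim_inl, abs_of_nonneg hl, Pi.zero_apply, sub_zero, Complex.norm_real, Pi.single_apply]
        split_ifs <;> simp <;> linarith
      · rw [zL_apply]
        simp [V3, ep]; positivity
      · rw [zL_apply]
        simp only [S3, V3, ey, Sum.elim_inr, abs_of_nonneg hl, Pi.zero_apply, zero_sub, Complex.norm_real, Pi.single_apply]
        split_ifs <;> simp <;> linarith
  have h2 := fun i : Fin n => PBd_mul (SmA.clm (zL i) z) (SmA.clm (zL i) z) (h1 i) (h1 i)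
  have h3 := PBd_sum (v := V3) (s := S3 lam (brX z.2.1)) (K := K) Finset.univ
    (fun i _ => (SmA.clm (zL i) z).mul (SmA.clm (zL i) z)) (fun i _ => h2 i)
  have h4 := PBd_add (SmA.const (σ : ℂ) z) (SmA.sum Finset.univ fun i _ => (SmA.clm (zL i) z).mul (SmA.clm (zL i) z))
    (PBd_const K (σ : ℂ) z (M := σ) (by simp [abs_of_nonneg hσ])) h3
  unfold PB3
  rw [gC_eq]
  refine PBd_mono h4 ?_
  have h5 : ∀ i : Fin n, 2 ^ K * (|z.1 i - z.2.2 i| + lam) * (|z.1 i - z.2.2 i| + lam) ≤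
      2 ^ (K + 1) * ((z.1 i - z.2.2 i) ^ 2 + lam ^ 2) := by
    intro i
    rw [← sq_abs (z.1 i - z.2.2 i), pow_succ, mul_assoc, mul_assoc]
    apply mul_le_mul_of_nonneg_left _ (by positivity)
    nlinarith [sq_nonneg (|z.1 i - z.2.2 i| - lam)]
  have h6 := Finset.sum_le_sum fun (i : Fin n) (_ : i ∈ Finset.univ) => h5 i
  rw [← Finset.mul_sum, Finset.sum_add_distrib] at h6
  simp only [Finset.sum_const, Finset.card_univ, Fintype.card_fin, nsmul_eq_mul] at h6
  have h7 : σ ≤ gR σ z := by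
    unfold gR; have : 0 ≤ ∑ i, (z.1 i - z.2.2 i) ^ 2 := Finset.sum_nonneg fun _ _ => sq_nonneg _
    linarith
  have h8 : ∑ i, (z.1 i - z.2.2 i) ^ 2 ≤ gR σ z := by unfold gR; linarith
  calc _ ≤ gR σ z + 2 ^ (K + 1) * (gR σ z + n * gR σ z) := by
        refine add_le_add h7 (h6.trans ?_)
        gcongr
    _ = _ := by ring

/-- `σ - ℏ² Δ_p` -/
def Lp {n : ℕ} (σ ℏ : ℝ) (f : X n × X n × X n → ℂ) : X n × X n × X n → ℂ :=
  fun y => (σ : ℂ) * f y + ∑ i ∈ Finset.univ, (-(ℏ : ℂ) ^ 2) * dirD (ep i) (dirD (ep i) f) y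

lemma Lp_smooth {n : ℕ} (σ ℏ : ℝ) {f : X n × X n × X n → ℂ} (hf : ContDiff ℝ (⊤ : ℕ∞) f) :
    ContDiff ℝ (⊤ : ℕ∞) (Lp σ ℏ f) :=
  (contDiff_const.mul hf).add (ContDiff.sum fun i _ => contDiff_const.mul (dirD_smooth _ (dirD_smooth _ hf)))

lemma Lp_it_smooth {n : ℕ} (σ ℏ : ℝ) (k : ℕ) {f : X n × X n × X n → ℂ} (hf : ContDiff ℝ (⊤ : ℕ∞) f) :
    ContDiff ℝ (⊤ : ℕ∞) ((Lp σ ℏ)^[k] f) := by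
  induction k generalizing f with
  | zero => simpa
  | succ k ih => rw [Function.iterate_succ_apply]; exact ih (Lp_smooth σ ℏ hf)

lemma PB3_ep {n : ℕ} {lam : ℝ} {K : ℕ} {f : X n × X n × X n → ℂ} (hf : ContDiff ℝ (⊤ : ℕ∞) f) {z : X n × X n × X n}
    {M : ℝ} (h : PB3 lam (K + 1) f z M) (i : Fin n) : PB3 lam K (dirD (ep i) f) z ((brX z.2.1)⁻¹ * M) := by
  have hp := brX_pos z.2.1
  have h1 := PBd_cmul (((SmA.of hf z).dirD (ep i)).cmul (brX z.2.1)) (((brX z.2.1)⁻¹ : ℝ) : ℂ) (h.2 (Sum.inr (Sum.inl i)))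
  rw [Complex.norm_real, Real.norm_of_nonneg (by positivity)] at h1
  refine PBd_congr ?_ h1
  filter_upwards with y
  have : (brX z.2.1 : ℂ) ≠ 0 := by exact_mod_cast hp.ne'
  simp [V3, S3]
  field_simp

lemma PB3_Lp {n : ℕ} {σ ℏ lam : ℝ} (hσ : 0 ≤ σ) {K : ℕ} {f : X n × X n × X n → ℂ} (hf : ContDiff ℝ (⊤ : ℕ∞) f) {z : X n × X n × X n}
    {M : ℝ} (h : PB3 lam (K + 2) f z M) : PB3 lam K (Lp σ ℏ f) z ((σ + n * (ℏ / brX z.2.1) ^ 2) * M) := by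
  have hp := brX_pos z.2.1
  have h1 : ∀ i : Fin n, PB3 lam K (fun y => (-(ℏ : ℂ) ^ 2) * dirD (ep i) (dirD (ep i) f) y) z ((ℏ / brX z.2.1) ^ 2 * M) := by
    intro i
    have h2 := PB3_ep (dirD_smooth _ hf) (PB3_ep hf h i) i
    have h3 := PBd_cmul (SmA.of (dirD_smooth _ (dirD_smooth _ hf)) z) (-(ℏ : ℂ) ^ 2) h2
    refine PBd_mono h3 (le_of_eq ?_)
    simp; field_simp
  have hs : ∀ i : Fin n, SmA (fun y => (-(ℏ : ℂ) ^ 2) * dirD (ep i) (dirD (ep i) f) y) z := fun i =>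
    (SmA.of (dirD_smooth _ (dirD_smooth _ hf)) z).cmul _
  have h4 := PBd_add ((SmA.of hf z).cmul σ) (SmA.sum Finset.univ fun i _ => hs i)
    (PBd_cmul (SmA.of hf z) (σ : ℂ) (PBd_le (by omega : K ≤ K + 2) h))
    (PBd_sum (v := V3) (s := S3 lam (brX z.2.1)) (K := K) Finset.univ (fun i _ => hs i) (fun i _ => h1 i))
  refine PBd_mono h4 (le_of_eq ?_)
  simp [abs_of_nonneg hσ]; ring

lemma PB3_Lp_it {n : ℕ} {σ ℏ lam : ℝ} (hσ : 0 ≤ σ) {K : ℕ} (k : ℕ) {f : X n × X n × X n → ℂ} (hf : ContDiff ℝ (⊤ : ℕ∞) f) {z : X n × X n × X n}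
    {M : ℝ} (h : PB3 lam (K + 2 * k) f z M) :
    PB3 lam K ((Lp σ ℏ)^[k] f) z ((σ + n * (ℏ / brX z.2.1) ^ 2) ^ k * M) := by
  induction k generalizing f M with
  | zero => simpa using h
  | succ k ih =>
    rw [Function.iterate_succ_apply]
    have := ih (Lp_smooth σ ℏ hf) (PB3_Lp hσ (K := K + 2 * k) hf h)
    refine PBd_mono this (le_of_eq (by ring))

end

end

section
open MeasureTheory Finset
open scoped ENNReal Topology

noncomputable section

/-- the amplitude after integrating by parts -/
def AA {n : ℕ} (σ ℏ : ℝ) (k : ℕ) (χ₁ χ₂ : X n → ℂ) (f : X n × X n × X n → ℂ) : X n × X n × X n → ℂ :=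
  fun z => χ₁ z.1 * χ₂ z.2.2 * (((gC σ z)⁻¹) ^ k * (Lp σ ℏ)^[k] f z)

section
variable {n : ℕ} {σ ℏ : ℝ} {k : ℕ} {χ₁ χ₂ : X n → ℂ} {f : X n × X n × X n → ℂ} {z : X n × X n × X n}

lemma AA_zero1 (h : z.1 ∉ tsupport χ₁) : AA σ ℏ k χ₁ χ₂ f =ᶠ[𝓝 z] fun _ => 0 := by
  have h1 := (continuous_fst.tendsto z).eventually (zero_germ_of_notMem h)
  filter_upwards [h1] with y hy
  simp [AA, hy]

lemma AA_zero2 (h : z.2.2 ∉ tsupport χ₂) : AA σ ℏ k χ₁ χ₂ f =ᶠ[𝓝 z] fun _ => 0 := by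
  have h1 := ((continuous_snd.comp continuous_snd).tendsto z).eventually (zero_germ_of_notMem h)
  filter_upwards [h1] with y hy
  simp only [Function.comp] at hy
  simp [AA, hy]

lemma Lp_zero (h : f =ᶠ[𝓝 z] fun _ => 0) : Lp σ ℏ f =ᶠ[𝓝 z] fun _ => 0 := by
  have h0 : ∀ w : X n × X n × X n, dirD w (fun _ => (0:ℂ)) = fun _ => 0 := by
    intro w; ext y; simp [dirD]
  have h2 : ∀ i : Fin n, ∀ᶠ y in 𝓝 z, dirD (ep i) (dirD (ep i) f) y = 0 := by
    intro i
    have := dirD_germ (dirD_germ h (ep i)) (ep i)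
    rw [h0, h0] at this
    exact this
  filter_upwards [h, Filter.eventually_all.2 h2] with y hy h2
  simp [_root_.Lp, hy, h2]

lemma Lp_it_zero (h : f =ᶠ[𝓝 z] fun _ => 0) : (Lp σ ℏ)^[k] f =ᶠ[𝓝 z] fun _ => 0 := by
  induction k with
  | zero => simpa using h
  | succ k ih => rw [Function.iterate_succ_apply']; exact Lp_zero ih

lemma AA_zero3 (h : f =ᶠ[𝓝 z] fun _ => 0) : AA σ ℏ k χ₁ χ₂ f =ᶠ[𝓝 z] fun _ => 0 := by
  filter_upwards [Lp_it_zero (σ := σ) (ℏ := ℏ) (k := k) h] with y hy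
  simp [AA, hy]

lemma gC_ne (h : 0 < gR σ z) : gC σ z ≠ 0 := by
  rw [gC]; exact_mod_cast h.ne'

lemma chi1_smooth (h : ContDiff ℝ (⊤ : ℕ∞) χ₁) : ContDiff ℝ (⊤ : ℕ∞) (fun y : X n × X n × X n => χ₁ y.1) :=
  h.comp contDiff_fst
lemma chi2_smooth (h : ContDiff ℝ (⊤ : ℕ∞) χ₁) : ContDiff ℝ (⊤ : ℕ∞) (fun y : X n × X n × X n => χ₁ y.2.2) :=
  h.comp (contDiff_snd.comp contDiff_snd)

lemma AA_SmA (h1 : ContDiff ℝ (⊤ : ℕ∞) χ₁) (h2 : ContDiff ℝ (⊤ : ℕ∞) χ₂) (hf : ContDiff ℝ (⊤ : ℕ∞) f)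
    (h : 0 < gR σ z) : SmA (AA σ ℏ k χ₁ χ₂ f) z :=
  (SmA.of ((chi1_smooth h1).mul (chi2_smooth h2)) z).mul
    ((((SmA.of (gC_smooth σ) z).inv (gC_ne h)).pow k).mul (SmA.of (Lp_it_smooth σ ℏ k hf) z))

lemma AA_smooth (h1 : ContDiff ℝ (⊤ : ℕ∞) χ₁) (h2 : ContDiff ℝ (⊤ : ℕ∞) χ₂) (hf : ContDiff ℝ (⊤ : ℕ∞) f)
    (hg : ∀ z : X n × X n × X n, z.1 ∈ tsupport χ₁ → z.2.2 ∈ tsupport χ₂ → 0 < gR σ z) :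
    ContDiff ℝ (⊤ : ℕ∞) (AA σ ℏ k χ₁ χ₂ f) := by
  rw [contDiff_iff_contDiffAt]
  intro z
  by_cases hz1 : z.1 ∈ tsupport χ₁
  · by_cases hz2 : z.2.2 ∈ tsupport χ₂
    · exact AA_SmA h1 h2 hf (hg z hz1 hz2)
    · exact SmA.congr (SmA.const 0 z) (AA_zero2 hz2).symm
  · exact SmA.congr (SmA.const 0 z) (AA_zero1 hz1).symm
end

lemma AA_bound (n K k NN : ℕ) (hK : K ≤ NN) : ∃ C : ℝ, 0 ≤ C ∧ ∀ (σ ℏ lam : ℝ), 0 ≤ σ → 0 < lam → lam ≤ 1 →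
    ∀ (χ₁ χ₂ : X n → ℂ) (f : X n × X n × X n → ℂ), ContDiff ℝ (⊤ : ℕ∞) χ₁ → ContDiff ℝ (⊤ : ℕ∞) χ₂ →
    (∀ α : Fin n → ℕ, ∃ C₁ : ℝ, ∀ x : X n, ‖mderiv1X α χ₁ x‖ ≤ C₁) →
    (∀ α : Fin n → ℕ, ∃ C₁ : ℝ, ∀ x : X n, ‖mderiv1X α χ₂ x‖ ≤ C₁) → ContDiff ℝ (⊤ : ℕ∞) f →
    ∀ z M, lam ^ 2 ≤ gR σ z → PB3 lam (K + 2 * k) f z M →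
    PB3 lam K (AA σ ℏ k χ₁ χ₂ f) z
      (C * (ckNormX NN χ₁ * ckNormX NN χ₂) * (((gR σ z)⁻¹ * (σ + n * (ℏ / brX z.2.1) ^ 2)) ^ k * M)) := by
  obtain ⟨C, hC, hinv⟩ := PBd_inv K (C := 1 + 2 ^ (K + 1) * (1 + n)) (by positivity)
  refine ⟨2 ^ K * 2 ^ K * 2 ^ K * (2 ^ K * C) ^ k, by positivity, ?_⟩
  intro σ ℏ lam hσ hl hl1 χ₁ χ₂ f h1 h2 hb1 hb2 hf z M hg hM
  have hgp : 0 < gR σ z := lt_of_lt_of_le (by positivity) hg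
  have a1 : PB3 lam K _ z _ := PBd_le hK (PB3_chi1 hl.le hl1 h1 hb1 NN z)
  have a2 : PB3 lam K _ z _ := PBd_le hK (PB3_chi2 hl.le hl1 h2 hb2 NN z)
  have a3 := hinv V3 (S3 lam (brX z.2.1)) (gC σ) z (SmA.of (gC_smooth σ) z) (gC_ne hgp) (PB3_g K hσ hl.le hg)
  rw [gC_norm hσ] at a3
  have s3 := (SmA.of (gC_smooth σ) z).inv (gC_ne hgp)
  have a4 := PBd_pow s3 a3 k
  have a5 := PB3_Lp_it (ℏ := ℏ) hσ k hf hM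
  have s5 := SmA.of (Lp_it_smooth σ ℏ k hf) z
  have a6 := PBd_mul (s3.pow k) s5 a4 a5
  have a7 := PBd_mul (SmA.of (chi1_smooth h1) z) (SmA.of (chi2_smooth h2) z) a1 a2
  have a8 := PBd_mul ((SmA.of (chi1_smooth h1) z).mul (SmA.of (chi2_smooth h2) z)) ((s3.pow k).mul s5) a7 a6
  refine PBd_mono a8 (le_of_eq ?_)
  simp only [mul_pow]
  ring

/-- the full smoothing operator bounds -/
lemma fold_bound {n : ℕ} {lam M : ℝ} {A : X n × X n × X n → ℂ} {z : X n × X n × X n} (hA : SmA A z)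
    (h : PB3 lam (n + n) A z M) (l l' : List (Fin n)) (hl : l.length ≤ n) (hl' : l'.length ≤ n) :
    ‖l'.foldr (fun i h => sm lam (ey i) h) (l.foldr (fun i h => sm lam (ex i) h) A) z‖ ≤ 2 ^ n * (2 ^ n * M) := by
  have hM := PBd_nonneg h
  have h0 : PB3 lam (l'.length + l.length) A z M := PBd_le (by omega) h
  have h1 := PBd_smfold (v := V3) (s := S3 lam (brX z.2.1)) (fun i : Fin n => Sum.inl i) (lam := lam) (fun i => rfl) hA l h0
  have h2 := PBd_smfold (v := V3) (s := S3 lam (brX z.2.1)) (K := 0) (fun i : Fin n => Sum.inr (Sum.inr i)) (lam := lam) (fun i => rfl) h1.2 l'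
    (by simpa using h1.1)
  refine (PBd_val h2.1).trans ?_
  gcongr <;> norm_num

lemma fold_zero {n : ℕ} {lam : ℝ} {A : X n × X n × X n → ℂ} {z : X n × X n × X n}
    (h : A =ᶠ[𝓝 z] fun _ => 0) (l l' : List (Fin n)) :
    l'.foldr (fun i h => sm lam (ey i) h) (l.foldr (fun i h => sm lam (ex i) h) A) z = 0 := by
  obtain ⟨U, hU, hUo, hz⟩ := eventually_nhds_iff.1 h
  exact smfold_zero_on hUo lam ey (smfold_zero_on hUo lam ex hU l) l' z hz

end

end

section
open MeasureTheory Finset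
open scoped ENNReal Topology

noncomputable section

/-- support in the momentum variable -/
def SuppP {n : ℕ} (ρ : ℝ) (f : X n × X n × X n → ℂ) : Prop := ∀ x p y, ρ < ‖p‖ → f (x, p, y) = 0

lemma SuppP.dirD {n : ℕ} {ρ : ℝ} {f : X n × X n × X n → ℂ} (h : SuppP ρ f) (w : X n × X n × X n) :
    SuppP ρ (dirD w f) := by
  intro x p y hp
  have hU : IsOpen {z : X n × X n × X n | ρ < ‖z.2.1‖} := isOpen_lt continuous_const (by fun_prop)
  exact dirD_zero_on hU (fun z hz => h z.1 z.2.1 z.2.2 hz) w (x, p, y) hp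

lemma SuppP.Lp {n : ℕ} {ρ : ℝ} {f : X n × X n × X n → ℂ} (h : SuppP ρ f) (σ ℏ : ℝ) :
    SuppP ρ (Lp σ ℏ f) := by
  intro x p y hp
  simp only [_root_.Lp]
  rw [h x p y hp]
  simp only [(((h.dirD _).dirD _) x p y hp)]
  simp

lemma SuppP.Lp_it {n : ℕ} {ρ : ℝ} {f : X n × X n × X n → ℂ} (h : SuppP ρ f) (σ ℏ : ℝ) (k : ℕ) :
    SuppP ρ ((_root_.Lp σ ℏ)^[k] f) := by
  induction k with
  | zero => simpa using h
  | succ k ih => rw [Function.iterate_succ_apply']; exact ih.Lp σ ℏ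

lemma SuppP.int {n : ℕ} {ρ : ℝ} {f : X n × X n × X n → ℂ} (h : SuppP ρ f) (hf : Continuous f)
    (ℏ : ℝ) (x y w : X n) : Integrable (fun p => f (x, p, y) * ph ℏ p w) := by
  apply Continuous.integrable_of_hasCompactSupport
  · exact (hf.comp (by fun_prop)).mul (ph_comp_cont ℏ continuous_id continuous_const)
  · refine HasCompactSupport.intro (isCompact_closedBall (0 : X n) ρ) ?_
    intro p hp
    rw [h x p y (by simpa using hp), zero_mul]

lemma slice_fderiv {n : ℕ} {f : X n × X n × X n → ℂ} (hf : ContDiff ℝ (⊤ : ℕ∞) f) (x p y : X n) (i : Fin n) :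
    fderiv ℝ (fun p => f (x, p, y)) p (Pi.single i 1) = dirD (ep i) f (x, p, y) := by
  have h1 : HasFDerivAt f (fderiv ℝ f (x, p, y)) (x, p, y) := (hf.differentiable (by simp) _).hasFDerivAt
  have h2 : HasFDerivAt (fun p : X n => (x, p, y)) ((0 : X n →L[ℝ] X n).prod ((ContinuousLinearMap.id ℝ (X n)).prod 0)) p :=
    (hasFDerivAt_const x p).prodMk ((hasFDerivAt_id p).prodMk (hasFDerivAt_const y p))
  have h3 := HasFDerivAt.comp (f := fun p : X n => (x, p, y)) p h1 h2
  have h4 : fderiv ℝ (fun p => f (x, p, y)) p = _ := h3.fderiv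
  rw [h4]; simp [dirD, ep]

lemma ph_hasFDeriv {n : ℕ} (ℏ : ℝ) (p w : X n) :
    HasFDerivAt (fun p => ph ℏ p w) (ph ℏ p w • (Complex.I * ℏ⁻¹ : ℂ) • Complex.ofRealCLM.comp
      (∑ i, (w i) • (ContinuousLinearMap.proj i : X n →L[ℝ] ℝ))) p := by
  have h0 := (Complex.ofRealCLM.comp (∑ i, (w i) • (ContinuousLinearMap.proj i : X n →L[ℝ] ℝ))).hasFDerivAt (x := p)
  have h1 := (h0.const_smul (Complex.I * ℏ⁻¹ : ℂ)).cexp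
  have e : ∀ q : X n, ((Complex.I * ((ℏ⁻¹ : ℝ) : ℂ)) • ⇑(Complex.ofRealCLM.comp (∑ i, (w i) • (ContinuousLinearMap.proj i : X n →L[ℝ] ℝ)))) q
      = Complex.I * (ℏ⁻¹ * ∑ i, q i * w i : ℝ) := by
    intro q
    simp [mul_comm, mul_assoc]
  simp only [e, ← ph_eq] at h1
  exact h1

lemma ph_fderiv {n : ℕ} (ℏ : ℝ) (p w : X n) (i : Fin n) :
    fderiv ℝ (fun p => ph ℏ p w) p (Pi.single i 1) = (Complex.I * (w i) / ℏ) * ph ℏ p w := by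
  rw [(ph_hasFDeriv ℏ p w).fderiv]
  simp [Pi.single_apply]
  ring

lemma ibp1 {n : ℕ} {ρ : ℝ} {f : X n × X n × X n → ℂ} (h : SuppP ρ f) (hf : ContDiff ℝ (⊤ : ℕ∞) f)
    (ℏ : ℝ) (x y w : X n) (i : Fin n) :
    ∫ p, dirD (ep i) f (x, p, y) * ph ℏ p w = -(Complex.I * (w i) / ℏ) * ∫ p, f (x, p, y) * ph ℏ p w := by
  have h1 := integral_mul_fderiv_eq_neg_fderiv_mul_of_integrable (μ := volume) (f := fun p => f (x, p, y))
    (g := fun p => ph ℏ p w) (v := Pi.single i 1) (by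
      simp only [slice_fderiv hf]; exact (h.dirD (ep i)).int (dirD_smooth _ hf).continuous ℏ x y w) (by
      simp only [ph_fderiv]
      have := (h.int hf.continuous ℏ x y w).const_mul (Complex.I * (w i) / ℏ)
      refine this.congr (Filter.Eventually.of_forall fun p => ?_)
      simp only []; ring) (h.int hf.continuous ℏ x y w)
    (fun p _ => by
      have : Differentiable ℝ f := hf.differentiable (by simp)
      exact DifferentiableAt.comp (f := fun p : X n => (x, p, y)) p (this _) (by fun_prop))
    (fun p _ => (ph_hasFDeriv ℏ p w).differentiableAt)
  simp only [slice_fderiv hf, ph_fderiv] at h1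
  rw [neg_mul, ← integral_const_mul, ← neg_eq_iff_eq_neg, ← h1]
  congr 1; ext p; ring

lemma ibpL {n : ℕ} {ρ : ℝ} {f : X n × X n × X n → ℂ} (h : SuppP ρ f) (hf : ContDiff ℝ (⊤ : ℕ∞) f)
    {ℏ : ℝ} (hh : 0 < ℏ) (σ : ℝ) (x y : X n) :
    ∫ p, _root_.Lp σ ℏ f (x, p, y) * ph ℏ p (x - y) = gC σ (x, 0, y) * ∫ p, f (x, p, y) * ph ℏ p (x - y) := by
  have hi : ∀ i : Fin n, Integrable (fun p => dirD (ep i) (dirD (ep i) f) (x, p, y) * ph ℏ p (x - y)) := fun i =>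
    ((h.dirD _).dirD _).int (dirD_smooth _ (dirD_smooth _ hf)).continuous ℏ x y _
  have e : ∀ p, _root_.Lp σ ℏ f (x, p, y) * ph ℏ p (x - y) = (σ : ℂ) * (f (x, p, y) * ph ℏ p (x - y)) +
      ∑ i, (-(ℏ : ℂ) ^ 2) * (dirD (ep i) (dirD (ep i) f) (x, p, y) * ph ℏ p (x - y)) := by
    intro p
    simp only [_root_.Lp, add_mul, Finset.sum_mul]
    simp only [mul_assoc]
  simp only [e]
  rw [integral_add ((h.int hf.continuous ℏ x y _).const_mul _) (integrable_finsetSum _ fun i _ => (hi i).const_mul _),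
    integral_finsetSum _ (fun i _ => (hi i).const_mul _)]
  simp only [integral_const_mul]
  simp only [ibp1 (h.dirD _) (dirD_smooth _ hf), ibp1 h hf]
  simp only [gC, gR]
  push_cast
  rw [add_mul, Finset.sum_mul]
  congr 1
  refine Finset.sum_congr rfl fun i _ => ?_
  have : (ℏ : ℂ) ≠ 0 := by exact_mod_cast hh.ne'
  simp only [Pi.sub_apply]
  push_cast
  have hI := Complex.I_sq
  field_simp
  linear_combination (-(↑(x i) - ↑(y i)) ^ 2 * (∫ p, f (x, p, y) * ph ℏ p (x - y))) * hI

lemma ibpLk {n : ℕ} {ρ : ℝ} {f : X n × X n × X n → ℂ} (h : SuppP ρ f) (hf : ContDiff ℝ (⊤ : ℕ∞) f)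
    {ℏ : ℝ} (hh : 0 < ℏ) (σ : ℝ) (k : ℕ) (x y : X n) :
    ∫ p, (_root_.Lp σ ℏ)^[k] f (x, p, y) * ph ℏ p (x - y) = gC σ (x, 0, y) ^ k * ∫ p, f (x, p, y) * ph ℏ p (x - y) := by
  induction k with
  | zero => simp
  | succ k ih =>
    rw [Function.iterate_succ_apply', ibpL (h.Lp_it σ ℏ k) (Lp_it_smooth σ ℏ k hf) hh, ih]; ring

lemma ibp_main {n : ℕ} {ρ M M' : ℝ} {f : X n × X n × X n → ℂ} (h : SuppP ρ f) (hf : ContDiff ℝ (⊤ : ℕ∞) f)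
    (hfb : ∀ z, ‖f z‖ ≤ M) {ℏ : ℝ} (hh : 0 < ℏ) (σ : ℝ) (k : ℕ) {χ₁ χ₂ : X n → ℂ}
    (h2 : ContDiff ℝ (⊤ : ℕ∞) χ₂)
    (hg : ∀ z : X n × X n × X n, z.1 ∈ tsupport χ₁ → z.2.2 ∈ tsupport χ₂ → 0 < gR σ z)
    (hAc : Continuous (AA σ ℏ k χ₁ χ₂ f)) (hAb : ∀ z, ‖AA σ ℏ k χ₁ χ₂ f z‖ ≤ M')
    {u : X n → ℂ} (huc : Continuous u) (hus : HasCompactSupport u) (x : X n) :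
    χ₁ x * ∫ p, ∫ y, f (x, p, y) * ph ℏ p (x - y) * (χ₂ y * u y) =
      ∫ p, ∫ y, AA σ ℏ k χ₁ χ₂ f (x, p, y) * ph ℏ p (x - y) * u y := by
  have hu := huc.integrable_of_hasCompactSupport (μ := volume) hus
  have hvc : Continuous fun y => χ₂ y * u y := h2.continuous.mul huc
  have hv := hvc.integrable_of_hasCompactSupport (μ := volume) hus.mul_left
  have hAs : SuppP ρ (AA σ ℏ k χ₁ χ₂ f) := by
    intro x p y hp
    simp [AA, h.Lp_it σ ℏ k x p y hp]
  have w1 := integral_integral_swap (f := fun p y => f (x, p, y) * ph ℏ p (x - y) * (χ₂ y * u y)) (TB_int ℏ hf.continuous hfb h hvc hv x x)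
  have w2 := integral_integral_swap (f := fun p y => AA σ ℏ k χ₁ χ₂ f (x, p, y) * ph ℏ p (x - y) * u y) (TB_int ℏ hAc hAb hAs huc hu x x)
  rw [w1, w2, ← integral_const_mul]
  congr 1; ext y
  rw [integral_mul_const, integral_mul_const]
  have e : ∀ p, AA σ ℏ k χ₁ χ₂ f (x, p, y) * ph ℏ p (x - y) = (χ₁ x * χ₂ y * (gC σ (x, 0, y))⁻¹ ^ k) *
      ((_root_.Lp σ ℏ)^[k] f (x, p, y) * ph ℏ p (x - y)) := by
    intro p
    have : gC σ (x, p, y) = gC σ (x, 0, y) := rfl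
    simp only [AA, this]; ring
  simp only [e]
  rw [integral_const_mul, ibpLk h hf hh]
  by_cases hc1 : χ₁ x = 0
  · simp [hc1]
  by_cases hc2 : χ₂ y = 0
  · simp [hc2]
  have := gC_ne (hg (x, 0, y) (subset_tsupport _ hc1) (subset_tsupport _ hc2))
  have e2 : (gC σ (x, 0, y))⁻¹ ^ k * gC σ (x, 0, y) ^ k = 1 := by
    rw [← mul_pow, inv_mul_cancel₀ this, one_pow]
  linear_combination (-(χ₁ x * χ₂ y * u y * ∫ p, f (x, p, y) * ph ℏ p (x - y))) * e2

end

end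

section
open MeasureTheory Finset
open scoped ENNReal Topology

noncomputable section

lemma omega_int (n : ℕ) : ∃ W : ℝ, 0 ≤ W ∧ ∀ lam c : ℝ, 0 < lam → 0 ≤ c →
    ∫⁻ z : X n, ENNReal.ofReal (c * ((1 + ‖z‖ / lam) ^ (n + 1))⁻¹) = ENNReal.ofReal (c * (lam ^ n * W)) := by
  have hi : Integrable (fun z : X n => ((1 + ‖z‖) ^ (n + 1))⁻¹) := by
    have := integrable_one_add_norm (E := X n) (μ := volume) (r := (n + 1 : ℝ)) (by simp)
    refine this.congr (Filter.Eventually.of_forall fun z => ?_)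
    simp only []
    rw [Real.rpow_neg (by positivity)]
    congr 1
    exact_mod_cast Real.rpow_natCast (1 + ‖z‖) (n + 1)
  refine ⟨∫ z : X n, ((1 + ‖z‖) ^ (n + 1))⁻¹, integral_nonneg fun z => by positivity, ?_⟩
  intro lam c hl hc
  have e : ∀ z : X n, ((1 + ‖z‖ / lam) ^ (n + 1))⁻¹ = ((1 + ‖lam⁻¹ • z‖) ^ (n + 1))⁻¹ := by
    intro z
    rw [norm_smul, Real.norm_of_nonneg (by positivity), div_eq_inv_mul]
  have h1 := Measure.integral_comp_inv_smul_of_nonneg (volume : Measure (X n)) (fun z : X n => ((1 + ‖z‖) ^ (n + 1))⁻¹) hl.le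
  have h2 : Integrable (fun z : X n => ((1 + ‖lam⁻¹ • z‖) ^ (n + 1))⁻¹) := hi.comp_smul (inv_ne_zero hl.ne')
  simp only [e]
  rw [← ofReal_integral_eq_lintegral_ofReal (h2.const_mul c) (Filter.Eventually.of_forall fun z => by positivity),
    integral_const_mul, h1]
  simp

/-- core operator estimate -/
theorem core (n k NN : ℕ) (hNN : n + n ≤ NN) : ∃ C : ℝ, 0 ≤ C ∧ ∀ (ℏ lam σ : ℝ), 0 < ℏ → 0 < lam → lam ≤ 1 → 0 ≤ σ →
    ∀ (χ₁ χ₂ : X n → ℂ), ContDiff ℝ (⊤ : ℕ∞) χ₁ → ContDiff ℝ (⊤ : ℕ∞) χ₂ →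
    (∀ α : Fin n → ℕ, ∃ C₁ : ℝ, ∀ x : X n, ‖mderiv1X α χ₁ x‖ ≤ C₁) →
    (∀ α : Fin n → ℕ, ∃ C₁ : ℝ, ∀ x : X n, ‖mderiv1X α χ₂ x‖ ≤ C₁) →
    (∀ z : X n × X n × X n, z.1 ∈ tsupport χ₁ → z.2.2 ∈ tsupport χ₂ → 0 < gR σ z) →
    ∀ (f : X n × X n × X n → ℂ) (ρ M Bd : ℝ), ContDiff ℝ (⊤ : ℕ∞) f → SuppP ρ f → (∀ z, ‖f z‖ ≤ M) → 0 ≤ Bd →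
    (∀ z : X n × X n × X n, z.1 ∈ tsupport χ₁ → z.2.2 ∈ tsupport χ₂ → z ∈ tsupport f →
      lam ^ 2 ≤ gR σ z ∧ ∃ M, PB3 lam (n + n + 2 * k) f z M ∧
        ((gR σ z)⁻¹ * (σ + n * (ℏ / brX z.2.1) ^ 2)) ^ k * M ≤ Bd * ((1 + ‖z.1 - z.2.2‖ / lam) ^ (n + 1))⁻¹) →
    ∀ u : X n → ℂ, Continuous u → HasCompactSupport u →
    ∫⁻ x, ‖χ₁ x * ∫ p, ∫ y, f (x, p, y) * ph ℏ p (x - y) * (χ₂ y * u y)‖ₑ ^ 2 ≤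
      ENNReal.ofReal ((2 * Real.pi * ℏ) ^ n) ^ 2 *
        ENNReal.ofReal (C * (ckNormX NN χ₁ * ckNormX NN χ₂) * Bd) ^ 2 * ∫⁻ y, ‖u y‖ₑ ^ 2 := by
  obtain ⟨C, hC, hAA⟩ := AA_bound n (n + n) k NN hNN
  obtain ⟨W, hW, hom⟩ := omega_int n
  refine ⟨2 ^ n * (2 ^ n * C) * W, by positivity, ?_⟩
  intro ℏ lam σ hh hl hl1 hσ χ₁ χ₂ h1 h2 hb1 hb2 hg f ρ M Bd hf hfs hfb hBd hbd u huc hus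
  have hu := huc.integrable_of_hasCompactSupport (μ := volume) hus
  have hck : ∀ {χ : X n → ℂ}, (∀ α : Fin n → ℕ, ∃ C₁ : ℝ, ∀ x : X n, ‖mderiv1X α χ x‖ ≤ C₁) → 0 ≤ ckNormX NN χ :=
    fun h => (norm_nonneg _).trans (ck_bound h (α := 0) (by simp [degX]) 0)
  set c := ckNormX NN χ₁ * ckNormX NN χ₂ with hc
  have hc0 : 0 ≤ c := mul_nonneg (hck hb1) (hck hb2)
  set A := AA σ ℏ k χ₁ χ₂ f with hA
  have hAsm : ContDiff ℝ (⊤ : ℕ∞) A := AA_smooth h1 h2 hf hg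
  have hAs : SuppP ρ A := by
    intro x p y hp
    simp [hA, AA, hfs.Lp_it σ ℏ k x p y hp]
  have hfold : ∀ z : X n × X n × X n, ∀ l l' : List (Fin n), l.length ≤ n → l'.length ≤ n →
      ‖l'.foldr (fun i h => sm lam (ey i) h) (l.foldr (fun i h => sm lam (ex i) h) A) z‖ ≤
        2 ^ n * (2 ^ n * (C * c * Bd)) * ((1 + ‖z.1 - z.2.2‖ / lam) ^ (n + 1))⁻¹ := by
    intro z l l' hll hll'
    have hz : A =ᶠ[𝓝 z] (fun _ => 0) → ‖l'.foldr (fun i h => sm lam (ey i) h) (l.foldr (fun i h => sm lam (ex i) h) A) z‖ ≤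
        2 ^ n * (2 ^ n * (C * c * Bd)) * ((1 + ‖z.1 - z.2.2‖ / lam) ^ (n + 1))⁻¹ := by
      intro h
      rw [fold_zero h, norm_zero]; positivity
    by_cases hz1 : z.1 ∈ tsupport χ₁
    swap
    · exact hz (AA_zero1 hz1)
    by_cases hz2 : z.2.2 ∈ tsupport χ₂
    swap
    · exact hz (AA_zero2 hz2)
    by_cases hz3 : z ∈ tsupport f
    swap
    · exact hz (AA_zero3 (zero_germ_of_notMem hz3))
    obtain ⟨hlg, M, hM, hMB⟩ := hbd z hz1 hz2 hz3
    have h3 := hAA σ ℏ lam hσ hl hl1 χ₁ χ₂ f h1 h2 hb1 hb2 hf z M hlg hM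
    refine (fold_bound (SmA.of hAsm z) h3 l l' hll hll').trans ?_
    calc _ ≤ 2 ^ n * (2 ^ n * (C * c * (Bd * ((1 + ‖z.1 - z.2.2‖ / lam) ^ (n + 1))⁻¹))) := by gcongr
      _ = _ := by ring
  set c' := 2 ^ n * (2 ^ n * (C * c * Bd)) with hc'
  have hc'0 : 0 ≤ c' := by positivity
  have hfold' : ∀ z : X n × X n × X n, ∀ l l' : List (Fin n), l.length ≤ n → l'.length ≤ n →
      ‖l'.foldr (fun i h => sm lam (ey i) h) (l.foldr (fun i h => sm lam (ex i) h) A) z‖ ≤ c' := by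
    intro z l l' hll hll'
    refine (hfold z l l' hll hll').trans (mul_le_of_le_one_right hc'0 ?_)
    apply inv_le_one_of_one_le₀
    apply one_le_pow₀
    have : 0 ≤ ‖z.1 - z.2.2‖ / lam := by positivity
    linarith
  have hlen : ∀ l : List (Fin n), l <:+ List.finRange n → l.length ≤ n := by
    intro l h; simpa using h.length_le
  have hAb : ∀ z, ‖A z‖ ≤ c' := fun z => hfold' z [] [] (by simp) (by simp)
  have key := cv_main hh hl (M := c') hAsm hAs (fun l hl x => hfold' x l [] (hlen l hl) (by simp))
    (fun l hl x => hfold' x _ l (by simp) (hlen l hl))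
    (ω := fun w => c' * ((1 + ‖w‖ / lam) ^ (n + 1))⁻¹) (by fun_prop)
    (fun s p t => hfold (s, p, t) _ _ (by simp) (by simp)) huc hu
  rw [hom lam c' hl hc'0] at key
  simp only [ibp_main hfs hf hfb hh σ k h2 hg hAsm.continuous hAb huc hus]
  refine key.trans (le_of_eq ?_)
  rw [mul_assoc (ENNReal.ofReal ((2 * Real.pi * ℏ) ^ n) ^ 2), ← mul_pow (ENNReal.ofReal (lam⁻¹ ^ n)),
    ← ENNReal.ofReal_mul (by positivity)]
  congr 4
  rw [inv_pow, hc']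
  field_simp

end

end

section
open MeasureTheory Finset
open scoped ENNReal Topology

noncomputable section

lemma rm_le {m : ℝ} {N : ℕ} (hN : m ≤ (N : ℝ)) {r : ℝ} (hr : 1 ≤ r) : r ^ m ≤ r ^ N := by
  rw [← Real.rpow_natCast]; exact Real.rpow_le_rpow_of_exponent_le hr hN

lemma high_scal (n : ℕ) {m : ℝ} {N : ℕ} (hN : m ≤ (N : ℝ)) {r lam δ ℏ w g : ℝ} (hr : 1 ≤ r) (hl : 0 < lam)
    (hld : lam ≤ δ) (hdw : δ ≤ w) (hh : 0 < ℏ) (hlr : ℏ ≤ lam * r) (hg : w ^ 2 ≤ g) :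
    (g⁻¹ * (0 + n * (ℏ / r) ^ 2)) ^ (N + n + 1) * r ^ m ≤
      n ^ (N + n + 1) * 2 ^ (n + 1) * (ℏ / δ) ^ N * ((1 + w / lam) ^ (n + 1))⁻¹ := by
  have hr0 : 0 < r := by linarith
  have hd : 0 < δ := by linarith
  have hw : 0 < w := by linarith
  have hg0 : 0 < g := lt_of_lt_of_le (by positivity) hg
  set t := ℏ / (r * w) with ht
  set s := lam / w with hs
  have ht0 : 0 ≤ t := by positivity
  have hs0 : 0 < s := by positivity
  have hs1 : s ≤ 1 := by rw [hs, div_le_one hw]; linarith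
  have hts : t ≤ s := by
    rw [ht, hs, div_le_div_iff₀ (by positivity) hw]
    nlinarith
  have htd : t * r ≤ ℏ / δ := by
    have : t * r = ℏ / w := by rw [ht]; field_simp
    rw [this]; gcongr
  have h1 : g⁻¹ * (0 + n * (ℏ / r) ^ 2) ≤ n * t ^ 2 := by
    have : g⁻¹ ≤ (w ^ 2)⁻¹ := by gcongr
    calc _ ≤ (w ^ 2)⁻¹ * (0 + n * (ℏ / r) ^ 2) := by gcongr
      _ = n * t ^ 2 := by rw [ht, zero_add, div_pow, div_pow, mul_pow]; field_simp
  have hsw : s ≤ 2 * (1 + w / lam)⁻¹ := by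
    have e : w / lam = 1 / s := by rw [hs]; field_simp
    rw [e, ← div_eq_mul_inv, le_div_iff₀ (by positivity)]
    rw [mul_add, mul_one_div_cancel hs0.ne']; linarith
  calc _ ≤ (n * t ^ 2) ^ (N + n + 1) * r ^ N := by
        gcongr
        exact rm_le hN hr
    _ = n ^ (N + n + 1) * t ^ (N + n + 1) * ((t * r) ^ N * t ^ (n + 1)) := by ring
    _ ≤ n ^ (N + n + 1) * 1 * ((ℏ / δ) ^ N * (2 * (1 + w / lam)⁻¹) ^ (n + 1)) := by
        have : t ^ (N + n + 1) ≤ 1 := pow_le_one₀ ht0 (hts.trans hs1)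
        have : t ≤ 2 * (1 + w / lam)⁻¹ := hts.trans hsw
        gcongr
    _ = _ := by rw [mul_pow, inv_pow]; ring

lemma low_scal (n : ℕ) {m : ℝ} {N : ℕ} (hN : m ≤ (N : ℝ)) {r δ ℏ w g κ : ℝ} (hr : 1 ≤ r) (hd : 0 < δ)
    (hw : 0 ≤ w) (hh : 0 < ℏ) (hκ : r ≤ κ * (ℏ / δ)) (hg : ℏ ^ 2 + w ^ 2 ≤ g) :
    (g⁻¹ * (ℏ ^ 2 + n * (ℏ / r) ^ 2)) ^ (N + n + 1) * r ^ m ≤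
      (1 + n) ^ (N + n + 1) * 2 ^ (n + 1) * κ ^ N * (ℏ / δ) ^ N * ((1 + w / ℏ) ^ (n + 1))⁻¹ := by
  have hr0 : 0 < r := by linarith
  have hg0 : 0 < g := lt_of_lt_of_le (by positivity) hg
  set s := g⁻¹ * ℏ ^ 2 with hs
  have hs0 : 0 ≤ s := by positivity
  have hs1 : s ≤ 1 := by
    rw [hs, ← div_eq_inv_mul, div_le_one hg0]; nlinarith
  have h1 : g⁻¹ * (ℏ ^ 2 + n * (ℏ / r) ^ 2) ≤ (1 + n) * s := by
    have : ℏ / r ≤ ℏ := div_le_self hh.le hr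
    calc _ ≤ g⁻¹ * (ℏ ^ 2 + n * ℏ ^ 2) := by gcongr
      _ = _ := by rw [hs]; ring
  have hq : 0 ≤ w / ℏ := by positivity
  have hsw : s ≤ 2 * (1 + w / ℏ)⁻¹ := by
    have h2 : s ≤ (1 + (w / ℏ) ^ 2)⁻¹ := by
      have : g⁻¹ ≤ (ℏ ^ 2 + w ^ 2)⁻¹ := by gcongr
      calc s ≤ (ℏ ^ 2 + w ^ 2)⁻¹ * ℏ ^ 2 := by rw [hs]; gcongr
        _ = _ := by field_simp
    refine h2.trans ?_
    rw [← div_eq_mul_inv, inv_eq_one_div, div_le_div_iff₀ (by positivity) (by positivity)]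
    nlinarith [sq_nonneg (w / ℏ - 1)]
  have hrN : r ^ m ≤ (κ * (ℏ / δ)) ^ N := (rm_le hN hr).trans (by gcongr)
  calc _ ≤ ((1 + n) * s) ^ (N + n + 1) * (κ * (ℏ / δ)) ^ N := by
        gcongr
    _ = (1 + n) ^ (N + n + 1) * s ^ N * (s ^ (n + 1) * (κ * (ℏ / δ)) ^ N) := by rw [mul_pow (1 + (n : ℝ)) s]; ring
    _ ≤ (1 + n) ^ (N + n + 1) * 1 * ((2 * (1 + w / ℏ)⁻¹) ^ (n + 1) * (κ * (ℏ / δ)) ^ N) := by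
        have : s ^ N ≤ 1 := pow_le_one₀ hs0 hs1
        have hk : 0 ≤ κ * (ℏ / δ) := hr0.le.trans hκ
        gcongr
    _ = _ := by simp only [mul_pow, inv_pow]; ring

lemma gR_ge {n : ℕ} (σ : ℝ) (z : X n × X n × X n) : σ + ‖z.1 - z.2.2‖ ^ 2 ≤ gR σ z := by
  unfold gR
  have h0 : 0 ≤ ∑ i, (z.1 i - z.2.2 i) ^ 2 := Finset.sum_nonneg fun _ _ => sq_nonneg _
  have : ‖z.1 - z.2.2‖ ≤ Real.sqrt (∑ i, (z.1 i - z.2.2 i) ^ 2) := by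
    rw [pi_norm_le_iff_of_nonneg (Real.sqrt_nonneg _)]
    intro i
    apply Real.le_sqrt_of_sq_le
    rw [Real.norm_eq_abs, sq_abs]
    exact Finset.single_le_sum (f := fun i => (z.1 i - z.2.2 i) ^ 2) (fun _ _ => sq_nonneg _) (Finset.mem_univ i)
  have h2 := pow_le_pow_left₀ (norm_nonneg _) this 2
  rw [Real.sq_sqrt h0] at h2
  linarith

theorem mid (n : ℕ) (m : ℝ) (N : ℕ) (hN : m ≤ (N : ℝ)) (k NN NA : ℕ) (hNN : n + n ≤ NN) (hNA : n + n + 2 * k ≤ NA) :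
    ∃ C : ℝ, 0 ≤ C ∧ ∀ (ℏ lam σ : ℝ), 0 < ℏ → 0 < lam → lam ≤ 1 → 0 ≤ σ →
    ∀ (χ₁ χ₂ : X n → ℂ), ContDiff ℝ (⊤ : ℕ∞) χ₁ → ContDiff ℝ (⊤ : ℕ∞) χ₂ →
    (∀ α : Fin n → ℕ, ∃ C₁ : ℝ, ∀ x : X n, ‖mderiv1X α χ₁ x‖ ≤ C₁) →
    (∀ α : Fin n → ℕ, ∃ C₁ : ℝ, ∀ x : X n, ‖mderiv1X α χ₂ x‖ ≤ C₁) →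
    (∀ z : X n × X n × X n, z.1 ∈ tsupport χ₁ → z.2.2 ∈ tsupport χ₂ → 0 < gR σ z) →
    ∀ (a c : X n × X n × X n → ℂ) (ρ Cc B : ℝ), IsAmp1 m a → ContDiff ℝ (⊤ : ℕ∞) c → SuppP ρ c → 0 ≤ Cc → 0 ≤ B →
    (∀ z, PB3 lam (n + n + 2 * k) c z Cc) →
    (∀ z : X n × X n × X n, z.1 ∈ tsupport χ₁ → z.2.2 ∈ tsupport χ₂ → z ∈ tsupport c →
      lam ^ 2 ≤ gR σ z ∧
        ((gR σ z)⁻¹ * (σ + n * (ℏ / brX z.2.1) ^ 2)) ^ k * brX z.2.1 ^ m ≤ B * ((1 + ‖z.1 - z.2.2‖ / lam) ^ (n + 1))⁻¹) →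
    ∀ u : X n → ℂ, Continuous u → HasCompactSupport u →
    ∫⁻ x, ‖χ₁ x * ∫ p, ∫ y, (a (x, p, y) * c (x, p, y)) * ph ℏ p (x - y) * (χ₂ y * u y)‖ₑ ^ 2 ≤
      ENNReal.ofReal ((2 * Real.pi * ℏ) ^ n) ^ 2 *
        ENNReal.ofReal (C * (ckNormX NN χ₁ * ckNormX NN χ₂) * (Cc * amp1Norm m NA a * B)) ^ 2 * ∫⁻ y, ‖u y‖ₑ ^ 2 := by
  obtain ⟨C, hC, H⟩ := core n k NN hNN
  set K := n + n + 2 * k with hK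
  refine ⟨C * 2 ^ K, by positivity, ?_⟩
  intro ℏ lam σ hh hl hl1 hσ χ₁ χ₂ h1 h2 hb1 hb2 hg a c ρ Cc B ha hc hcs hCc hB hcP hsc u huc hus
  have hampP : ∀ z, PB3 lam NA a z (amp1Norm m NA a * brX z.2.1 ^ m) := PB3_amp0 ha hl.le hl1 NA
  have hamp0 : 0 ≤ amp1Norm m NA a := by
    have := PBd_nonneg (hampP 0)
    exact nonneg_of_mul_nonneg_left this (Real.rpow_pos_of_pos (brX_pos _) _)
  have hbr : ∀ p : X n, ‖p‖ ≤ ρ → brX p ^ m ≤ Real.sqrt (1 + n * ρ ^ 2) ^ N := by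
    intro p hp
    have h3 := brX_le' (p := p) (r := ρ) one_pos le_rfl (by simpa using hp)
    rw [mul_one] at h3
    exact (rm_le hN (brX_ge_one p)).trans (pow_le_pow_left₀ (brX_pos p).le h3 N)
  have := H ℏ lam σ hh hl hl1 hσ χ₁ χ₂ h1 h2 hb1 hb2 hg (fun z => a z * c z) ρ
    (amp1Norm m NA a * Real.sqrt (1 + n * ρ ^ 2) ^ N * Cc) (2 ^ K * (Cc * amp1Norm m NA a * B)) (ha.1.mul hc)
    (fun x p y hp => by simp [hcs x p y hp]) ?_ (by positivity) ?_ u huc hus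
  · refine this.trans (le_of_eq ?_)
    congr 4
    ring
  · intro z
    by_cases hz : ‖z.2.1‖ ≤ ρ
    · rw [norm_mul]
      have e1 := PBd_val (hampP z)
      have e2 := PBd_val (hcP z)
      have e3 := hbr _ hz
      gcongr
      exact e1.trans (by gcongr)
    · have : c z = 0 := hcs z.1 z.2.1 z.2.2 (not_le.1 hz)
      rw [this, mul_zero, norm_zero]; positivity
  · intro z hz1 hz2 hz3
    have hzc : z ∈ tsupport c := tsupport_mul_subset_right hz3
    obtain ⟨e1, e2⟩ := hsc z hz1 hz2 hzc
    refine ⟨e1, _, PBd_mul (SmA.of ha.1 z) (SmA.of hc z) (PBd_le hNA (hampP z)) (hcP z), ?_⟩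
    calc _ = 2 ^ K * (Cc * amp1Norm m NA a) * (((gR σ z)⁻¹ * (σ + n * (ℏ / brX z.2.1) ^ 2)) ^ k * brX z.2.1 ^ m) := by ring
      _ ≤ 2 ^ K * (Cc * amp1Norm m NA a) * (B * ((1 + ‖z.1 - z.2.2‖ / lam) ^ (n + 1))⁻¹) := by gcongr
      _ = _ := by ring

end

end

section
open MeasureTheory Finset
open scoped ENNReal Topology

noncomputable section

lemma TT_meas {n : ℕ} (ℏ : ℝ) {f : X n × X n × X n → ℂ} (hf : Continuous f) {v : X n → ℂ} (hv : Continuous v) :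
    Measurable (fun x => ∫ p, ∫ y, f (x, p, y) * ph ℏ p (x - y) * v y) := by
  have h1 : StronglyMeasurable (fun q : (X n × X n) × X n => f (q.1.1, q.1.2, q.2) * ph ℏ q.1.2 (q.1.1 - q.2) * v q.2) := by
    apply Continuous.stronglyMeasurable
    exact ((hf.comp (by fun_prop)).mul (ph_comp_cont ℏ (by fun_prop) (by fun_prop))).mul (hv.comp (by fun_prop))
  have h2 : StronglyMeasurable (fun q : X n × X n => ∫ y, f (q.1, q.2, y) * ph ℏ q.2 (q.1 - y) * v y) :=
    h1.integral_prod_right'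
  exact h2.integral_prod_right'.measurable

lemma TT_add {n : ℕ} (ℏ : ℝ) {f g : X n × X n × X n → ℂ} (hf : Continuous f) (hg : Continuous g) {ρ Mf Mg : ℝ}
    (hfs : SuppP ρ f) (hgs : SuppP ρ g) (hfb : ∀ z, ‖f z‖ ≤ Mf) (hgb : ∀ z, ‖g z‖ ≤ Mg)
    {v : X n → ℂ} (hv : Continuous v) (hvi : Integrable v) (x : X n) :
    ∫ p, ∫ y, (f (x, p, y) + g (x, p, y)) * ph ℏ p (x - y) * v y =
      (∫ p, ∫ y, f (x, p, y) * ph ℏ p (x - y) * v y) + ∫ p, ∫ y, g (x, p, y) * ph ℏ p (x - y) * v y := by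
  have i1 : Integrable _ (volume.prod volume) := TB_int ℏ hf hfb hfs hv hvi x x
  have i2 : Integrable _ (volume.prod volume) := TB_int ℏ hg hgb hgs hv hvi x x
  have w1 := integral_prod _ i1
  have w2 := integral_prod _ i2
  have w3 := integral_prod _ (i1.add i2)
  simp only [] at w1 w2 w3
  rw [← w1, ← w2, ← integral_add i1 i2]
  refine Eq.trans ?_ w3.symm
  congr 1; ext p; congr 1; ext y
  simp only [Pi.add_apply]; ring

lemma enn_sq (a b : ℝ≥0∞) : (a + b) ^ 2 ≤ 4 * (a ^ 2 + b ^ 2) := by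
  have h : a + b ≤ 2 * max a b := by
    rw [two_mul]; exact add_le_add (le_max_left _ _) (le_max_right _ _)
  calc (a + b) ^ 2 ≤ (2 * max a b) ^ 2 := by gcongr
    _ = 4 * (max a b) ^ 2 := by rw [mul_pow]; norm_num
    _ ≤ 4 * (a ^ 2 + b ^ 2) := by
      gcongr
      rcases max_choice a b with h | h <;> rw [h]
      · exact le_self_add
      · exact le_add_self

structure IsCut {n : ℕ} (ψ : X n → ℂ) : Prop where
  smooth : ContDiff ℝ (⊤ : ℕ∞) ψ
  supp : tsupport ψ ⊆ Metric.closedBall 0 2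
  one : ∀ x, ‖x‖ ≤ 1 → ψ x = 1
  bd : ∀ x, ‖ψ x‖ ≤ 1

lemma exists_cut (n : ℕ) : ∃ ψ : X n → ℂ, IsCut ψ := by
  let b : ContDiffBump (0 : X n) := ⟨1, 2, by norm_num, by norm_num⟩
  refine ⟨fun x => (b x : ℂ), ?_, ?_, ?_, ?_⟩
  · exact Complex.ofRealCLM.contDiff.comp b.contDiff
  · have : tsupport (fun x => (b x : ℂ)) ⊆ tsupport b := by
      apply closure_mono
      intro x hx
      simpa using hx
    rw [b.tsupport_eq] at this
    exact this
  · intro x hx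
    have := b.one_of_mem_closedBall (x := x) (by simpa [b] using hx)
    simp [this]
  · intro x
    rw [Complex.norm_real, Real.norm_of_nonneg b.nonneg]; exact b.le_one

lemma cut_smooth {n : ℕ} {ψ : X n → ℂ} (hψ : IsCut ψ) (ε : ℝ) :
    ContDiff ℝ (⊤ : ℕ∞) (fun z : X n × X n × X n => ψ (ε • z.2.1)) :=
  hψ.smooth.comp (by fun_prop)

lemma cut_supp {n : ℕ} {ψ : X n → ℂ} (hψ : IsCut ψ) {ε : ℝ} (hε : 0 < ε) :
    SuppP (2 / ε) (fun z : X n × X n × X n => ψ (ε • z.2.1)) := by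
  intro x p y hp
  by_contra h
  have := hψ.supp (subset_tsupport _ h)
  rw [mem_closedBall_zero_iff, norm_smul, Real.norm_of_nonneg hε.le] at this
  rw [div_lt_iff₀ hε] at hp
  linarith

lemma cut_tsupp {n : ℕ} {ψ : X n → ℂ} (hψ : IsCut ψ) (ε : ℝ) (z : X n × X n × X n)
    (hz : z ∈ tsupport (fun z : X n × X n × X n => ψ (ε • z.2.1))) : ‖ε • z.2.1‖ ≤ 2 := by
  have hcl : IsClosed {z : X n × X n × X n | ‖ε • z.2.1‖ ≤ 2} := isClosed_le (by fun_prop) continuous_const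
  refine closure_minimal ?_ hcl hz
  intro w hw
  have := hψ.supp (subset_tsupport _ hw)
  simpa [mem_closedBall_zero_iff] using this

lemma cocut_tsupp {n : ℕ} {ψ : X n → ℂ} (hψ : IsCut ψ) (ε : ℝ) (z : X n × X n × X n)
    (hz : z ∈ tsupport (fun z : X n × X n × X n => 1 + (-1) * ψ (ε • z.2.1))) : 1 ≤ ‖ε • z.2.1‖ := by
  have hcl : IsClosed {z : X n × X n × X n | 1 ≤ ‖ε • z.2.1‖} := isClosed_le continuous_const (by fun_prop)
  refine closure_minimal ?_ hcl hz
  intro w hw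
  by_contra h
  rw [Set.mem_ofPred_eq, not_le] at h
  apply hw
  simp [hψ.one _ h.le]

end

end

section
open MeasureTheory Finset
open scoped ENNReal Topology

noncomputable section

lemma ac_bdd {n : ℕ} {m : ℝ} {a c : X n × X n × X n → ℂ} {ρ Cc : ℝ} (ha : IsAmp1 m a) (hcs : SuppP ρ c)
    (hc : ∀ z, ‖c z‖ ≤ Cc) : ∃ M, ∀ z, ‖a z * c z‖ ≤ M := by
  obtain ⟨N, hN⟩ := exists_nat_ge m
  have hCc : 0 ≤ Cc := (norm_nonneg _).trans (hc 0)
  have hampP : ∀ z, PB3 1 0 a z (amp1Norm m 0 a * brX z.2.1 ^ m) := PB3_amp0 ha zero_le_one le_rfl 0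
  have hamp0 : 0 ≤ amp1Norm m 0 a := by
    have := PBd_nonneg (hampP 0)
    exact nonneg_of_mul_nonneg_left this (Real.rpow_pos_of_pos (brX_pos _) _)
  refine ⟨amp1Norm m 0 a * Real.sqrt (1 + n * ρ ^ 2) ^ N * Cc, fun z => ?_⟩
  by_cases hz : ‖z.2.1‖ ≤ ρ
  · rw [norm_mul]
    have e1 := PBd_val (hampP z)
    have e3 : brX z.2.1 ^ m ≤ Real.sqrt (1 + n * ρ ^ 2) ^ N := by
      have h3 := brX_le' (p := z.2.1) (r := ρ) one_pos le_rfl (by simpa using hz)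
      rw [mul_one] at h3
      exact (rm_le hN (brX_ge_one _)).trans (pow_le_pow_left₀ (brX_pos _).le h3 N)
    have e2 := hc z
    gcongr
    exact e1.trans (by gcongr)
  · have : c z = 0 := hcs z.1 z.2.1 z.2.2 (not_le.1 hz)
    rw [this, mul_zero, norm_zero]; positivity

lemma fin_sc1 {C ck P A B₁ B₂ r Q₁ Q₂ : ℝ} (hC : 0 ≤ C) (hck : 0 ≤ ck) (hA : 0 ≤ A) (h1 : 0 ≤ B₁) (h2 : 0 ≤ B₂)
    (hr : 0 ≤ r) (hq1 : 0 ≤ Q₁) (hq2 : 0 ≤ Q₂) :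
    C * ck * (P * A * (B₁ * r)) ≤ (C * P * B₁ + 2 * (C * Q₁ * B₁ + C * Q₂ * B₂)) * ck * (A * r) := by
  have e : 0 ≤ 2 * (C * Q₁ * B₁ + C * Q₂ * B₂) * ck * (A * r) := by positivity
  have h : (C * P * B₁ + 2 * (C * Q₁ * B₁ + C * Q₂ * B₂)) * ck * (A * r) =
    C * ck * (P * A * (B₁ * r)) + 2 * (C * Q₁ * B₁ + C * Q₂ * B₂) * ck * (A * r) := by ring
  linarith

lemma fin_sc2 {C ck P A B₁ B₂ r Q₁ Q₂ : ℝ} (hC : 0 ≤ C) (hck : 0 ≤ ck) (hA : 0 ≤ A) (h1 : 0 ≤ B₁)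
    (hr : 0 ≤ r) (hP : 0 ≤ P) :
    2 * (C * ck * (Q₂ * A * (B₂ * r)) + C * ck * (Q₁ * A * (B₁ * r))) ≤
      (C * P * B₁ + 2 * (C * Q₁ * B₁ + C * Q₂ * B₂)) * ck * (A * r) := by
  have e : 0 ≤ C * P * B₁ * ck * (A * r) := by positivity
  have h : (C * P * B₁ + 2 * (C * Q₁ * B₁ + C * Q₂ * B₂)) * ck * (A * r) =
    2 * (C * ck * (Q₂ * A * (B₂ * r)) + C * ck * (Q₁ * A * (B₁ * r))) + C * P * B₁ * ck * (A * r) := by ring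
  linarith

lemma fin_sc3 {IL IH S U : ℝ≥0∞} {x₁ x₂ Y : ℝ} (e1 : 0 ≤ x₁) (e2 : 0 ≤ x₂) (hL : IL ≤ S * ENNReal.ofReal x₁ ^ 2 * U)
    (hH : IH ≤ S * ENNReal.ofReal x₂ ^ 2 * U) (e6 : 2 * (x₁ + x₂) ≤ Y) :
    4 * (IL + IH) ≤ S * ENNReal.ofReal Y ^ 2 * U := by
  have hY : 0 ≤ Y := by linarith
  calc 4 * (IL + IH) ≤ 4 * (S * ENNReal.ofReal x₁ ^ 2 * U + S * ENNReal.ofReal x₂ ^ 2 * U) := by gcongr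
      _ = S * (4 * (ENNReal.ofReal x₁ ^ 2 + ENNReal.ofReal x₂ ^ 2)) * U := by ring
      _ ≤ _ := by
        refine mul_le_mul' (mul_le_mul' le_rfl ?_) le_rfl
        have e4 : (4 : ℝ≥0∞) = ENNReal.ofReal 4 := by norm_num
        rw [← ENNReal.ofReal_pow e1, ← ENNReal.ofReal_pow e2, ← ENNReal.ofReal_add (by positivity) (by positivity),
          e4, ← ENNReal.ofReal_mul (by norm_num), ← ENNReal.ofReal_pow hY]
        apply ENNReal.ofReal_le_ofReal
        calc 4 * (x₁ ^ 2 + x₂ ^ 2) ≤ (2 * (x₁ + x₂)) ^ 2 := by nlinarith [mul_nonneg e1 e2]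
          _ ≤ _ := pow_le_pow_left₀ (by positivity) e6 2

theorem reg (n : ℕ) (m : ℝ) (N : ℕ) (hN : m ≤ (N : ℝ)) (NN NA : ℕ) (hNN : n + n ≤ NN)
    (hNA : n + n + 2 * (N + n + 1) ≤ NA) (ψ : X n → ℂ) (hψ : IsCut ψ) :
    ∃ C : ℝ, 0 ≤ C ∧ ∀ (δ ℏ : ℝ), 0 < δ → 0 < ℏ → ℏ ≤ 1 →
    ∀ (χ₁ χ₂ : X n → ℂ), ContDiff ℝ (⊤ : ℕ∞) χ₁ → ContDiff ℝ (⊤ : ℕ∞) χ₂ →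
    (∀ α : Fin n → ℕ, ∃ C₁ : ℝ, ∀ x : X n, ‖mderiv1X α χ₁ x‖ ≤ C₁) →
    (∀ α : Fin n → ℕ, ∃ C₁ : ℝ, ∀ x : X n, ‖mderiv1X α χ₂ x‖ ≤ C₁) →
    (∀ x ∈ tsupport χ₁, ∀ y ∈ tsupport χ₂, δ ≤ dist x y) →
    ∀ (a : X n × X n × X n → ℂ) (ε : ℝ), IsAmp1 m a → 0 < ε → ε ≤ 1 →
    ∀ u : X n → ℂ, Continuous u → HasCompactSupport u →
    ∫⁻ x, ‖χ₁ x * ∫ p, ∫ y, (a (x, p, y) * ψ (ε • p)) * ph ℏ p (x - y) * (χ₂ y * u y)‖ₑ ^ 2 ≤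
      ENNReal.ofReal ((2 * Real.pi * ℏ) ^ n) ^ 2 *
        ENNReal.ofReal (C * (ckNormX NN χ₁ * ckNormX NN χ₂) * (amp1Norm m NA a * (ℏ / δ) ^ N)) ^ 2 * ∫⁻ y, ‖u y‖ₑ ^ 2 := by
  obtain ⟨C, hC, H⟩ := mid n m N hN (N + n + 1) NN NA hNN hNA
  set K := n + n + 2 * (N + n + 1) with hK
  obtain ⟨P, hP, hcut⟩ := PB3_cut 2 K ψ hψ.smooth hψ.supp
  set κ := Real.sqrt (1 + n * 2 ^ 2) with hκ
  have hκ0 : 0 ≤ κ := Real.sqrt_nonneg _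
  set B₁ : ℝ := n ^ (N + n + 1) * 2 ^ (n + 1) with hB₁
  set B₂ : ℝ := (1 + n) ^ (N + n + 1) * 2 ^ (n + 1) * κ ^ N with hB₂
  have hB₁0 : 0 ≤ B₁ := by positivity
  have hB₂0 : 0 ≤ B₂ := by positivity
  set Q₁ : ℝ := 2 ^ K * (1 + P) * P with hQ₁
  set Q₂ : ℝ := 2 ^ K * P * P with hQ₂
  have hQ₁0 : 0 ≤ Q₁ := by positivity
  have hQ₂0 : 0 ≤ Q₂ := by positivity
  refine ⟨C * P * B₁ + 2 * (C * Q₁ * B₁ + C * Q₂ * B₂), by positivity, ?_⟩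
  intro δ ℏ hδ hh hh1 χ₁ χ₂ h1 h2 hb1 hb2 hdist a ε ha hε hε1 u huc hus
  have hck : ∀ {χ : X n → ℂ}, (∀ α : Fin n → ℕ, ∃ C₁ : ℝ, ∀ x : X n, ‖mderiv1X α χ x‖ ≤ C₁) → 0 ≤ ckNormX NN χ :=
    fun h => (norm_nonneg _).trans (ck_bound h (α := 0) (by simp [degX]) 0)
  set ck := ckNormX NN χ₁ * ckNormX NN χ₂ with hckd
  have hck0 : 0 ≤ ck := mul_nonneg (hck hb1) (hck hb2)
  have hamp0 : 0 ≤ amp1Norm m NA a := by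
    have := PBd_nonneg (PB3_amp0 ha zero_le_one le_rfl NA 0)
    exact nonneg_of_mul_nonneg_left this (Real.rpow_pos_of_pos (brX_pos _) _)
  have hw : ∀ z : X n × X n × X n, z.1 ∈ tsupport χ₁ → z.2.2 ∈ tsupport χ₂ → δ ≤ ‖z.1 - z.2.2‖ := by
    intro z hz1 hz2
    rw [← dist_eq_norm]; exact hdist _ hz1 _ hz2
  have hg0 : ∀ z : X n × X n × X n, z.1 ∈ tsupport χ₁ → z.2.2 ∈ tsupport χ₂ → 0 < gR 0 z := by
    intro z hz1 hz2
    have h3 := hw z hz1 hz2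
    have h4 := gR_ge 0 z
    have : 0 < ‖z.1 - z.2.2‖ ^ 2 := by
      have : 0 < ‖z.1 - z.2.2‖ := by linarith
      positivity
    linarith
  -- high frequency estimate
  have high : ∀ lam : ℝ, 0 < lam → lam ≤ 1 → lam ≤ δ → ∀ (c : X n × X n × X n → ℂ) (ρ Cc : ℝ),
      ContDiff ℝ (⊤ : ℕ∞) c → SuppP ρ c → 0 ≤ Cc → (∀ z, PB3 lam K c z Cc) →
      (∀ z ∈ tsupport c, ℏ ≤ lam * brX z.2.1) →
      ∫⁻ x, ‖χ₁ x * ∫ p, ∫ y, (a (x, p, y) * c (x, p, y)) * ph ℏ p (x - y) * (χ₂ y * u y)‖ₑ ^ 2 ≤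
      ENNReal.ofReal ((2 * Real.pi * ℏ) ^ n) ^ 2 *
        ENNReal.ofReal (C * ck * (Cc * amp1Norm m NA a * (B₁ * (ℏ / δ) ^ N))) ^ 2 * ∫⁻ y, ‖u y‖ₑ ^ 2 := by
    intro lam hl hl1 hld c ρ Cc hc hcs hCc hcP hlr
    refine H ℏ lam 0 hh hl hl1 le_rfl χ₁ χ₂ h1 h2 hb1 hb2 hg0 a c ρ Cc _ ha hc hcs hCc (by positivity) hcP ?_ u huc hus
    intro z hz1 hz2 hz3
    have h3 := hw z hz1 hz2
    have h4 : ‖z.1 - z.2.2‖ ^ 2 ≤ gR 0 z := by simpa using gR_ge 0 z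
    refine ⟨?_, ?_⟩
    · refine le_trans ?_ h4
      exact pow_le_pow_left₀ hl.le (hld.trans h3) 2
    · exact high_scal n hN (brX_ge_one z.2.1) hl hld h3 hh (hlr z hz3) h4
  have hεs := cut_supp hψ hε
  have hεsm := cut_smooth hψ ε
  rcases le_or_gt ℏ δ with hc | hc
  · -- only high frequencies are needed
    have := high (min δ 1) (lt_min hδ one_pos) (min_le_right _ _) (min_le_left _ _)
      (fun z => ψ (ε • z.2.1)) (2 / ε) P hεsm hεs hP (fun z => hcut _ ε hε hε1 z) (fun z _ => by
        have h3 : ℏ ≤ min δ 1 := le_min hc hh1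
        have h4 := brX_ge_one z.2.1
        have h5 : 0 ≤ min δ 1 := by positivity
        nlinarith)
    refine this.trans ?_
    refine mul_le_mul' (mul_le_mul' le_rfl ?_) le_rfl
    refine pow_le_pow_left' ?_ 2
    apply ENNReal.ofReal_le_ofReal
    exact fin_sc1 hC hck0 hamp0 hB₁0 hB₂0 (by positivity) hQ₁0 hQ₂0
  · set η := δ / ℏ with hη
    have hη0 : 0 < η := by positivity
    have hη1 : η ≤ 1 := by rw [hη, div_le_one hh]; exact hc.le
    have hηsm := cut_smooth hψ η
    set cL : X n × X n × X n → ℂ := fun z => ψ (η • z.2.1) * ψ (ε • z.2.1) with hcL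
    set cH : X n × X n × X n → ℂ := fun z => (1 + (-1) * ψ (η • z.2.1)) * ψ (ε • z.2.1) with hcH
    have hcosm : ContDiff ℝ (⊤ : ℕ∞) (fun z : X n × X n × X n => 1 + (-1) * ψ (η • z.2.1)) :=
      contDiff_const.add (contDiff_const.mul hηsm)
    have cLsm : ContDiff ℝ (⊤ : ℕ∞) cL := hηsm.mul hεsm
    have cHsm : ContDiff ℝ (⊤ : ℕ∞) cH := hcosm.mul hεsm
    have cLs : SuppP (2 / ε) cL := fun x p y hp => by
      have := hεs x p y hp
      simp only [hcL] at this ⊢; rw [this, mul_zero]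
    have cHs : SuppP (2 / ε) cH := fun x p y hp => by
      have := hεs x p y hp
      simp only [hcH] at this ⊢; rw [this, mul_zero]
    have cLP : ∀ lam z, PB3 lam K cL z Q₂ := fun lam z =>
      PBd_mul (SmA.of hηsm z) (SmA.of hεsm z) (hcut lam η hη0 hη1 z) (hcut lam ε hε hε1 z)
    have cHP : ∀ lam z, PB3 lam K cH z Q₁ := fun lam z => by
      refine PBd_mul (SmA.of hcosm z) (SmA.of hεsm z) ?_ (hcut lam ε hε hε1 z)
      have e1 := PBd_cmul (SmA.of hηsm z) (-1) (hcut lam η hη0 hη1 z)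
      have e2 := PBd_add (SmA.const 1 z) ((SmA.of hηsm z).cmul (-1)) (PBd_const K 1 z (M := 1) (by simp)) e1
      refine PBd_mono e2 (le_of_eq (by simp))
    have hl1 : δ ≤ 1 := hc.le.trans hh1
    have eH := high δ hδ hl1 le_rfl cH (2 / ε) Q₁ cHsm cHs hQ₁0 (cHP δ) (fun z hz => by
      have h3 := cocut_tsupp hψ η z (tsupport_mul_subset_left hz)
      rw [norm_smul, Real.norm_of_nonneg hη0.le, hη, div_mul_eq_mul_div, le_div_iff₀ hh, one_mul] at h3
      exact h3.trans (mul_le_mul_of_nonneg_left (norm_le_brX _) hδ.le))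
    have eL := H ℏ ℏ (ℏ ^ 2) hh hh hh1 (by positivity) χ₁ χ₂ h1 h2 hb1 hb2
      (fun z _ _ => by
        have := gR_ge (ℏ ^ 2) z
        have h3 : 0 < ℏ ^ 2 := by positivity
        have h4 : 0 ≤ ‖z.1 - z.2.2‖ ^ 2 := by positivity
        linarith) a cL (2 / ε) Q₂ (B₂ * (ℏ / δ) ^ N) ha cLsm cLs hQ₂0 (by positivity) (cLP ℏ)
      (fun z hz1 hz2 hz3 => by
        have h3 := gR_ge (ℏ ^ 2) z
        have h4 : 0 ≤ ‖z.1 - z.2.2‖ ^ 2 := by positivity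
        refine ⟨by linarith, ?_⟩
        have h5 := cut_tsupp hψ η z (tsupport_mul_subset_left hz3)
        have h6 := brX_le' hη0 hη1 h5
        refine low_scal n hN (brX_ge_one z.2.1) hδ (norm_nonneg _) hh ?_ h3
        rw [hη, ← mul_div_assoc, div_le_iff₀ hh] at h6
        rw [← mul_div_assoc, le_div_iff₀ hδ]
        exact h6) u huc hus
    have hvc : Continuous fun y => χ₂ y * u y := h2.continuous.mul huc
    have hv := hvc.integrable_of_hasCompactSupport (μ := volume) hus.mul_left
    obtain ⟨ML, hML⟩ := ac_bdd ha cLs (fun z => PBd_val (cLP 1 z))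
    obtain ⟨MH, hMH⟩ := ac_bdd ha cHs (fun z => PBd_val (cHP 1 z))
    have split : ∀ x, ∫ p, ∫ y, (a (x, p, y) * ψ (ε • p)) * ph ℏ p (x - y) * (χ₂ y * u y) =
        (∫ p, ∫ y, (a (x, p, y) * cL (x, p, y)) * ph ℏ p (x - y) * (χ₂ y * u y)) +
        ∫ p, ∫ y, (a (x, p, y) * cH (x, p, y)) * ph ℏ p (x - y) * (χ₂ y * u y) := by
      intro x
      rw [← TT_add ℏ (f := fun z => a z * cL z) (g := fun z => a z * cH z) (ha.1.continuous.mul cLsm.continuous)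
        (ha.1.continuous.mul cHsm.continuous) (ρ := 2 / ε)
        (fun x p y hp => by simp [cLs x p y hp]) (fun x p y hp => by simp [cHs x p y hp]) hML hMH hvc hv x]
      congr 1; ext p; congr 1; ext y
      simp only [hcL, hcH]; ring
    have mL : Measurable (fun x => ‖χ₁ x * ∫ p, ∫ y, (a (x, p, y) * cL (x, p, y)) * ph ℏ p (x - y) * (χ₂ y * u y)‖ₑ ^ 2) :=
      ((h1.continuous.measurable.mul (TT_meas ℏ (ha.1.continuous.mul cLsm.continuous) hvc)).enorm).pow_const 2
    set IL := ∫⁻ x, ‖χ₁ x * ∫ p, ∫ y, (a (x, p, y) * cL (x, p, y)) * ph ℏ p (x - y) * (χ₂ y * u y)‖ₑ ^ 2 with hIL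
    set IH := ∫⁻ x, ‖χ₁ x * ∫ p, ∫ y, (a (x, p, y) * cH (x, p, y)) * ph ℏ p (x - y) * (χ₂ y * u y)‖ₑ ^ 2 with hIH
    have tot : ∫⁻ x, ‖χ₁ x * ∫ p, ∫ y, (a (x, p, y) * ψ (ε • p)) * ph ℏ p (x - y) * (χ₂ y * u y)‖ₑ ^ 2 ≤ 4 * (IL + IH) := by
      rw [hIL, hIH, ← lintegral_add_left mL, ← lintegral_const_mul' _ _ (by norm_num)]
      apply lintegral_mono
      intro x
      simp only [split x, mul_add]
      refine le_trans ?_ ((enn_sq _ _).trans (le_of_eq (mul_add _ _ _)))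
      gcongr
      exact enorm_add_le _ _
    refine tot.trans ?_
    exact fin_sc3 (by positivity) (by positivity) eL eH (fin_sc2 hC hck0 hamp0 hB₁0 (by positivity) hP)

end

end

section
open MeasureTheory Finset Filter
open scoped ENNReal Topology

noncomputable section

lemma reg_ptw {n : ℕ} {ψ : X n → ℂ} (hψ : IsCut ψ) (ℏ : ℝ) {a : X n × X n × X n → ℂ} (v : X n → ℂ) (c : ℂ) (x : X n) :
    ‖c * ∫ p, ∫ y, a (x, p, y) * ph ℏ p (x - y) * v y‖ₑ ^ 2 ≤
      liminf (fun j : ℕ => ‖c * ∫ p, ∫ y, (a (x, p, y) * ψ ((1 / ((j : ℝ) + 1)) • p)) * ph ℏ p (x - y) * v y‖ₑ ^ 2) atTop := by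
  by_cases hi : Integrable (fun p => ∫ y, a (x, p, y) * ph ℏ p (x - y) * v y)
  · have key : Tendsto (fun j : ℕ => ∫ p, ∫ y, (a (x, p, y) * ψ ((1 / ((j : ℝ) + 1)) • p)) * ph ℏ p (x - y) * v y) atTop
        (𝓝 (∫ p, ∫ y, a (x, p, y) * ph ℏ p (x - y) * v y)) := by
      have e : ∀ j : ℕ, ∀ p, ∫ y, (a (x, p, y) * ψ ((1 / ((j : ℝ) + 1)) • p)) * ph ℏ p (x - y) * v y =
          ψ ((1 / ((j : ℝ) + 1)) • p) * ∫ y, a (x, p, y) * ph ℏ p (x - y) * v y := by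
        intro j p
        rw [← integral_const_mul]
        congr 1; ext y; ring
      simp only [e]
      refine tendsto_integral_of_dominated_convergence (fun p => ‖∫ y, a (x, p, y) * ph ℏ p (x - y) * v y‖) ?_ hi.norm ?_ ?_
      · intro j
        refine AEStronglyMeasurable.mul ?_ hi.aestronglyMeasurable
        exact (hψ.smooth.continuous.comp (by fun_prop)).aestronglyMeasurable
      · intro j
        filter_upwards with p
        rw [norm_mul]
        exact mul_le_of_le_one_left (norm_nonneg _) (hψ.bd _)
      · filter_upwards with p
        have h1 : Tendsto (fun j : ℕ => (1 / ((j : ℝ) + 1)) • p) atTop (𝓝 ((0 : ℝ) • p)) :=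
          tendsto_one_div_add_atTop_nhds_zero_nat.smul_const p
        have h2 := ((hψ.smooth.continuous.tendsto _).comp h1)
        rw [zero_smul, hψ.one 0 (by simp)] at h2
        simpa using h2.mul_const (∫ y, a (x, p, y) * ph ℏ p (x - y) * v y)
    have k2 : Tendsto (fun j : ℕ => ‖c * ∫ p, ∫ y, (a (x, p, y) * ψ ((1 / ((j : ℝ) + 1)) • p)) * ph ℏ p (x - y) * v y‖ₑ ^ 2) atTop
        (𝓝 (‖c * ∫ p, ∫ y, a (x, p, y) * ph ℏ p (x - y) * v y‖ₑ ^ 2)) :=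
      ((ENNReal.continuous_pow 2).tendsto _).comp ((key.const_mul c).enorm)
    exact k2.liminf_eq.ge
  · rw [integral_undef hi]; simp

lemma reg_lim {n : ℕ} {ψ : X n → ℂ} (hψ : IsCut ψ) (ℏ : ℝ) {a : X n × X n × X n → ℂ} (ha : Continuous a) {v χ : X n → ℂ}
    (hv : Continuous v) (hχ : Continuous χ) (M : ℝ≥0∞)
    (H : ∀ ε : ℝ, 0 < ε → ε ≤ 1 →
      ∫⁻ x, ‖χ x * ∫ p, ∫ y, (a (x, p, y) * ψ (ε • p)) * ph ℏ p (x - y) * v y‖ₑ ^ 2 ≤ M) :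
    ∫⁻ x, ‖χ x * ∫ p, ∫ y, a (x, p, y) * ph ℏ p (x - y) * v y‖ₑ ^ 2 ≤ M := by
  refine (lintegral_mono (fun x => reg_ptw hψ ℏ v (χ x) x)).trans ?_
  refine (lintegral_liminf_le ?_).trans ?_
  · intro j
    have hc : Continuous fun z : X n × X n × X n => a z * ψ ((1 / ((j : ℝ) + 1)) • z.2.1) :=
      ha.mul (hψ.smooth.continuous.comp (by fun_prop))
    exact ((hχ.measurable.mul (TT_meas ℏ hc hv)).enorm).pow_const 2
  · refine liminf_le_of_le (by isBoundedDefault) ?_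
    intro b hb
    obtain ⟨j, hj⟩ := hb.exists
    refine hj.trans (H _ (by positivity) ?_)
    rw [div_le_one (by positivity)]
    have : (0 : ℝ) ≤ j := by positivity
    linarith

lemma l2_le {n : ℕ} {f u : X n → ℂ} {K : ℝ} (hf : Measurable f) (hK : 0 ≤ K) (hu : Continuous u) (hus : HasCompactSupport u)
    (H : ∫⁻ x, ‖f x‖ₑ ^ 2 ≤ ENNReal.ofReal K ^ 2 * ∫⁻ x, ‖u x‖ₑ ^ 2) : l2normX f ≤ K * l2normX u := by
  have conv : ∀ g : X n → ℂ, Measurable g → ∫ x, ‖g x‖ ^ 2 = (∫⁻ x, ‖g x‖ₑ ^ 2).toReal := by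
    intro g hg
    rw [integral_eq_lintegral_of_nonneg_ae (by filter_upwards with x; positivity) (hg.norm.pow_const 2).aestronglyMeasurable]
    congr 1
    apply lintegral_congr
    intro x
    rw [ENNReal.ofReal_pow (norm_nonneg _), ofReal_norm]
  have hui : Integrable (fun x => ‖u x‖ ^ 2) := by
    refine Continuous.integrable_of_hasCompactSupport (by fun_prop) ?_
    have := hus.norm.mul_left (f := fun x => ‖u x‖)
    simp only [sq]; exact this
  have hfin : ∫⁻ x, ‖u x‖ₑ ^ 2 ≠ ⊤ := by
    have := hui.2
    rw [hasFiniteIntegral_iff_enorm] at this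
    simpa using this.ne
  have e : ∫ x, ‖f x‖ ^ 2 ≤ K ^ 2 * ∫ x, ‖u x‖ ^ 2 := by
    rw [conv f hf, conv u hu.measurable]
    have := ENNReal.toReal_mono (ENNReal.mul_ne_top (by simp) hfin) H
    rwa [ENNReal.toReal_mul, ENNReal.toReal_pow, ENNReal.toReal_ofReal hK] at this
  unfold l2normX
  have p0 : 0 ≤ ∫ x, ‖f x‖ ^ 2 := integral_nonneg fun x => by positivity
  refine (Real.rpow_le_rpow p0 e (by norm_num)).trans (le_of_eq ?_)
  rw [Real.mul_rpow (by positivity) (integral_nonneg fun x => by positivity), ← Real.sqrt_eq_rpow, Real.sqrt_sq hK]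

lemma op_eq {n : ℕ} (ℏ : ℝ) (a : X n × X n × X n → ℂ) (v : X n → ℂ) (x : X n) :
    OpAmpX ℏ a v x = (((2 * Real.pi * ℏ) ^ n : ℝ)⁻¹ : ℝ) • ∫ p, ∫ y, a (x, p, y) * ph ℏ p (x - y) * v y := rfl

lemma ck_nonneg {n : ℕ} {NN : ℕ} {χ : X n → ℂ} (h : ∀ α : Fin n → ℕ, ∃ C₁ : ℝ, ∀ x : X n, ‖mderiv1X α χ x‖ ≤ C₁) :
    0 ≤ ckNormX NN χ := (norm_nonneg _).trans (ck_bound h (α := 0) (by simp [degX]) 0)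

theorem final9 (n : ℕ) (m : ℝ) (N : ℕ) (hN : m ≤ (N : ℝ)) :
    ∃ C > (0 : ℝ), ∃ N' : ℕ, ∀ δ > (0 : ℝ), ∀ ℏ ∈ Set.Ioc (0 : ℝ) 1,
      ∀ a : X n × X n × X n → ℂ, IsAmp1 m a → ∀ u : X n → ℂ, IsCcX u →
      ∀ χ₁ χ₂ : X n → ℂ, ContDiff ℝ (⊤ : ℕ∞) χ₁ → ContDiff ℝ (⊤ : ℕ∞) χ₂ →
        (∀ α : Fin n → ℕ, ∃ C₁ : ℝ, ∀ x : X n, ‖mderiv1X α χ₁ x‖ ≤ C₁) →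
        (∀ α : Fin n → ℕ, ∃ C₂ : ℝ, ∀ x : X n, ‖mderiv1X α χ₂ x‖ ≤ C₂) →
        (∀ x ∈ tsupport χ₁, ∀ y ∈ tsupport χ₂, δ ≤ dist x y) →
        l2normX (fun q => χ₁ q * OpAmpX ℏ a (fun q' => χ₂ q' * u q') q)
          ≤ C * ℏ ^ N * (δ ^ N)⁻¹ * ckNormX N' χ₁ * ckNormX N' χ₂ *
            amp1Norm m (N + N') a * l2normX u := by
  obtain ⟨ψ, hψ⟩ := exists_cut n
  obtain ⟨C, hC, H⟩ := reg n m N hN (n + n + 2 * (N + n + 1)) (N + (n + n + 2 * (N + n + 1))) (by omega) (by omega) ψ hψ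
  refine ⟨C + 1, by linarith, n + n + 2 * (N + n + 1), ?_⟩
  generalize hN' : n + n + 2 * (N + n + 1) = N' at H ⊢
  intro δ hδ ℏ hh a ha u hu χ₁ χ₂ h1 h2 hb1 hb2 hd
  have hh0 := hh.1
  have hvc : Continuous fun y => χ₂ y * u y := h2.continuous.mul hu.1.continuous
  have hk1 := ck_nonneg (NN := N') hb1
  have hk2 := ck_nonneg (NN := N') hb2
  have hamp0 : 0 ≤ amp1Norm m (N + N') a := by
    have := PBd_nonneg (PB3_amp0 ha zero_le_one le_rfl (N + N') 0)
    exact nonneg_of_mul_nonneg_left this (Real.rpow_pos_of_pos (brX_pos _) _)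
  have H2 := reg_lim hψ ℏ ha.1.continuous hvc h1.continuous _
    (fun ε he he1 => H δ ℏ hδ hh.1 hh.2 χ₁ χ₂ h1 h2 hb1 hb2 hd a ε ha he he1 u hu.1.continuous hu.2)
  set S : ℝ := (2 * Real.pi * ℏ) ^ n with hS
  have hS0 : 0 < S := by positivity
  set K := C * (ckNormX N' χ₁ * ckNormX N' χ₂) * (amp1Norm m (N + N') a * (ℏ / δ) ^ N) with hKd
  have hK : 0 ≤ K := by positivity
  have hm := TT_meas ℏ ha.1.continuous hvc
  have l0 : 0 ≤ l2normX u := Real.rpow_nonneg (integral_nonneg fun x => by positivity) _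
  have main : l2normX (fun q => χ₁ q * OpAmpX ℏ a (fun q' => χ₂ q' * u q') q) ≤ K * l2normX u := by
    refine l2_le ?_ hK hu.1.continuous hu.2 ?_
    · simp only [op_eq]
      exact h1.continuous.measurable.mul (hm.const_smul (((2 * Real.pi * ℏ) ^ n)⁻¹ : ℝ))
    · have e : ∀ x, ‖χ₁ x * OpAmpX ℏ a (fun q' => χ₂ q' * u q') x‖ₑ ^ 2 = ENNReal.ofReal S⁻¹ ^ 2 *
          ‖χ₁ x * ∫ p, ∫ y, a (x, p, y) * ph ℏ p (x - y) * (χ₂ y * u y)‖ₑ ^ 2 := by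
        intro x
        rw [op_eq, mul_smul_comm, enorm_smul, mul_pow, ← hS, Real.enorm_of_nonneg (by positivity)]
      simp only [e]
      rw [lintegral_const_mul' _ _ (by simp)]
      refine (mul_le_mul' le_rfl H2).trans (le_of_eq ?_)
      rw [← mul_assoc, ← mul_assoc, ← mul_pow, ← ENNReal.ofReal_mul (by positivity), inv_mul_cancel₀ hS0.ne']
      simp
  refine main.trans ?_
  refine mul_le_mul_of_nonneg_right ?_ l0
  have e : 0 ≤ (ckNormX N' χ₁ * ckNormX N' χ₂) * (amp1Norm m (N + N') a * (ℏ / δ) ^ N) := by positivity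
  have e2 : (C + 1) * ℏ ^ N * (δ ^ N)⁻¹ * ckNormX N' χ₁ * ckNormX N' χ₂ * amp1Norm m (N + N') a =
    K + (ckNormX N' χ₁ * ckNormX N' χ₂) * (amp1Norm m (N + N') a * (ℏ / δ) ^ N) := by
    rw [hKd, div_pow]; ring
  linarith

end

end

/-- disjoint-support estimate `‖χ₁ Op_ℏ(a) χ₂‖ = O(ℏ^N δ^{-N})`. -/
theorem statement9 (n : ℕ) (m : ℝ) (N : ℕ) (hN : m ≤ (N : ℝ)) :
    ∃ C > (0 : ℝ), ∃ N' : ℕ, ∀ δ > (0 : ℝ), ∀ ℏ ∈ Set.Ioc (0 : ℝ) 1,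
      ∀ a : X n × X n × X n → ℂ, IsAmp1 m a → ∀ u : X n → ℂ, IsCcX u →
      ∀ χ₁ χ₂ : X n → ℂ, ContDiff ℝ (⊤ : ℕ∞) χ₁ → ContDiff ℝ (⊤ : ℕ∞) χ₂ →
        (∀ α : Fin n → ℕ, ∃ C₁ : ℝ, ∀ x : X n, ‖mderiv1X α χ₁ x‖ ≤ C₁) →
        (∀ α : Fin n → ℕ, ∃ C₂ : ℝ, ∀ x : X n, ‖mderiv1X α χ₂ x‖ ≤ C₂) →
        (∀ x ∈ tsupport χ₁, ∀ y ∈ tsupport χ₂, δ ≤ dist x y) →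
        l2normX (fun q => χ₁ q * OpAmpX ℏ a (fun q' => χ₂ q' * u q') q)
          ≤ C * ℏ ^ N * (δ ^ N)⁻¹ * ckNormX N' χ₁ * ckNormX N' χ₂ *
            amp1Norm m (N + N') a * l2normX u := by
  exact final9 n m N hN

end
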